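/- arXiv:1004.5239 — 8 statements merged into one kernel-verified Lean document; each statement's English description precedes it below -/
import Mathlib

section
/- There exists a uniquely divisible group G with the following property: for every finite word w in the alphabet {X,A}, if for all but finitely many primes p the equation P_w(x^2,y^2) = 0 has a solution (x_p, y_p) with both coordinates nonzero elements of Z/pZ, then there exist elements A, B, B' in G such that the word equation w(X,A) = B has no solution X in G, and the word equation w(X,A) = B' has at least two distinct solutions X in G. -/
/-- A group is *uniquely divisible* if every element has a unique `m`-th root
for each positive integer `m`. -/
def UniquelyDivisible (G : Type*) [Group G] : Prop :=
  ∀ (b : G) (m : ℕ), 0 < m → ∃! x : G, x ^ m = b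

/-- Evaluation of a word in the alphabet `{X, A}` (encoded as a `List Bool`,
with `true` standing for the letter `X` and `false` for the letter `A`)
at elements `x` (for `X`) and `a` (for `A`) of a monoid. -/
def wordEval {M : Type*} [Monoid M] (w : List Bool) (x a : M) : M :=
  (w.map fun c => if c then x else a).prod

/-- The word polynomial `P_w ∈ ℤ[x,y]`: for
`w = A^{a_0} X A^{a_1} X ⋯ A^{a_{n-1}} X A^{a_n}` it is
`∑_{k=0}^{n-1} x^k y^{a_0 + ⋯ + a_k}`, where `x = X 0`, `y = X 1`. -/
noncomputable def wordPoly : List Bool → MvPolynomial (Fin 2) ℤ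
  | [] => 0
  | true :: w => MvPolynomial.X 0 * wordPoly w + 1
  | false :: w => MvPolynomial.X 1 * wordPoly w

/-- Affine maps of `ZMod p` whose linear part is a nonzero square. -/
@[ext] structure Aff (p : ℕ) where
  s : (powMonoidHom 2 : (ZMod p)ˣ →* (ZMod p)ˣ).range
  t : ZMod p

namespace Aff
variable {p : ℕ}

/-- The multiplier as an element of `ZMod p`. -/
def c (g : Aff p) : ZMod p := ((g.s : (ZMod p)ˣ) : ZMod p)

instance : Mul (Aff p) := ⟨fun g h => ⟨g.s * h.s, g.t + g.c * h.t⟩⟩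
instance : One (Aff p) := ⟨⟨1, 0⟩⟩
instance : Inv (Aff p) := ⟨fun g => ⟨g.s⁻¹, - ((((g.s : (ZMod p)ˣ)⁻¹ : (ZMod p)ˣ) : ZMod p) * g.t)⟩⟩

@[simp] theorem mul_s (g h : Aff p) : (g * h).s = g.s * h.s := rfl
@[simp] theorem mul_t (g h : Aff p) : (g * h).t = g.t + g.c * h.t := rfl
@[simp] theorem one_s : (1 : Aff p).s = 1 := rfl
@[simp] theorem one_t : (1 : Aff p).t = 0 := rfl
@[simp] theorem mul_c (g h : Aff p) : (g * h).c = g.c * h.c := by simp [c]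
@[simp] theorem one_c : (1 : Aff p).c = 1 := by simp [c]
@[simp] theorem inv_s (g : Aff p) : (g⁻¹).s = g.s⁻¹ := rfl
@[simp] theorem inv_t (g : Aff p) :
    (g⁻¹).t = - ((((g.s : (ZMod p)ˣ)⁻¹ : (ZMod p)ˣ) : ZMod p) * g.t) := rfl
@[simp] theorem inv_c (g : Aff p) :
    (g⁻¹).c = (((g.s : (ZMod p)ˣ)⁻¹ : (ZMod p)ˣ) : ZMod p) := by simp [c]

instance : Group (Aff p) where
  mul_assoc := by intro a b d; ext1 <;> simp [mul_assoc]; ring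
  one_mul := by intro a; ext1 <;> simp
  mul_one := by intro a; ext1 <;> simp
  inv_mul_cancel := by intro a; ext1 <;> simp

instance [NeZero p] : Finite (Aff p) :=
  Finite.of_injective (fun g : Aff p => (g.s, g.t)) (by
    intro g h e; simp only [Prod.mk.injEq] at e; exact Aff.ext e.1 e.2)

theorem pow_s (g : Aff p) (n : ℕ) : (g ^ n).s = g.s ^ n := by
  induction n with
  | zero => simp
  | succ n ih => simp [pow_succ, ih]

theorem pow_t (g : Aff p) (hg : g.s = 1) (n : ℕ) : (g ^ n).t = n * g.t := by
  induction n with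
  | zero => simp
  | succ n ih =>
    have : (g ^ n).c = 1 := by simp [c, pow_s, hg]
    rw [pow_succ, mul_t, ih, this]; push_cast; ring

theorem pow_exp (hp : p.Prime) (k : ℕ) (hk : 2 * k = p - 1) (g : Aff p) :
    g ^ (k * p) = 1 := by
  have := Fact.mk hp
  have h1 : (g ^ k).s = 1 := by
    rw [pow_s]
    obtain ⟨⟨_, u, rfl⟩, t⟩ := g
    ext1
    simp only [powMonoidHom_apply, SubmonoidClass.mk_pow, OneMemClass.coe_one]
    rw [← pow_mul, hk]
    exact ZMod.units_pow_card_sub_one_eq_one p u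
  rw [pow_mul]
  ext1
  · rw [pow_s, h1]; simp
  · rw [pow_t _ h1]; simp

theorem pow_bij {G : Type*} [Group G] {N m : ℕ} (hN : ∀ g : G, g ^ N = 1) (h : Nat.Coprime m N) :
    Function.Bijective (fun g : G => g ^ m) := by
  have key : ∀ g : G, g ^ (m * Nat.gcdA m N : ℤ) = g := by
    intro g
    have e := Nat.gcd_eq_gcd_ab m N
    rw [h] at e
    have : (m * Nat.gcdA m N : ℤ) = 1 - N * Nat.gcdB m N := by push_cast at e; linarith
    rw [this, zpow_sub, zpow_mul]; simp [hN]
  constructor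
  · intro a b hab
    simp only at hab
    rw [← key a, ← key b, zpow_mul, zpow_mul, zpow_natCast, zpow_natCast, hab]
  · intro b
    refine ⟨b ^ Nat.gcdA m N, ?_⟩
    simp only
    rw [← zpow_natCast, ← zpow_mul, mul_comm, key]

theorem wordEval_t (w : List Bool) (g a : Aff p) (ha : a.t = 0) :
    (wordEval w g a).t = g.t * MvPolynomial.aeval ![g.c, a.c] (wordPoly w) := by
  induction w with
  | nil => simp [wordEval, wordPoly]
  | cons b w ih =>
    have e : wordEval (b :: w) g a = (if b then g else a) * wordEval w g a := by
      simp [wordEval]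
    rw [e, mul_t, ih]
    cases b
    · simp [wordPoly, ha]; ring
    · simp [wordPoly]; ring

theorem wordEval_s (w : List Bool) (g h a : Aff p) (hs : g.s = h.s) :
    (wordEval w g a).s = (wordEval w h a).s := by
  induction w with
  | nil => rfl
  | cons b w ih =>
    have e : ∀ g : Aff p, wordEval (b :: w) g a = (if b then g else a) * wordEval w g a := by
      simp [wordEval]
    rw [e, e, mul_s, mul_s, ih]
    cases b <;> simp [hs]

theorem local_stmt (hp : p.Prime) (w : List Bool)
    (h : ∃ x y : ZMod p, x ≠ 0 ∧ y ≠ 0 ∧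
            MvPolynomial.aeval ![x ^ 2, y ^ 2] (wordPoly w) = 0) :
    ∃ A B X Y : Aff p, (∀ Z, wordEval w Z A ≠ B) ∧ X ≠ Y ∧ wordEval w X A = wordEval w Y A := by
  have := Fact.mk hp
  obtain ⟨x, y, hx, hy, h⟩ := h
  let q : (ZMod p)ˣ → (powMonoidHom 2 : (ZMod p)ˣ →* (ZMod p)ˣ).range := fun u => ⟨u ^ 2, u, rfl⟩
  let A : Aff p := ⟨q (Units.mk0 y hy), 0⟩
  let X : Aff p := ⟨q (Units.mk0 x hx), 0⟩
  let Y : Aff p := ⟨q (Units.mk0 x hx), 1⟩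
  have hXY : X ≠ Y := by
    intro e
    have := congrArg Aff.t e
    simp [X, Y] at this
  have hA : A.c = y ^ 2 := by simp [A, c, q]
  have hX : X.c = x ^ 2 := by simp [X, c, q]
  have hY : Y.c = x ^ 2 := by simp [Y, c, q]
  have e : wordEval w X A = wordEval w Y A := by
    ext1
    · exact wordEval_s w X Y A rfl
    · rw [wordEval_t w X A rfl, wordEval_t w Y A rfl, hA, hX, hY, h]; simp
  have hns : ¬ Function.Surjective (fun Z : Aff p => wordEval w Z A) := by
    intro hs
    exact hXY ((Finite.injective_iff_surjective.mpr hs) e)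
  simp only [Function.Surjective, not_forall, not_exists] at hns
  obtain ⟨B, hB⟩ := hns
  exact ⟨A, B, X, Y, hB, hXY, e⟩

end Aff

theorem wordEval_map {M N : Type*} [Monoid M] [Monoid N] (f : M →* N) (w : List Bool) (x a : M) :
    f (wordEval w x a) = wordEval w (f x) (f a) := by
  simp only [wordEval, map_list_prod, List.map_map]
  congr 2
  funext b
  cases b <;> simp

/-- Families that are eventually trivial. -/
def evTriv (K : ℕ → Type) [∀ i, Group (K i)] : Subgroup (∀ i, K i) where
  carrier := {f | ∃ n, ∀ i, n ≤ i → f i = 1}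
  one_mem' := ⟨0, fun _ _ => rfl⟩
  mul_mem' := by
    rintro a b ⟨n, hn⟩ ⟨m, hm⟩
    refine ⟨max n m, fun i hi => ?_⟩
    simp [hn i (le_trans (le_max_left _ _) hi), hm i (le_trans (le_max_right _ _) hi)]
  inv_mem' := by
    rintro a ⟨n, hn⟩
    exact ⟨n, fun i hi => by simp [hn i hi]⟩

instance evTriv_normal (K : ℕ → Type) [∀ i, Group (K i)] : (evTriv K).Normal where
  conj_mem := by
    rintro a ⟨n, hn⟩ g
    exact ⟨n, fun i hi => by simp [hn i hi]⟩

theorem evTriv_eq (K : ℕ → Type) [∀ i, Group (K i)] (f g : ∀ i, K i) :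
    ((f : (∀ i, K i) ⧸ evTriv K) = g) ↔ ∃ n, ∀ i, n ≤ i → f i = g i := by
  rw [QuotientGroup.eq]
  constructor
  · rintro ⟨n, hn⟩
    exact ⟨n, fun i hi => inv_mul_eq_one.mp (hn i hi)⟩
  · rintro ⟨n, hn⟩
    exact ⟨n, fun i hi => inv_mul_eq_one.mpr (hn i hi)⟩

theorem exists_prime_seq (i : ℕ) : ∃ p k : ℕ, p.Prime ∧ i < p ∧ 2 * k = p - 1 ∧
    ∀ m, 0 < m → m ≤ i → Nat.Coprime m (k * p) := by
  have hpos : 0 < i.factorial := Nat.factorial_pos i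
  have : NeZero (4 * i.factorial) := ⟨by omega⟩
  obtain ⟨p, hgt, hp, hmod⟩ := Nat.forall_exists_prime_gt_and_eq_mod
    (q := 4 * i.factorial) (a := -1) (isUnit_one.neg) (max i 2)
  have hd : (4 * i.factorial) ∣ p + 1 := by
    rw [← ZMod.natCast_eq_zero_iff]; push_cast at hmod ⊢; rw [hmod]; ring
  have hip : i < p := lt_of_le_of_lt (le_max_left _ _) hgt
  obtain ⟨d, hd⟩ := hd
  have hd0 : d ≠ 0 := by rintro rfl; omega
  have hfd : 0 < i.factorial * d := Nat.mul_pos hpos (Nat.pos_of_ne_zero hd0)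
  refine ⟨p, 2 * (i.factorial * d) - 1, hp, hip, ?_, ?_⟩
  · have : 4 * i.factorial * d = 4 * (i.factorial * d) := by ring
    omega
  · intro m hm hmi
    apply Nat.Coprime.mul_right
    · have hmd : m ∣ 2 * (i.factorial * d) :=
        (((Nat.dvd_factorial hm hmi).mul_right d).mul_left 2)
      have h1 : Nat.Coprime (2 * (i.factorial * d)) (2 * (i.factorial * d) - 1) := by
        have : 2 * (i.factorial * d) = (2 * (i.factorial * d) - 1) + 1 := by omega
        generalize 2 * (i.factorial * d) - 1 = z at *
        rw [this]; simp
      exact Nat.Coprime.coprime_dvd_left hmd h1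
    · exact (Nat.coprime_of_lt_prime hm.ne' (lt_of_le_of_lt hmi hip) hp).symm

theorem stmt0 :
    ∃ (G : Type) (_ : Group G), UniquelyDivisible G ∧
      ∀ w : List Bool,
        {p : ℕ | p.Prime ∧ ¬ ∃ x y : ZMod p, x ≠ 0 ∧ y ≠ 0 ∧
            MvPolynomial.aeval ![x ^ 2, y ^ 2] (wordPoly w) = 0}.Finite →
        ∃ A B B' : G,
          (¬ ∃ X : G, wordEval w X A = B) ∧
          (∃ X Y : G, X ≠ Y ∧ wordEval w X A = B' ∧ wordEval w Y A = B') := by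
  choose p k hp hlt hk hcop using exists_prime_seq
  have hbij : ∀ m, 0 < m → ∀ i, m ≤ i → Function.Bijective (fun g : Aff (p i) => g ^ m) :=
    fun m hm i hi => Aff.pow_bij (Aff.pow_exp (hp i) (k i) (hk i)) (hcop i m hm hi)
  refine ⟨(∀ i, Aff (p i)) ⧸ evTriv (fun i => Aff (p i)), inferInstance, ?_, ?_⟩
  · intro b m hm
    obtain ⟨b, rfl⟩ := QuotientGroup.mk_surjective b
    have hr : ∀ i, ∃ x : Aff (p i), m ≤ i → x ^ m = b i := by
      intro i
      by_cases hi : m ≤ i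
      · obtain ⟨x, hx⟩ := (hbij m hm i hi).2 (b i)
        exact ⟨x, fun _ => hx⟩
      · exact ⟨1, fun h => absurd h hi⟩
    choose r hr using hr
    refine ⟨(r : (∀ i, Aff (p i)) ⧸ evTriv (fun i => Aff (p i))), ?_, ?_⟩
    · simp only
      rw [← QuotientGroup.mk_pow, evTriv_eq]
      exact ⟨m, hr⟩
    · intro z hz
      obtain ⟨z, rfl⟩ := QuotientGroup.mk_surjective z
      rw [← QuotientGroup.mk_pow, evTriv_eq] at hz
      obtain ⟨n, hn⟩ := hz
      rw [evTriv_eq]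
      refine ⟨max n m, fun i hi => ?_⟩
      have hmi := le_trans (le_max_right _ _) hi
      apply (hbij m hm i hmi).1
      simp only
      rw [hr i hmi]
      exact hn i (le_trans (le_max_left _ _) hi)
  · intro w hfin
    obtain ⟨n, hn⟩ := hfin.bddAbove
    have hloc : ∀ i, ∃ A B X Y : Aff (p i), n ≤ i → ((∀ Z, wordEval w Z A ≠ B) ∧ X ≠ Y ∧
        wordEval w X A = wordEval w Y A) := by
      intro i
      by_cases hi : n ≤ i
      · have : ∃ x y : ZMod (p i), x ≠ 0 ∧ y ≠ 0 ∧
            MvPolynomial.aeval ![x ^ 2, y ^ 2] (wordPoly w) = 0 := by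
          by_contra hc
          have h1 : p i ≤ n := hn ⟨hp i, hc⟩
          have h2 := hlt i
          omega
        obtain ⟨A, B, X, Y, h⟩ := Aff.local_stmt (hp i) w this
        exact ⟨A, B, X, Y, fun _ => h⟩
      · exact ⟨1, 1, 1, 1, fun h => absurd h hi⟩
    choose A B X Y h using hloc
    have hmk : ∀ x a : (∀ i, Aff (p i)),
        wordEval w (x : (∀ i, Aff (p i)) ⧸ evTriv (fun i => Aff (p i))) a =
          ((wordEval w x a : ∀ i, Aff (p i)) : (∀ i, Aff (p i)) ⧸ evTriv (fun i => Aff (p i))) :=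
      fun x a => (wordEval_map (QuotientGroup.mk' _) w x a).symm
    have hev : ∀ (x a : (∀ i, Aff (p i))) i, wordEval w x a i = wordEval w (x i) (a i) :=
      fun x a i => wordEval_map (Pi.evalMonoidHom (fun i => Aff (p i)) i) w x a
    refine ⟨(A : (∀ i, Aff (p i)) ⧸ evTriv (fun i => Aff (p i))), B,
      ((wordEval w X A : ∀ i, Aff (p i)) : (∀ i, Aff (p i)) ⧸ evTriv (fun i => Aff (p i))),
      ?_, X, Y, ?_, hmk _ _, ?_⟩
    · rintro ⟨Z, hZ⟩
      obtain ⟨Z, rfl⟩ := QuotientGroup.mk_surjective Z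
      rw [hmk, evTriv_eq] at hZ
      obtain ⟨m, hm⟩ := hZ
      have := hm (max n m) (le_max_right _ _)
      rw [hev] at this
      exact (h (max n m) (le_max_left _ _)).1 _ this
    · intro e
      rw [evTriv_eq] at e
      obtain ⟨m, hm⟩ := e
      exact (h (max n m) (le_max_left _ _)).2.1 (hm (max n m) (le_max_right _ _))
    · rw [hmk, evTriv_eq]
      refine ⟨n, fun i hi => ?_⟩
      rw [hev, hev]
      exact (h i hi).2.2.symm
end

section
/- Let G be a uniquely divisible group and let w be a totally decomposable word in the alphabet {X,A}. Then for all a, b in G, the equation w(x,a) = b has a unique solution x in G, and this solution lies in the radical subgroup of G generated by {a,b}. -/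
/-- A word is *totally decomposable* if it is the image of the letter `X`
under a composition of the maps `π_{m,k} : v ↦ (v A^k)^m v` (for `m ≥ 1`, `k ≥ 0`),
`r : v ↦ v A`, and `l : v ↦ A v`. -/
inductive TotallyDecomposable : List Bool → Prop
  | base : TotallyDecomposable [true]
  | pi (m k : ℕ) (hm : 1 ≤ m) {v : List Bool} (hv : TotallyDecomposable v) :
      TotallyDecomposable ((List.replicate m (v ++ List.replicate k false)).flatten ++ v)
  | r {v : List Bool} (hv : TotallyDecomposable v) : TotallyDecomposable (v ++ [false])
  | l {v : List Bool} (hv : TotallyDecomposable v) : TotallyDecomposable (false :: v)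

/-- A subgroup `R` of `G` is *radical* if `x ^ m ∈ R` implies `x ∈ R`
for every `x ∈ G` and every positive integer `m`. -/
def IsRadicalSubgroup {G : Type*} [Group G] (R : Subgroup G) : Prop :=
  ∀ (x : G) (m : ℕ), 0 < m → x ^ m ∈ R → x ∈ R

theorem wordEval_append' {M : Type*} [Monoid M] (u v : List Bool) (x a : M) :
    wordEval (u ++ v) x a = wordEval u x a * wordEval v x a := by
  simp [wordEval]

theorem wordEval_replicate_false {M : Type*} [Monoid M] (k : ℕ) (x a : M) :
    wordEval (List.replicate k false) x a = a ^ k := by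
  simp [wordEval]

theorem wordEval_flatten_replicate {M : Type*} [Monoid M] (m : ℕ) (u : List Bool) (x a : M) :
    wordEval (List.replicate m u).flatten x a = wordEval u x a ^ m := by
  induction m with
  | zero => simp [wordEval]
  | succ n ih =>
    rw [List.replicate_succ, List.flatten_cons, wordEval_append', ih, pow_succ']

theorem stmt1_aux {G : Type*} [Group G] (hG : UniquelyDivisible G)
    (w : List Bool) (hw : TotallyDecomposable w) (a : G) : ∀ b : G,
    ∃ y : G, (∀ x : G, wordEval w x a = b ↔ x = y) ∧
      ∀ R : Subgroup G, a ∈ R → b ∈ R → IsRadicalSubgroup R → y ∈ R := by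
  induction hw with
  | base => exact fun b => ⟨b, by simp [wordEval], fun R _ hb _ => hb⟩
  | @pi m k hm v hv ih =>
    intro b
    obtain ⟨c, hc, hu⟩ := hG (b * a ^ k) (m + 1) (Nat.succ_pos m)
    obtain ⟨y, hy, hR⟩ := ih (c * (a ^ k)⁻¹)
    refine ⟨y, fun x => ?_, fun R ha hb hr => hR R ha ?_ hr⟩
    · rw [← hy x, wordEval_append', wordEval_flatten_replicate, wordEval_append',
        wordEval_replicate_false, eq_mul_inv_iff_mul_eq, ← mul_left_inj (a ^ k), mul_assoc,
        ← pow_succ]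
      exact ⟨fun h => hu _ h, fun h => by rw [h]; exact hc⟩
    · have hak := R.pow_mem ha k
      refine R.mul_mem (hr c (m + 1) (Nat.succ_pos m) ?_) (R.inv_mem hak)
      have hc' : c ^ (m + 1) = b * a ^ k := hc
      rw [hc']
      exact R.mul_mem hb hak
  | @r v hv ih =>
    intro b
    obtain ⟨y, hy, hR⟩ := ih (b * a⁻¹)
    refine ⟨y, fun x => ?_, fun R ha hb hr => hR R ha (R.mul_mem hb (R.inv_mem ha)) hr⟩
    rw [← hy x, wordEval_append', eq_mul_inv_iff_mul_eq]
    simp [wordEval]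
  | @l v hv ih =>
    intro b
    obtain ⟨y, hy, hR⟩ := ih (a⁻¹ * b)
    refine ⟨y, fun x => ?_, fun R ha hb hr => hR R ha (R.mul_mem (R.inv_mem ha) hb) hr⟩
    rw [← hy x, eq_inv_mul_iff_mul_eq]
    simp [wordEval]

theorem stmt1 {G : Type*} [Group G] (hG : UniquelyDivisible G)
    (w : List Bool) (hw : TotallyDecomposable w) (a b : G) :
    (∃! x : G, wordEval w x a = b) ∧
      ∀ x : G, wordEval w x a = b →
        ∀ R : Subgroup G, a ∈ R → b ∈ R → IsRadicalSubgroup R → x ∈ R := by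
  obtain ⟨y, hy, hR⟩ := stmt1_aux hG w hw a b
  refine ⟨⟨y, (hy y).2 rfl, fun x hx => (hy x).1 hx⟩, fun x hx R ha hb hr => ?_⟩
  rw [(hy x).1 hx]
  exact hR R ha hb hr
end

section
/- Suppose F in Z[x,y] satisfies F(0,0) != 0, and F has a factor f in Z[x,y] which is irreducible as an element of C[x,y]. Then for all but finitely many primes p, the equation F(x,y) = 0 has a solution (x_p, y_p) with both coordinates nonzero elements of Z/pZ. -/
open scoped TensorProduct

theorem exists_algHom_of_finiteType {k Ω A : Type*} [Field k] [Field Ω] [IsAlgClosed Ω]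
    [Algebra k Ω] [CommRing A] [Algebra k A] [Algebra.FiniteType k A] (m : Ideal A)
    (hm : m.IsMaximal) : ∃ χ : A →ₐ[k] Ω, ∀ a, a ∉ m → χ a ≠ 0 := by
  let _ : Field (A ⧸ m) := Ideal.Quotient.field m
  have hfin : Module.Finite k (A ⧸ m) := finite_of_finite_type_of_isJacobsonRing _ _
  let e : (A ⧸ m) →ₐ[k] Ω := IsAlgClosed.lift
  refine ⟨e.comp (Ideal.Quotient.mkₐ k m), fun a ha h => ha ?_⟩
  have h1 : e (Ideal.Quotient.mk m a) = e 0 := by simpa using h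
  exact Ideal.Quotient.eq_zero_iff_mem.1 (e.toRingHom.injective h1)

/-- Nullstellensatz: a nonzero element of a finitely generated domain is nonzero at a point. -/
theorem exists_algHom_ne_zero {K A : Type*} [Field K] [IsAlgClosed K] [CommRing A] [IsDomain A]
    [Algebra K A] [Algebra.FiniteType K A] (a : A) (ha : a ≠ 0) : ∃ χ : A →ₐ[K] K, χ a ≠ 0 := by
  have hJ : IsJacobsonRing A := isJacobsonRing_of_finiteType (A := K)
  have hbot : (⊥ : Ideal A).jacobson = ⊥ :=
    hJ.out Ideal.isPrime_bot.isRadical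
  have hn : a ∉ (⊥ : Ideal A).jacobson := by rw [hbot]; simpa using ha
  rw [Ideal.jacobson, Submodule.mem_sInf] at hn
  push Not at hn
  obtain ⟨m, ⟨-, hm⟩, ham⟩ := hn
  obtain ⟨χ, hχ⟩ := exists_algHom_of_finiteType (k := K) (Ω := K) m hm
  exact ⟨χ, hχ a ham⟩

theorem tensor_noZeroDivisors {K A B : Type*} [Field K] [IsAlgClosed K] [CommRing A] [IsDomain A]
    [Algebra K A] [Algebra.FiniteType K A] [CommRing B] [IsDomain B] [Algebra K B]
    (u v : A ⊗[K] B) (huv : u * v = 0) : u = 0 ∨ v = 0 := by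
  classical
  let b := Module.Basis.ofVectorSpace K B
  let bb := b.baseChange A
  have key : ∀ (χ : A →ₐ[K] K) (w : A ⊗[K] B) i,
      b.repr (Algebra.TensorProduct.lift ((Algebra.ofId K B).comp χ) (AlgHom.id K B)
        (fun _ _ => Commute.all _ _) w) i = χ (bb.repr w i) := by
    intro χ w i
    induction w with
    | zero => simp
    | add w1 w2 h1 h2 => simp only [map_add, Finsupp.add_apply, h1, h2]
    | tmul a c =>
      simp only [Algebra.TensorProduct.lift_tmul, AlgHom.comp_apply, Algebra.ofId_apply,
        AlgHom.id_apply, ← Algebra.smul_def]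
      simp [bb, mul_comm]
  by_contra! hcon
  obtain ⟨hu, hv⟩ := hcon
  obtain ⟨i, hi⟩ : ∃ i, bb.repr u i ≠ 0 := by
    by_contra! h
    exact hu (bb.repr.map_eq_zero_iff.1 (Finsupp.ext h))
  obtain ⟨j, hj⟩ : ∃ j, bb.repr v j ≠ 0 := by
    by_contra! h
    exact hv (bb.repr.map_eq_zero_iff.1 (Finsupp.ext h))
  obtain ⟨χ, hχ⟩ := exists_algHom_ne_zero (K := K) _ (mul_ne_zero hi hj)
  have h0 := congrArg (Algebra.TensorProduct.lift ((Algebra.ofId K B).comp χ) (AlgHom.id K B)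
        (fun _ _ => Commute.all _ _)) huv
  rw [map_mul, map_zero, mul_eq_zero] at h0
  rw [map_mul] at hχ
  rcases h0 with h0 | h0
  · apply hχ; rw [← key χ u i, h0]; simp
  · apply hχ; rw [← key χ v j, h0]; simp

theorem exists_int_eq_zero {A : Type*} [CommRing A] [Algebra ℤ A] [Algebra.FiniteType ℤ A]
    (h : (A →+* ℂ) → False) : ∃ N : ℤ, N ≠ 0 ∧ (N : A) = 0 := by
  by_contra! hN
  let S : Submonoid A := (nonZeroDivisors ℤ).map (Int.castRingHom A)
  obtain ⟨P, hP, -, hdis⟩ := Ideal.exists_le_prime_disjoint (⊥ : Ideal A) S (by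
    rw [Set.disjoint_left]
    rintro _ h0 ⟨n, hn, rfl⟩
    exact hN n (nonZeroDivisors.ne_zero hn) (by simpa using h0))
  let F := FractionRing (A ⧸ P)
  let g : A →+* F := (algebraMap (A ⧸ P) F).comp (Ideal.Quotient.mk P)
  have hg : ∀ a, g a = 0 → a ∈ P := by
    intro a ha
    have := (IsFractionRing.injective (A ⧸ P) F) (a₁ := Ideal.Quotient.mk P a) (a₂ := 0) (by simpa [g] using ha)
    exact Ideal.Quotient.eq_zero_iff_mem.1 this
  have : CharZero F := by
    apply charZero_of_inj_zero
    intro n hn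
    by_contra hne
    have := hg (n : A) (by simpa using hn)
    rw [Set.disjoint_left] at hdis
    exact hdis this ⟨(n : ℤ), by simpa using hne, by simp⟩
  obtain ⟨s, hs⟩ := (Algebra.FiniteType.out : (⊤ : Subalgebra ℤ A).FG)
  classical
  let A' := Algebra.adjoin ℚ ((s.image g : Finset F) : Set F)
  have hft : Algebra.FiniteType ℚ A' := (Subalgebra.fg_iff_finiteType _).1 ⟨s.image g, rfl⟩
  have hmem : ∀ a, g a ∈ A' := by
    intro a
    have ha : a ∈ Algebra.adjoin ℤ (s : Set A) := by rw [hs]; trivial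
    induction ha using Algebra.adjoin_induction with
    | mem x hx => exact Algebra.subset_adjoin (by simpa using ⟨x, hx, rfl⟩)
    | algebraMap r => simp
    | add x y _ _ hx hy => rw [map_add]; exact add_mem hx hy
    | mul x y _ _ hx hy => rw [map_mul]; exact mul_mem hx hy
  let g' : A →+* A' := g.codRestrict A'.toSubring hmem
  obtain ⟨m, hm⟩ := Ideal.exists_maximal A'
  obtain ⟨χ, -⟩ := exists_algHom_of_finiteType (k := ℚ) (Ω := ℂ) m hm
  exact h (χ.toRingHom.comp g')

theorem fin2_totalDegree_map_le {R S : Type*} [CommRing R] [CommRing S] (φ : R →+* S)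
    (f : MvPolynomial (Fin 2) R) : (MvPolynomial.map φ f).totalDegree ≤ f.totalDegree :=
  Finset.sup_mono (MvPolynomial.support_map_subset _ _)

/-- Generic bivariate polynomial of total degree at most `a`. -/
noncomputable def genPoly {R : Type*} [CommRing R] (d a : ℕ) (u : Fin (d+1) × Fin (d+1) → R) :
    MvPolynomial (Fin 2) R :=
  ∑ ij ∈ Finset.univ.filter (fun ij : Fin (d+1) × Fin (d+1) => (ij.1 : ℕ) + ij.2 ≤ a),
    MvPolynomial.monomial (Finsupp.single 0 (ij.1 : ℕ) + Finsupp.single 1 (ij.2 : ℕ)) (u ij)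

theorem genPoly_totalDegree {R : Type*} [CommRing R] (d a : ℕ) (u : Fin (d+1) × Fin (d+1) → R) :
    (genPoly d a u).totalDegree ≤ a := by
  unfold genPoly
  apply MvPolynomial.totalDegree_finsetSum_le
  intro ij hij
  refine (MvPolynomial.totalDegree_monomial_le _ _).trans ?_
  have := (Finset.mem_filter.1 hij).2
  simpa [Finsupp.sum_add_index', Finsupp.sum_single_index] using this

theorem genPoly_map {R S : Type*} [CommRing R] [CommRing S] (φ : R →+* S) (d a : ℕ)
    (u : Fin (d+1) × Fin (d+1) → R) :
    MvPolynomial.map φ (genPoly d a u) = genPoly d a (fun ij => φ (u ij)) := by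
  simp [genPoly, map_sum, MvPolynomial.map_monomial]

theorem fin2_finsupp_eq (m : Fin 2 →₀ ℕ) : m = Finsupp.single 0 (m 0) + Finsupp.single 1 (m 1) := by
  ext i; fin_cases i <;> simp

theorem fin2_degree_le {R : Type*} [CommRing R] {g : MvPolynomial (Fin 2) R} {m : Fin 2 →₀ ℕ}
    (hm : MvPolynomial.coeff m g ≠ 0) : m 0 + m 1 ≤ g.totalDegree := by
  have := MvPolynomial.le_totalDegree (MvPolynomial.mem_support_iff.2 hm)
  rwa [Finsupp.sum_fintype _ _ (by simp), Fin.sum_univ_two] at this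

theorem eq_genPoly {R : Type*} [CommRing R] (d a : ℕ) (had : a ≤ d) (g : MvPolynomial (Fin 2) R)
    (hg : g.totalDegree ≤ a) :
    g = genPoly d a (fun ij => g.coeff
      (Finsupp.single 0 (ij.1 : ℕ) + Finsupp.single 1 (ij.2 : ℕ))) := by
  classical
  ext m
  unfold genPoly
  rw [MvPolynomial.coeff_sum]
  simp only [MvPolynomial.coeff_monomial]
  by_cases hm : m 0 + m 1 ≤ a
  · rw [Finset.sum_eq_single (⟨m 0, by omega⟩, ⟨m 1, by omega⟩)]
    · simp [← fin2_finsupp_eq m]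
    · intro b _ hb
      rw [if_neg]
      rintro rfl
      apply hb
      ext <;> simp
    · intro h
      simp at h; omega
  · rw [Finset.sum_eq_zero]
    · by_contra h
      have := fin2_degree_le h
      omega
    · intro b hb
      rw [if_neg]
      rintro rfl
      have := (Finset.mem_filter.1 hb).2
      simp at hm; omega

theorem fin2_unit_totalDegree {K : Type*} [Field K] (g : MvPolynomial (Fin 2) K)
    (hg : IsUnit g) : g.totalDegree = 0 := by
  obtain ⟨h, hh⟩ := hg.exists_right_inv
  have h1 : g ≠ 0 := hg.ne_zero
  have h2 : h ≠ 0 := by rintro rfl; simp at hh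
  have := MvPolynomial.totalDegree_mul_of_isDomain h1 h2
  rw [hh] at this
  simp at this
  omega

theorem fin2_unit_of_totalDegree {K : Type*} [Field K] (g : MvPolynomial (Fin 2) K) (h0 : g ≠ 0)
    (hg : g.totalDegree = 0) : IsUnit g := by
  rw [MvPolynomial.totalDegree_eq_zero_iff_eq_C] at hg
  rw [hg] at h0 ⊢
  exact (IsUnit.mk0 _ (by rintro h; rw [h] at h0; simp at h0)).map MvPolynomial.C

theorem exists_int_factor (f : MvPolynomial (Fin 2) ℤ) (d a : ℕ) (ha : 1 ≤ a) (had : a < d)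
    (hc : f.coeff (Finsupp.single 1 d) ≠ 0)
    (hirr : Irreducible (MvPolynomial.map (Int.castRingHom ℂ) f)) :
    ∃ N : ℤ, N ≠ 0 ∧ ∀ (K : Type) [Field K] (g h : MvPolynomial (Fin 2) K),
      g.totalDegree ≤ a → h.totalDegree ≤ d - a →
      MvPolynomial.map (Int.castRingHom K) f = g * h → (N : K) = 0 := by
  classical
  let σ := Fin (d+1) × Fin (d+1)
  let R := MvPolynomial (σ ⊕ σ) ℤ
  let U : σ → R := fun i => MvPolynomial.X (Sum.inl i)
  let V : σ → R := fun i => MvPolynomial.X (Sum.inr i)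
  let Δ : MvPolynomial (Fin 2) R :=
    genPoly d a U * genPoly d (d - a) V - MvPolynomial.map (Int.castRingHom R) f
  let I : Ideal R := Ideal.span (Set.range fun m => Δ.coeff m)
  have hmap : ∀ (K : Type) [Field K] (φ : R →+* K), MvPolynomial.map φ Δ =
      genPoly d a (fun i => φ (U i)) * genPoly d (d - a) (fun i => φ (V i)) -
        MvPolynomial.map (Int.castRingHom K) f := by
    intro K _ φ
    simp only [Δ, map_sub, map_mul, genPoly_map, MvPolynomial.map_map]
    congr 3
    exact RingHom.ext_int _ _
  obtain ⟨N, hN, hN0⟩ := exists_int_eq_zero (A := R ⧸ I) (by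
    intro ψ
    let φ : R →+* ℂ := ψ.comp (Ideal.Quotient.mk I)
    have h0 : MvPolynomial.map φ Δ = 0 := by
      ext m
      rw [MvPolynomial.coeff_map, MvPolynomial.coeff_zero]
      have : Ideal.Quotient.mk I (Δ.coeff m) = 0 :=
        Ideal.Quotient.eq_zero_iff_mem.2 (Ideal.subset_span ⟨m, rfl⟩)
      simp [φ, this]
    rw [hmap, sub_eq_zero] at h0
    have hdeg : d ≤ (MvPolynomial.map (Int.castRingHom ℂ) f).totalDegree := by
      have := fin2_degree_le (g := MvPolynomial.map (Int.castRingHom ℂ) f)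
        (m := Finsupp.single 1 d) (by simpa [MvPolynomial.coeff_map] using hc)
      simpa using this
    rw [← h0] at hdeg
    have hmul := MvPolynomial.totalDegree_mul (genPoly d a (fun i => φ (U i)))
      (genPoly d (d - a) (fun i => φ (V i)))
    have d1 := genPoly_totalDegree d a (fun i => φ (U i))
    have d2 := genPoly_totalDegree d (d - a) (fun i => φ (V i))
    rcases hirr.isUnit_or_isUnit h0.symm with h | h
    · have := fin2_unit_totalDegree _ h
      omega
    · have := fin2_unit_totalDegree _ h
      omega)
  refine ⟨N, hN, ?_⟩
  intro K _ g h hg hh hfac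
  let φ : R →+* K := MvPolynomial.eval₂Hom (Int.castRingHom K) (Sum.elim
    (fun ij => g.coeff (Finsupp.single 0 (ij.1 : ℕ) + Finsupp.single 1 (ij.2 : ℕ)))
    (fun ij => h.coeff (Finsupp.single 0 (ij.1 : ℕ) + Finsupp.single 1 (ij.2 : ℕ))))
  have h0 : MvPolynomial.map φ Δ = 0 := by
    rw [hmap]
    have e1 : (fun i => φ (U i)) = fun ij => g.coeff
        (Finsupp.single 0 (ij.1 : ℕ) + Finsupp.single 1 (ij.2 : ℕ)) :=
      funext fun i => MvPolynomial.eval₂Hom_X' _ _ _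
    have e2 : (fun i => φ (V i)) = fun ij => h.coeff
        (Finsupp.single 0 (ij.1 : ℕ) + Finsupp.single 1 (ij.2 : ℕ)) :=
      funext fun i => MvPolynomial.eval₂Hom_X' _ _ _
    rw [e1, e2, ← eq_genPoly d a had.le g hg, ← eq_genPoly d (d - a) (Nat.sub_le _ _) h hh, hfac, sub_self]
  have hI : ∀ r ∈ I, φ r = 0 := by
    intro r hr
    have : I ≤ RingHom.ker φ := by
      rw [Ideal.span_le]
      rintro _ ⟨m, rfl⟩
      have := congrArg (MvPolynomial.coeff m) h0
      simpa [MvPolynomial.coeff_map] using this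
    exact this hr
  have := congrArg (Ideal.Quotient.lift I φ hI) hN0
  simpa using this

theorem irreducible_mod (f : MvPolynomial (Fin 2) ℤ) (d : ℕ) (hd : f.totalDegree ≤ d)
    (hc : f.coeff (Finsupp.single 1 d) ≠ 0)
    (hirr : Irreducible (MvPolynomial.map (Int.castRingHom ℂ) f)) :
    ∃ N : ℤ, N ≠ 0 ∧ ∀ (K : Type) [Field K], (N : K) ≠ 0 →
      Irreducible (MvPolynomial.map (Int.castRingHom K) f) := by
  classical
  have hN : ∀ a, ∃ N : ℤ, N ≠ 0 ∧ (1 ≤ a → a < d → ∀ (K : Type) [Field K]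
      (g h : MvPolynomial (Fin 2) K),
      g.totalDegree ≤ a → h.totalDegree ≤ d - a →
      MvPolynomial.map (Int.castRingHom K) f = g * h → (N : K) = 0) := by
    intro a
    by_cases h : 1 ≤ a ∧ a < d
    · obtain ⟨N, h1, h2⟩ := exists_int_factor f d a h.1 h.2 hc hirr
      exact ⟨N, h1, fun _ _ => h2⟩
    · exact ⟨1, one_ne_zero, fun h1 h2 => absurd ⟨h1, h2⟩ h⟩
  choose N hN0 hN1 using hN
  have hd1 : 1 ≤ d := by
    by_contra hlt
    have h0 : f.totalDegree = 0 := by omega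
    have h1 : (MvPolynomial.map (Int.castRingHom ℂ) f).totalDegree = 0 := by
      have := fin2_totalDegree_map_le (Int.castRingHom ℂ) f
      omega
    exact hirr.not_isUnit (fin2_unit_of_totalDegree _ hirr.ne_zero h1)
  refine ⟨f.coeff (Finsupp.single 1 d) * ∏ a ∈ Finset.range d, N a,
    mul_ne_zero hc (Finset.prod_ne_zero_iff.2 fun a _ => hN0 a), ?_⟩
  intro K _ hK
  push_cast at hK
  obtain ⟨hcK, hNK⟩ := mul_ne_zero_iff.1 hK
  rw [Finset.prod_ne_zero_iff] at hNK
  have hdeg : (MvPolynomial.map (Int.castRingHom K) f).totalDegree = d := by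
    apply le_antisymm ((fin2_totalDegree_map_le _ f).trans hd)
    have := fin2_degree_le (g := MvPolynomial.map (Int.castRingHom K) f)
        (m := Finsupp.single 1 d) (by simpa [MvPolynomial.coeff_map] using hcK)
    simpa using this
  refine ⟨fun hu => ?_, ?_⟩
  · have := fin2_unit_totalDegree _ hu
    omega
  · intro g h hgh
    have hne : MvPolynomial.map (Int.castRingHom K) f ≠ 0 := by
      intro h0; rw [h0] at hdeg; simp at hdeg; omega
    rw [hgh] at hne
    have hg0 := left_ne_zero_of_mul hne
    have hh0 := right_ne_zero_of_mul hne
    by_contra! hcon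
    have hadd := MvPolynomial.totalDegree_mul_of_isDomain hg0 hh0
    rw [← hgh, hdeg] at hadd
    have h1 : g.totalDegree ≠ 0 := fun h => hcon.1 (fin2_unit_of_totalDegree _ hg0 h)
    have h2 : h.totalDegree ≠ 0 := fun h => hcon.2 (fin2_unit_of_totalDegree _ hh0 h)
    exact hNK g.totalDegree (Finset.mem_range.2 (by omega))
      (hN1 _ (by omega) (by omega) K g h le_rfl (by omega) hgh)

/-- A filtration by powers of `E` growing like the one of a plane curve of degree `d`. -/
structure CurveFilt {K B : Type*} [Field K] [CommRing B] [Algebra K B] (E : Submodule K B)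
    (d : ℕ) : Prop where
  one : (1 : B) ∈ E
  fin : ∀ n, FiniteDimensional K (E ^ n : Submodule K B)
  top : ∀ b, ∃ n, b ∈ E ^ n
  up : ∀ n, Module.finrank K (E ^ n : Submodule K B) ≤ d * (n + 1)
  low : ∀ n, d * (n + 1) ≤ Module.finrank K (E ^ (n + d) : Submodule K B)

theorem pow_mono_of_one {K B : Type*} [Field K] [CommRing B] [Algebra K B] {E : Submodule K B}
    (h1 : (1 : B) ∈ E) {m n : ℕ} (hmn : m ≤ n) : E ^ m ≤ E ^ n :=
  pow_le_pow_right₀ (Submodule.one_le.2 h1) hmn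

section deriv
variable {K B : Type*} [Field K] [CommRing B] [Algebra K B] (D : Derivation K B B)

theorem deriv_mem_pow (I : Ideal B) (n : ℕ) : ∀ h ∈ I ^ (n + 1), D h ∈ I ^ n := by
  induction n with
  | zero => intro h _; simp
  | succ n ih =>
    intro h hh
    rw [pow_succ] at hh
    refine Submodule.mul_induction_on hh ?_ ?_
    · intro a ha b hb
      rw [D.leibniz]
      apply add_mem
      · exact Ideal.mul_mem_right _ _ ha
      · rw [smul_eq_mul, mul_comm, pow_succ]
        exact Ideal.mul_mem_mul (ih a ha) hb
    · intro a b ha hb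
      rw [map_add]; exact add_mem ha hb

theorem deriv_iter_mem_pow (I : Ideal B) (n k : ℕ) : ∀ h ∈ I ^ (n + k), D^[k] h ∈ I ^ n := by
  induction k with
  | zero => intro h hh; simpa using hh
  | succ k ih =>
    intro h hh
    rw [Function.iterate_succ_apply]
    exact ih _ (deriv_mem_pow D I (n + k) h hh)

theorem deriv_iter_add (k : ℕ) (a b : B) : D^[k] (a + b) = D^[k] a + D^[k] b := by
  induction k generalizing a b with
  | zero => rfl
  | succ k ih => simp only [Function.iterate_succ_apply, map_add, ih]

theorem deriv_iter_smul (k : ℕ) (c : K) (b : B) : D^[k] (c • b) = c • D^[k] b := by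
  induction k generalizing b with
  | zero => rfl
  | succ k ih => simp only [Function.iterate_succ_apply, D.map_smul, ih]

theorem deriv_iter_leading (I : Ideal B) (w : B) (hw : w ∈ I) (l : ℕ) :
    ∀ u, D^[l] (w ^ l * u) - (l.factorial : B) * D w ^ l * u ∈ I := by
  induction l with
  | zero => intro u; simp
  | succ l ih =>
    intro u
    have e : D (w ^ (l + 1) * u) = w ^ l * (((l + 1 : ℕ) : B) * D w * u) + w ^ (l + 1) * D u := by
      rw [D.leibniz, D.leibniz_pow]
      simp only [smul_eq_mul, nsmul_eq_mul, Nat.add_sub_cancel]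
      ring
    rw [Function.iterate_succ_apply, e, deriv_iter_add]
    have h1 := ih (((l + 1 : ℕ) : B) * D w * u)
    have h2 : D^[l] (w ^ (l + 1) * D u) ∈ I := by
      have := deriv_iter_mem_pow D I 1 l (w ^ (l + 1) * D u)
        (Ideal.mul_mem_right _ _ (by rw [add_comm]; exact Ideal.pow_mem_pow hw _))
      simpa using this
    have := add_mem h1 h2
    convert! this using 1
    rw [Nat.factorial_succ]
    push_cast
    ring

theorem deriv_iter_vanish (χ : B →ₐ[K] K) (l : ℕ) : ∀ (Φ b : B),
    (∀ k ≤ l, χ (D^[k] Φ) = 0) → χ (D^[l] (b * Φ)) = 0 := by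
  induction l with
  | zero => intro Φ b h; have := h 0 le_rfl; simp at this; simp [this]
  | succ l ih =>
    intro Φ b h
    rw [Function.iterate_succ_apply, D.leibniz, deriv_iter_add, map_add, smul_eq_mul, smul_eq_mul,
      mul_comm Φ, ih (D Φ) b (fun k hk => ?_), ih Φ (D b) (fun k hk => h k (by omega)), add_zero]
    have := h (k + 1) (by omega)
    rwa [Function.iterate_succ_apply] at this

/-- The `l`-th jets at a family of points. -/
noncomputable def jetMap {ι : Type*} (χ : ι → (B →ₐ[K] K)) (M : ℕ) : B →ₗ[K] (ι × Fin M → K) where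
  toFun b := fun il => χ il.1 (D^[(il.2 : ℕ)] b)
  map_add' a b := by ext il; simp
  map_smul' c b := by ext il; simp [deriv_iter_smul]

/-- Zero estimate on a curve. -/
theorem zero_bound [IsDomain B] {E : Submodule K B} {d : ℕ} (hE : CurveFilt E d) (x Φ : B)
    (δ M : ℕ) (hΦ0 : Φ ≠ 0) (hΦ : Φ ∈ E ^ δ) {ι : Type*} [Fintype ι] (χ : ι → (B →ₐ[K] K))
    (hinj : Function.Injective χ) (hvan : ∀ i, ∀ l < M, χ i (D^[l] Φ) = 0)
    (hnd : ∀ i, ∀ l < M, (l.factorial : K) * χ i (D x) ^ l ≠ 0) :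
    Fintype.card ι * M ≤ d * δ + d * d := by
  classical
  have hsep : ∀ i j, ∃ w : B, χ j w = 0 ∧ (i ≠ j → χ i w ≠ 0) := by
    intro i j
    by_cases h : i = j
    · exact ⟨0, by simp, fun h' => absurd h h'⟩
    · have : χ i ≠ χ j := fun h' => h (hinj h')
      obtain ⟨b, hb⟩ := DFunLike.ne_iff.1 this
      refine ⟨b - algebraMap K B (χ j b), by simp, fun _ => ?_⟩
      simpa [sub_eq_zero] using hb
  choose w hw0 hw1 using hsep
  let u : ι → B := fun i => ∏ j ∈ Finset.univ.erase i, w i j ^ M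
  let h : ι × Fin M → B := fun il =>
    (x - algebraMap K B (χ il.1 x)) ^ (il.2 : ℕ) * u il.1
  have hu : ∀ i, χ i (u i) ≠ 0 := by
    intro i
    simp only [u, map_prod, map_pow]
    refine Finset.prod_ne_zero_iff.2 fun j hj => pow_ne_zero _ (hw1 i j ?_)
    exact (Finset.ne_of_mem_erase hj).symm
  -- other points
  have hoff : ∀ i (l k : Fin M) j, j ≠ i → χ j (D^[(k : ℕ)] (h (i, l))) = 0 := by
    intro i l k j hji
    have h1 : h (i, l) ∈ (RingHom.ker (χ j)) ^ (1 + (k : ℕ)) := by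
      apply Ideal.mul_mem_left
      rw [show u i = w i j ^ M * ∏ j' ∈ (Finset.univ.erase i).erase j, w i j' ^ M from
        (Finset.mul_prod_erase _ _ (Finset.mem_erase.2 ⟨hji, Finset.mem_univ j⟩)).symm]
      apply Ideal.mul_mem_right
      exact Ideal.pow_le_pow_right (by omega)
        (Ideal.pow_mem_pow (show w i j ∈ RingHom.ker (χ j) from hw0 i j) M)
    have := deriv_iter_mem_pow D _ 1 k _ h1
    simpa using this
  have hlt : ∀ i (l k : Fin M), k < l → χ i (D^[(k : ℕ)] (h (i, l))) = 0 := by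
    intro i l k hkl
    have h1 : h (i, l) ∈ (RingHom.ker (χ i)) ^ (1 + (k : ℕ)) := by
      apply Ideal.mul_mem_right
      exact Ideal.pow_le_pow_right (by have : (k : ℕ) < l := hkl; omega)
        (Ideal.pow_mem_pow (show x - algebraMap K B (χ i x) ∈ RingHom.ker (χ i) by simp) l)
    have := deriv_iter_mem_pow D _ 1 k _ h1
    simpa using this
  have hdiag : ∀ i (l : Fin M), χ i (D^[(l : ℕ)] (h (i, l))) ≠ 0 := by
    intro i l
    have h1 := deriv_iter_leading D (RingHom.ker (χ i)) (x - algebraMap K B (χ i x)) (by simp) l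
      (u i)
    rw [RingHom.mem_ker, map_sub, sub_eq_zero] at h1
    have h2 : χ i (D^[(l : ℕ)] (h (i, l))) = _ := h1
    rw [h2]
    simp only [map_sub, Derivation.map_algebraMap, sub_zero, map_mul, map_pow, map_natCast]
    exact mul_ne_zero (hnd i l l.2) (hu i)
  -- choose a large filtration step
  choose n hn using hE.top
  let T0 := Finset.univ.sup fun il => n (h il)
  let W := E ^ (T0 + d + δ)
  have hhW : ∀ il, h il ∈ W := by
    intro il
    apply pow_mono_of_one hE.one _ (hn (h il))
    have : n (h il) ≤ T0 := Finset.le_sup (f := fun il => n (h il)) (Finset.mem_univ il)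
    omega
  have := hE.fin (T0 + d + δ)
  have := hE.fin (T0 + d)
  let L := (jetMap D χ M).comp W.subtype
  have hsurj : LinearMap.range L = ⊤ := by
    by_contra hne
    obtain ⟨c, hc0, hc⟩ := Submodule.exists_le_ker_of_lt_top _ (lt_top_iff_ne_top.2 hne)
    apply hc0
    have hcs : ∀ i (m : ℕ) (l : Fin M), M - l ≤ m → c (Pi.single (i, l) 1) = 0 := by
      intro i m
      induction m with
      | zero => intro l hl; have := l.2; omega
      | succ m ih =>
        intro l hl
        have h1 : c (L ⟨h (i, l), hhW _⟩) = 0 := hc ⟨_, rfl⟩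
        rw [LinearMap.pi_apply_eq_sum_univ, Finset.sum_eq_single (i, l)] at h1
        · rcases smul_eq_zero.1 h1 with h2 | h2
          · exact absurd h2 (hdiag i l)
          · convert! h2 using 2
            ext a; simp [Pi.single_apply, eq_comm]
        · rintro ⟨j, k⟩ - hjk
          by_cases hji : j = i
          · subst hji
            rcases lt_trichotomy k l with hkl | hkl | hkl
            · have : L ⟨h (j, l), hhW _⟩ (j, k) = 0 := hlt j l k hkl
              rw [this, zero_smul]
            · subst hkl; exact absurd rfl hjk
            · have := ih k (by have : (l : ℕ) < k := hkl; omega)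
              rw [show (fun a => if (j, k) = a then (1 : K) else 0) = Pi.single (j, k) 1 by
                ext a; simp [Pi.single_apply, eq_comm], this, smul_zero]
          · have : L ⟨h (i, l), hhW _⟩ (j, k) = 0 := hoff i l k j hji
            rw [this, zero_smul]
        · intro h; exact absurd (Finset.mem_univ _) h
    apply LinearMap.pi_ext'
    rintro ⟨i, l⟩
    ext
    simpa using hcs i _ l le_rfl
  have hrank := LinearMap.finrank_range_add_finrank_ker L
  rw [hsurj, finrank_top, Module.finrank_fintype_fun_eq_card, Fintype.card_prod,
    Fintype.card_fin] at hrank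
  have hker : Module.finrank K (E ^ (T0 + d) : Submodule K B) ≤
      Module.finrank K (LinearMap.ker L) := by
    let g : (E ^ (T0 + d) : Submodule K B) →ₗ[K] LinearMap.ker L :=
      { toFun := fun b => ⟨⟨b.1 * Φ, by
            change _ ∈ E ^ (T0 + d + δ)
            rw [pow_add _ (T0 + d)]; exact Submodule.mul_mem_mul b.2 hΦ⟩, by
            rw [LinearMap.mem_ker]
            ext ⟨i, l⟩
            exact deriv_iter_vanish D (χ i) l Φ b.1 (fun k hk => hvan i k (by omega))⟩
        map_add' := fun a b => by ext; simp [add_mul]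
        map_smul' := fun c b => by ext; simp }
    refine LinearMap.finrank_le_finrank_of_injective (f := g) ?_
    intro a b hab
    have : a.1 * Φ = b.1 * Φ := congrArg (fun z => (z.1.1 : B)) hab
    exact Subtype.ext (mul_right_cancel₀ hΦ0 this)
  have h1 := hE.up (T0 + d + δ)
  have h2 := hE.low T0
  have h3 : Module.finrank K W ≤ d * (T0 + d + δ + 1) := h1
  nlinarith
end deriv

section tens
variable {K B : Type*} [Field K] [CommRing B] [Algebra K B]

/-- Bidegree filtration on `B ⊗ B`. -/
noncomputable def biFilt (E : Submodule K B) (a b : ℕ) : Submodule K (B ⊗[K] B) :=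
  Submodule.span K {z | ∃ s ∈ E ^ a, ∃ t ∈ E ^ b, z = s ⊗ₜ[K] t}

theorem biFilt_tmul {E : Submodule K B} {a b : ℕ} {s t : B} (hs : s ∈ E ^ a) (ht : t ∈ E ^ b) :
    s ⊗ₜ[K] t ∈ biFilt E a b := Submodule.subset_span ⟨s, hs, t, ht, rfl⟩

theorem biFilt_mul {E : Submodule K B} {a b a' b' : ℕ} {u v : B ⊗[K] B} (hu : u ∈ biFilt E a b)
    (hv : v ∈ biFilt E a' b') : u * v ∈ biFilt E (a + a') (b + b') := by
  have h := Submodule.mul_mem_mul hu hv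
  unfold biFilt at h
  rw [Submodule.span_mul_span] at h
  refine Submodule.span_le.2 ?_ h
  rintro _ ⟨_, ⟨s, hs, t, ht, rfl⟩, _, ⟨s', hs', t', ht', rfl⟩, rfl⟩
  simp only [Algebra.TensorProduct.tmul_mul_tmul]
  apply biFilt_tmul
  · rw [pow_add]; exact Submodule.mul_mem_mul hs hs'
  · rw [pow_add]; exact Submodule.mul_mem_mul ht ht'

theorem biFilt_eq_range (E : Submodule K B) (a b : ℕ) :
    biFilt E a b = LinearMap.range (TensorProduct.mapIncl (E ^ a) (E ^ b)) := by
  apply le_antisymm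
  · refine Submodule.span_le.2 ?_
    rintro _ ⟨s, hs, t, ht, rfl⟩
    exact ⟨(⟨s, hs⟩ : (E ^ a : Submodule K B)) ⊗ₜ (⟨t, ht⟩ : (E ^ b : Submodule K B)), rfl⟩
  · rintro _ ⟨z, rfl⟩
    induction z with
    | zero => simp
    | add z1 z2 h1 h2 => rw [map_add]; exact add_mem h1 h2
    | tmul s t => exact biFilt_tmul s.2 t.2

theorem biFilt_finrank (E : Submodule K B) (a b : ℕ) :
    Module.finrank K (biFilt E a b) =
      Module.finrank K (E ^ a : Submodule K B) * Module.finrank K (E ^ b : Submodule K B) := by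
  rw [biFilt_eq_range, LinearMap.finrank_range_of_inj, Module.finrank_tensorProduct]
  exact Module.Flat.tensorProduct_mapIncl_injective_of_right _ _

theorem biFilt_fin {E : Submodule K B} {d : ℕ} (hE : CurveFilt E d) (a b : ℕ) :
    FiniteDimensional K (biFilt E a b) := by
  have := hE.fin a
  have := hE.fin b
  rw [biFilt_eq_range]
  infer_instance

theorem nonvan {E : Submodule K B} {d : ℕ} (hE : CurveFilt E d)
    (hdom : ∀ u v : B ⊗[K] B, u * v = 0 → u = 0 ∨ v = 0) (x : B) (hx : x ∈ E)
    (hxi : LinearIndependent K (fun n : ℕ => x ^ n)) (p A I : ℕ) (hp : d * d * (A + d) < p)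
    (hAp : A + d < p)
    (φ : B ⊗[K] B →ₐ[K] B) (hφ : ∀ i k, φ ((x ^ i) ⊗ₜ (x ^ k)) = x ^ (i + p * k))
    (G : B ⊗[K] B) (hG0 : G ≠ 0) (hG : G ∈ biFilt E A I) : φ G ≠ 0 := by
  intro hφG
  obtain ⟨a', ha'⟩ : ∃ a', p = a' + A + d + 1 := ⟨p - 1 - A - d, by omega⟩
  obtain ⟨t, ht⟩ : ∃ t, t = d * d * p * (I + d) := ⟨_, rfl⟩
  let W := biFilt E (A + (a' + d)) (I + (t + d))
  have := biFilt_fin hE (A + (a' + d)) (I + (t + d))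
  have := biFilt_fin hE (a' + d) (t + d)
  let L : W →ₗ[K] B := φ.toLinearMap.comp W.subtype
  have hrank := LinearMap.finrank_range_add_finrank_ker L
  have hker : Module.finrank K (biFilt E (a' + d) (t + d)) ≤
      Module.finrank K (LinearMap.ker L) := by
    let g : biFilt E (a' + d) (t + d) →ₗ[K] LinearMap.ker L :=
      { toFun := fun b => ⟨⟨G * b.1, biFilt_mul hG b.2⟩, by
            rw [LinearMap.mem_ker]
            change φ (G * b.1) = 0
            rw [map_mul, hφG, zero_mul]⟩
        map_add' := fun a b => by ext; simp [mul_add]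
        map_smul' := fun c b => by ext; simp }
    refine LinearMap.finrank_le_finrank_of_injective (f := g) ?_
    intro a b hab
    have h1 : G * a.1 = G * b.1 := congrArg (fun z => (z.1.1 : B ⊗[K] B)) hab
    have h2 : G * (a.1 - b.1) = 0 := by rw [mul_sub, h1, sub_self]
    rcases hdom _ _ h2 with h3 | h3
    · exact absurd h3 hG0
    · exact Subtype.ext (sub_eq_zero.1 h3)
  have hran : p * (I + t + d + 1) ≤ Module.finrank K (LinearMap.range L) := by
    have hpos : 0 < p := by omega
    have hmem : ∀ ik : Fin p × Fin (I + t + d + 1),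
        x ^ ((ik.1 : ℕ) + p * ik.2) ∈ LinearMap.range L := by
      intro ik
      refine ⟨⟨(x ^ (ik.1 : ℕ)) ⊗ₜ (x ^ (ik.2 : ℕ)), biFilt_tmul ?_ ?_⟩, hφ _ _⟩
      · exact pow_mono_of_one hE.one (by have := ik.1.2; omega) (Submodule.pow_mem_pow _ hx _)
      · exact pow_mono_of_one hE.one (by have := ik.2.2; omega) (Submodule.pow_mem_pow _ hx _)
    have hli : LinearIndependent K (fun ik : Fin p × Fin (I + t + d + 1) =>
        (⟨_, hmem ik⟩ : LinearMap.range L)) := by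
      apply LinearIndependent.of_comp (LinearMap.range L).subtype
      refine hxi.comp (fun ik : Fin p × Fin (I + t + d + 1) => (ik.1 : ℕ) + p * ik.2) ?_
      rintro ⟨i, k⟩ ⟨i', k'⟩ h
      simp only at h
      have h1 : (i : ℕ) = i' := by
        have := congrArg (· % p) h
        simpa [Nat.add_mul_mod_self_left, Nat.mod_eq_of_lt i.2, Nat.mod_eq_of_lt i'.2] using this
      have h2 : (k : ℕ) = k' := by
        rw [h1] at h
        exact Nat.eq_of_mul_eq_mul_left hpos (by omega)
      exact Prod.ext (Fin.ext h1) (Fin.ext h2)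
    have := hli.fintype_card_le_finrank
    simpa using this
  rw [biFilt_finrank] at hker
  have hW : Module.finrank K W = _ := biFilt_finrank E (A + (a' + d)) (I + (t + d))
  rw [hW] at hrank
  have u1 := hE.up (A + (a' + d))
  have u2 := hE.up (I + (t + d))
  have l1 := hE.low a'
  have l2 := hE.low t
  have U := Nat.mul_le_mul u1 u2
  have Lw := Nat.mul_le_mul l1 l2
  have main : p * (I + t + d + 1) + d * (a' + 1) * (d * (t + 1)) ≤
      d * (A + (a' + d) + 1) * (d * (I + (t + d) + 1)) := by omega
  have e1 : A + (a' + d) + 1 = p := by omega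
  rw [e1] at main
  have e2 : ((a' : ℤ) + 1) = p - A - d := by rw [ha']; push_cast; ring
  zify at main ht hp
  rw [e2] at main
  have hp' : (d : ℤ) * d * (A + d) + 1 ≤ p := hp
  have ht0 : (0 : ℤ) ≤ t + 1 := by positivity
  have hpI : (0 : ℤ) ≤ p * (I + d) := by positivity
  nlinarith [mul_le_mul_of_nonneg_right hp' ht0]
end tens

section aux
variable {K B : Type*} [Field K] [CommRing B] [Algebra K B] (D : Derivation K B B)

/-- Iterated derivation as a linear map. -/
noncomputable def dIter (l : ℕ) : B →ₗ[K] B where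
  toFun := D^[l]
  map_add' := deriv_iter_add D l
  map_smul' := deriv_iter_smul D l

theorem deriv_filt {E : Submodule K B} {d : ℕ} (hE : (1 : B) ∈ E) (hD : ∀ b ∈ E, D b ∈ E ^ d)
    (n : ℕ) : ∀ b ∈ E ^ n, D b ∈ E ^ (n + d) := by
  induction n with
  | zero =>
    intro b hb
    rw [pow_zero, Submodule.mem_one] at hb
    obtain ⟨c, rfl⟩ := hb
    simp
  | succ n ih =>
    intro b hb
    rw [pow_succ] at hb
    refine Submodule.mul_induction_on hb ?_ ?_
    · intro a ha c hc
      rw [D.leibniz]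
      apply add_mem
      · have := Submodule.mul_mem_mul ha (hD c hc)
        rw [← pow_add] at this
        exact pow_mono_of_one hE (by omega) this
      · have := Submodule.mul_mem_mul hc (ih a ha)
        rw [← pow_succ'] at this
        exact pow_mono_of_one hE (by omega) this
    · intro a c ha hc
      rw [map_add]; exact add_mem ha hc

theorem deriv_iter_filt {E : Submodule K B} {d : ℕ} (hE : (1 : B) ∈ E) (hD : ∀ b ∈ E, D b ∈ E ^ d)
    (n l : ℕ) : ∀ b ∈ E ^ n, D^[l] b ∈ E ^ (n + l * d) := by
  induction l generalizing n with
  | zero => intro b hb; simpa using hb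
  | succ l ih =>
    intro b hb
    rw [Function.iterate_succ_apply]
    have := ih (n + d) _ (deriv_filt D hE hD n b hb)
    rwa [show n + (l + 1) * d = n + d + l * d by ring]

theorem algHom_filt {R : Type*} [CommRing R] [Algebra K R] {E : Submodule K B}
    {E' : Submodule K R} (q : ℕ) (g : B →ₐ[K] R) (hg : ∀ b ∈ E, g b ∈ E' ^ q) (n : ℕ) :
    ∀ b ∈ E ^ n, g b ∈ E' ^ (q * n) := by
  intro b hb
  have h1 : E.map g.toLinearMap ≤ E' ^ q := by
    rintro _ ⟨b, hb, rfl⟩; exact hg b hb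
  have h2 : g b ∈ (E ^ n).map g.toLinearMap := ⟨b, hb, rfl⟩
  rw [Submodule.map_pow] at h2
  rw [pow_mul]
  exact pow_left_mono n h1 h2

/-- Derivatives of the auxiliary function restricted to the second curve. -/
noncomputable def thetaMap {R : Type*} [CommRing R] [Algebra K R] (i1 i2 : B →ₐ[K] R) (l : ℕ) :
    B ⊗[K] B →ₗ[K] R :=
  (LinearMap.mul' K R).comp
    (TensorProduct.map (i1.toLinearMap.comp (dIter D l)) i2.toLinearMap)

theorem thetaMap_tmul {R : Type*} [CommRing R] [Algebra K R] (i1 i2 : B →ₐ[K] R) (l : ℕ)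
    (s t : B) : thetaMap D i1 i2 l (s ⊗ₜ t) = i1 (D^[l] s) * i2 t := by
  simp [thetaMap, dIter]

theorem thetaMap_filt {R : Type*} [CommRing R] [Algebra K R] {E : Submodule K B}
    {E' : Submodule K R} {d : ℕ} (hE : (1 : B) ∈ E) (hD : ∀ b ∈ E, D b ∈ E ^ d) (h1' : (1 : R) ∈ E')
    (i1 i2 : B →ₐ[K] R)
    (h1 : ∀ b ∈ E, i1 b ∈ E') (h2 : ∀ b ∈ E, i2 b ∈ E') (l M a b : ℕ) (hl : l ≤ M) :
    ∀ G ∈ biFilt E a b, thetaMap D i1 i2 l G ∈ E' ^ (a + b + M * d) := by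
  intro G hG
  have : biFilt E a b ≤ (E' ^ (a + b + M * d)).comap (thetaMap D i1 i2 l) := by
    refine Submodule.span_le.2 ?_
    rintro _ ⟨s, hs, t, ht, rfl⟩
    change thetaMap D i1 i2 l (s ⊗ₜ t) ∈ E' ^ (a + b + M * d)
    rw [thetaMap_tmul]
    have k1 := algHom_filt (E' := E') 1 i1 (by simpa using h1) _ _ (deriv_iter_filt D hE hD a l s hs)
    have k2 := algHom_filt (E' := E') 1 i2 (by simpa using h2) _ _ ht
    have k3 := Submodule.mul_mem_mul k1 k2
    rw [← pow_add] at k3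
    refine pow_mono_of_one h1' ?_ k3
    have := Nat.mul_le_mul_right d hl
    omega
  exact this hG

theorem exists_aux {R : Type*} [CommRing R] [Algebra K R] {E : Submodule K B}
    {E' : Submodule K R} {e m : ℕ} (hE : CurveFilt E (e + 1))
    (hD : ∀ b ∈ E, D b ∈ E ^ (e + 1)) (h1' : (1 : R) ∈ E')
    (hfin : ∀ n, FiniteDimensional K (E' ^ n : Submodule K R))
    (hup : ∀ n, Module.finrank K (E' ^ n : Submodule K R) ≤ (e + 1) * e * (n + 1))
    (i1 i2 : B →ₐ[K] R)
    (h1 : ∀ b ∈ E, i1 b ∈ E') (h2 : ∀ b ∈ E, i2 b ∈ E') (A0 : ℕ)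
    (hA0 : A0 = m * e * (m * e + 2 * (e + 1) + (e + 1) * m * (e + 1))) :
    ∃ G ∈ biFilt E (A0 + (e + 1)) (m * e + (e + 1)), G ≠ 0 ∧
      ∀ l < (e + 1) * m, thetaMap D i1 i2 l G = 0 := by
  let V := biFilt E (A0 + (e + 1)) (m * e + (e + 1))
  have := biFilt_fin hE (A0 + (e + 1)) (m * e + (e + 1))
  let n := A0 + (e + 1) + (m * e + (e + 1)) + (e + 1) * m * (e + 1)
  have := hfin n
  let Θ : V →ₗ[K] (Fin ((e + 1) * m) → (E' ^ n : Submodule K R)) :=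
    LinearMap.pi fun l => ((thetaMap D i1 i2 l).comp V.subtype).codRestrict _ (fun G =>
      thetaMap_filt D hE.one hD h1' i1 i2 h1 h2 l _ _ _ l.2.le G.1 G.2)
  have hlt : Module.finrank K (Fin ((e + 1) * m) → (E' ^ n : Submodule K R)) <
      Module.finrank K V := by
    rw [Module.finrank_pi_fintype]
    simp only [Finset.sum_const, Finset.card_univ, Fintype.card_fin, smul_eq_mul]
    have hV : Module.finrank K V = _ := biFilt_finrank E (A0 + (e + 1)) (m * e + (e + 1))
    rw [hV]
    refine lt_of_lt_of_le ?_ (Nat.mul_le_mul (hE.low A0) (hE.low (m * e)))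
    refine lt_of_le_of_lt (Nat.mul_le_mul_left _ (hup n)) ?_
    have e1 : (e + 1) * (A0 + 1) * ((e + 1) * (m * e + 1)) =
        (e + 1) * m * ((e + 1) * e * (n + 1)) + (e + 1) * (e + 1) := by
      simp only [n]
      have : (e + 1) * (A0 + 1) * ((e + 1) * (m * e + 1)) = 
        (e + 1) * (e + 1) * ((A0 + 1) * (m * e) + A0 + 1) := by ring
      rw [this]
      nth_rewrite 2 [hA0]
      ring
    rw [e1]
    have : 0 < (e + 1) * (e + 1) := by positivity
    omega
  obtain ⟨G, hG, hG0⟩ := Submodule.exists_mem_ne_zero_of_ne_bot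
    (LinearMap.ker_ne_bot_of_finrank_lt hlt)
  refine ⟨G.1, G.2, fun h => hG0 (Subtype.ext h), fun l hl => ?_⟩
  have h3 : Θ G ⟨l, hl⟩ = 0 := congrFun (LinearMap.mem_ker.1 hG) ⟨l, hl⟩
  exact congrArg Subtype.val h3

theorem points_bound [IsDomain B] {R : Type*} [CommRing R] [Algebra K R] {E : Submodule K B}
    {E' : Submodule K R} {e m p : ℕ} (hE : CurveFilt E (e + 1))
    (hdom : ∀ u v : B ⊗[K] B, u * v = 0 → u = 0 ∨ v = 0) (x : B) (hx : x ∈ E)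
    (hxi : LinearIndependent K (fun n : ℕ => x ^ n))
    (hD : ∀ b ∈ E, D b ∈ E ^ (e + 1)) (h1' : (1 : R) ∈ E')
    (hfin : ∀ n, FiniteDimensional K (E' ^ n : Submodule K R))
    (hup : ∀ n, Module.finrank K (E' ^ n : Submodule K R) ≤ (e + 1) * e * (n + 1))
    (i1 i2 : B →ₐ[K] R)
    (h1 : ∀ b ∈ E, i1 b ∈ E') (h2 : ∀ b ∈ E, i2 b ∈ E') (A0 : ℕ)
    (hA0 : A0 = m * e * (m * e + 2 * (e + 1) + (e + 1) * m * (e + 1)))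
    (hp : (e + 1) * (e + 1) * (A0 + (e + 1) + (e + 1)) < p)
    (frob : B →ₐ[K] B) (hfx : frob x = x ^ p) (hfE : ∀ b ∈ E, frob b ∈ E ^ p)
    (hDf : ∀ b, D (frob b) = 0)
    {ι : Type*} [Fintype ι] (χ : ι → (B →ₐ[K] K)) (hinj : Function.Injective χ)
    (hχ : ∀ i, ∃ ψ : R →ₐ[K] K, (∀ b, ψ (i1 b) = χ i b) ∧ ∀ b, ψ (i2 b) = χ i (frob b))
    (hnd : ∀ i, ∀ l < (e + 1) * m, (l.factorial : K) * χ i (D x) ^ l ≠ 0) :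
    Fintype.card ι * ((e + 1) * m) ≤
      (e + 1) * (A0 + (e + 1) + p * (m * e + (e + 1))) + (e + 1) * (e + 1) := by
  obtain ⟨G, hG, hG0, hθ⟩ := exists_aux D hE hD h1' hfin hup i1 i2 h1 h2 A0 hA0
  let φ : B ⊗[K] B →ₐ[K] B :=
    Algebra.TensorProduct.lift (AlgHom.id K B) frob (fun _ _ => Commute.all _ _)
  have hφt : ∀ s t, φ (s ⊗ₜ t) = s * frob t := fun s t => by simp [φ]
  have hΦ0 : φ G ≠ 0 := by
    refine nonvan hE hdom x hx hxi p _ _ hp ?_ φ ?_ G hG0 hG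
    · exact lt_of_le_of_lt (Nat.le_mul_of_pos_left _ (by positivity)) hp
    · intro i k
      rw [hφt, map_pow, hfx, pow_add, pow_mul]
  have hΦ : φ G ∈ E ^ (A0 + (e + 1) + p * (m * e + (e + 1))) := by
    have : biFilt E (A0 + (e + 1)) (m * e + (e + 1)) ≤
        (E ^ (A0 + (e + 1) + p * (m * e + (e + 1)))).comap φ.toLinearMap := by
      refine Submodule.span_le.2 ?_
      rintro _ ⟨s, hs, t, ht, rfl⟩
      change φ (s ⊗ₜ t) ∈ E ^ _
      rw [hφt, pow_add]
      exact Submodule.mul_mem_mul hs (algHom_filt p frob hfE _ t ht)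
    exact this hG
  refine zero_bound D hE x (φ G) _ _ hΦ0 hΦ χ hinj ?_ hnd
  intro i l hl
  obtain ⟨ψ, hψ1, hψ2⟩ := hχ i
  have hDs : ∀ (k : ℕ) (s t : B), D^[k] (s * frob t) = D^[k] s * frob t := by
    intro k
    induction k with
    | zero => intro s t; rfl
    | succ k ih =>
      intro s t
      rw [Function.iterate_succ_apply, Function.iterate_succ_apply, D.leibniz, hDf, smul_zero,
        zero_add, smul_eq_mul, mul_comm, ih]
  have key : ∀ G : B ⊗[K] B, χ i (D^[l] (φ G)) = ψ (thetaMap D i1 i2 l G) := by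
    intro G
    induction G with
    | zero =>
      rw [map_zero, map_zero, map_zero]
      have := deriv_iter_smul D l (0 : K) 0
      simp only [zero_smul] at this
      rw [this, map_zero]
    | add a b ha hb => rw [map_add, deriv_iter_add, map_add, map_add, map_add, ha, hb]
    | tmul s t => rw [hφt, hDs, map_mul, thetaMap_tmul, map_mul, hψ1, hψ2]
  rw [key, hθ l hl, map_zero]
end aux

section conc
variable {K B : Type*} [Field K] [CommRing B] [Algebra K B]

theorem aeval_mem_of {σ : Type*} (v : σ → B) (N : Submodule K B) (P : MvPolynomial σ K)
    (h : ∀ m, P.coeff m ≠ 0 → (m.prod fun i k => v i ^ k) ∈ N) : MvPolynomial.aeval v P ∈ N := by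
  rw [MvPolynomial.aeval_def, MvPolynomial.eval₂_eq]
  refine Submodule.sum_mem _ fun m hm => ?_
  rw [← Algebra.smul_def]
  exact N.smul_mem _ (h m (MvPolynomial.mem_support_iff.1 hm))

theorem pow_mem_pow_filt {E : Submodule K B} {b : B} (hb : b ∈ E) (n : ℕ) : b ^ n ∈ E ^ n :=
  Submodule.pow_mem_pow _ hb n

theorem aeval_mem_filt {σ : Type*} (v : σ → B) {E : Submodule K B} (h1 : (1 : B) ∈ E)
    (hv : ∀ i, v i ∈ E) (P : MvPolynomial σ K) (n : ℕ) (hn : P.totalDegree ≤ n) :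
    MvPolynomial.aeval v P ∈ E ^ n := by
  refine aeval_mem_of v _ P fun m hm => ?_
  have h2 : (m.sum fun _ k => k) ≤ n :=
    (MvPolynomial.le_totalDegree (MvPolynomial.mem_support_iff.2 hm)).trans hn
  refine pow_mono_of_one h1 h2 ?_
  clear h2 hm
  classical
  induction m using Finsupp.induction with
  | zero => simp only [Finsupp.prod_zero_index, Finsupp.sum_zero_index, pow_zero]; exact Submodule.one_le.1 le_rfl
  | single_add i k m hi hk ih =>
    rw [Finsupp.prod_add_index' (by simp) (by intros; rw [pow_add]),
      Finsupp.sum_add_index' (by simp) (by simp), pow_add]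
    refine Submodule.mul_mem_mul ?_ ih
    simpa using Submodule.pow_mem_pow _ (hv i) k

theorem filt_le_of {S : Set B} (N : ℕ → Submodule K B) (h0 : (1 : B) ∈ N 0)
    (hmono : ∀ n, N n ≤ N (n + 1)) (hS : ∀ n, ∀ s ∈ S, ∀ b ∈ N n, s * b ∈ N (n + 1)) (n : ℕ) :
    (Submodule.span K (insert 1 S)) ^ n ≤ N n := by
  induction n with
  | zero => rw [pow_zero]; exact Submodule.one_le.2 h0
  | succ n ih =>
    rw [pow_succ', Submodule.mul_le]
    intro a ha b hb
    replace hb := ih hb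
    induction ha using Submodule.span_induction with
    | mem s hs =>
      rcases hs with rfl | hs
      · rw [one_mul]; exact hmono n hb
      · exact hS n s hs b hb
    | zero => simp
    | add u w _ _ hu hw => rw [add_mul]; exact add_mem hu hw
    | smul c u _ hu => rw [smul_mul_assoc]; exact Submodule.smul_mem _ _ hu

/-- Span of monomials in `x, y` with restricted exponent of `y`. -/
def nSpan (K : Type*) {B : Type*} [Field K] [CommRing B] [Algebra K B] (x y : B) (d n : ℕ) :
    Submodule K B :=
  Submodule.span K {b | ∃ i j, i + j ≤ n ∧ j < d ∧ b = x ^ i * y ^ j}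

theorem nSpan_filt (x y : B) (d : ℕ) (hd : 0 < d) (hy : y ^ d ∈ nSpan K x y d d) (n : ℕ) :
    (Submodule.span K {1, x, y}) ^ n ≤ nSpan K x y d n := by
  have hx : ∀ n, ∀ b ∈ nSpan K x y d n, x * b ∈ nSpan K x y d (n + 1) := by
    intro n b hb
    induction hb using Submodule.span_induction with
    | mem s hs =>
      obtain ⟨i, j, h1, h2, rfl⟩ := hs
      exact Submodule.subset_span ⟨i + 1, j, by omega, h2, by ring⟩
    | zero => simp
    | add u w _ _ hu hw => rw [mul_add]; exact add_mem hu hw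
    | smul c u _ hu => rw [mul_smul_comm]; exact Submodule.smul_mem _ _ hu
  have hxs : ∀ s n, ∀ b ∈ nSpan K x y d n, x ^ s * b ∈ nSpan K x y d (n + s) := by
    intro s
    induction s with
    | zero => intro n b hb; simpa using hb
    | succ s ih =>
      intro n b hb
      have := hx _ _ (ih n b hb)
      rwa [← mul_assoc, ← pow_succ'] at this
  have hm : ∀ m n, m ≤ n → nSpan K x y d m ≤ nSpan K x y d n := by
    intro m n h
    refine Submodule.span_mono ?_
    rintro b ⟨i, j, h1, h2, rfl⟩
    exact ⟨i, j, by omega, h2, rfl⟩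
  refine filt_le_of (nSpan K x y d) (Submodule.subset_span ⟨0, 0, by simp, hd, by simp⟩)
    (fun n => hm _ _ (by omega)) ?_ n
  rintro n s (rfl | hs) b hb
  · exact hx n b hb
  · rw [Set.mem_singleton_iff] at hs
    subst hs
    induction hb using Submodule.span_induction with
    | mem t ht =>
      obtain ⟨i, j, h1, h2, rfl⟩ := ht
      by_cases h3 : j + 1 < d
      · exact Submodule.subset_span ⟨i, j + 1, by omega, h3, by ring⟩
      · have h4 : j + 1 = d := by omega
        have := hxs i d _ hy
        rw [show s * (x ^ i * s ^ j) = x ^ i * s ^ (j + 1) by ring, h4]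
        exact hm _ _ (by omega) this
    | zero => simp
    | add u w _ _ hu hw => rw [mul_add]; exact add_mem hu hw
    | smul c u _ hu => rw [mul_smul_comm]; exact Submodule.smul_mem _ _ hu

/-- Span of monomials in `x, y, z` with restricted exponents of `y, z`. -/
def nSpan3 (K : Type*) {B : Type*} [Field K] [CommRing B] [Algebra K B] (x y z : B) (d e n : ℕ) :
    Submodule K B :=
  Submodule.span K {b | ∃ i j k, i + j + k ≤ n ∧ j < d ∧ k < e ∧ b = x ^ i * y ^ j * z ^ k}

theorem nSpan3_filt (x y z : B) (d e : ℕ) (hd : 0 < d) (hy : y ^ d ∈ nSpan K x y d d)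
    (hz : z ^ e ∈ nSpan3 K x y z d e e) (n : ℕ) :
    (Submodule.span K {1, x, y, z}) ^ n ≤ nSpan3 K x y z d e n := by
  have hm : ∀ m n, m ≤ n → nSpan3 K x y z d e m ≤ nSpan3 K x y z d e n := by
    intro m n h
    refine Submodule.span_mono ?_
    rintro b ⟨i, j, k, h1, h2, h3, rfl⟩
    exact ⟨i, j, k, by omega, h2, h3, rfl⟩
  have hx : ∀ n, ∀ b ∈ nSpan3 K x y z d e n, x * b ∈ nSpan3 K x y z d e (n + 1) := by
    intro n b hb
    induction hb using Submodule.span_induction with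
    | mem s hs =>
      obtain ⟨i, j, k, h1, h2, h3, rfl⟩ := hs
      exact Submodule.subset_span ⟨i + 1, j, k, by omega, h2, h3, by ring⟩
    | zero => simp
    | add u w _ _ hu hw => rw [mul_add]; exact add_mem hu hw
    | smul c u _ hu => rw [mul_smul_comm]; exact Submodule.smul_mem _ _ hu
  have hyd : ∀ i k, k < e → ∀ b ∈ nSpan K x y d d,
      x ^ i * b * z ^ k ∈ nSpan3 K x y z d e (d + i + k) := by
    intro i k hk b hb
    induction hb using Submodule.span_induction with
    | mem s hs =>
      obtain ⟨i', j, h1, h2, rfl⟩ := hs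
      exact Submodule.subset_span ⟨i + i', j, k, by omega, h2, hk, by ring⟩
    | zero => simp
    | add u w _ _ hu hw => rw [mul_add, add_mul]; exact add_mem hu hw
    | smul c u _ hu =>
      rw [mul_smul_comm, smul_mul_assoc]; exact Submodule.smul_mem _ _ hu
  have hy1 : ∀ n, ∀ b ∈ nSpan3 K x y z d e n, y * b ∈ nSpan3 K x y z d e (n + 1) := by
    intro n b hb
    induction hb using Submodule.span_induction with
    | mem t ht =>
      obtain ⟨i, j, k, h1, h2, hk, rfl⟩ := ht
      by_cases h3 : j + 1 < d
      · exact Submodule.subset_span ⟨i, j + 1, k, by omega, h3, hk, by ring⟩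
      · have h4 : j + 1 = d := by omega
        have := hyd i k hk _ hy
        rw [show y * (x ^ i * y ^ j * z ^ k) = x ^ i * y ^ (j + 1) * z ^ k by ring, h4]
        exact hm _ _ (by omega) this
    | zero => simp
    | add u w _ _ hu hw => rw [mul_add]; exact add_mem hu hw
    | smul c u _ hu => rw [mul_smul_comm]; exact Submodule.smul_mem _ _ hu
  have hpow : ∀ w : B, (∀ n, ∀ b ∈ nSpan3 K x y z d e n, w * b ∈ nSpan3 K x y z d e (n + 1)) →
      ∀ s n, ∀ b ∈ nSpan3 K x y z d e n, w ^ s * b ∈ nSpan3 K x y z d e (n + s) := by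
    intro w hw s
    induction s with
    | zero => intro n b hb; simpa using hb
    | succ s ih =>
      intro n b hb
      have := hw _ _ (ih n b hb)
      rwa [← mul_assoc, ← pow_succ'] at this
  have h0 : (1 : B) ∈ nSpan3 K x y z d e 0 := by
    rcases Nat.eq_zero_or_pos e with rfl | he
    · simpa using hz
    · exact Submodule.subset_span ⟨0, 0, 0, by simp, hd, he, by simp⟩
  refine filt_le_of (nSpan3 K x y z d e) h0 (fun n => hm _ _ (by omega)) ?_ n
  rintro n s (rfl | rfl | hs) b hb
  · exact hx n b hb
  · exact hy1 n b hb
  · rw [Set.mem_singleton_iff] at hs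
    subst hs
    induction hb using Submodule.span_induction with
    | mem t ht =>
      obtain ⟨i, j, k, h1, h2, hk, rfl⟩ := ht
      by_cases h3 : k + 1 < e
      · exact Submodule.subset_span ⟨i, j, k + 1, by omega, h2, h3, by ring⟩
      · have h4 : k + 1 = e := by omega
        have := hpow x hx i _ _ (hpow y hy1 j _ _ hz)
        rw [show s * (x ^ i * y ^ j * s ^ k) = x ^ i * (y ^ j * s ^ (k + 1)) by ring, h4]
        exact hm _ _ (by omega) this
    | zero => simp
    | add u w _ _ hu hw => rw [mul_add]; exact add_mem hu hw
    | smul c u _ hu => rw [mul_smul_comm]; exact Submodule.smul_mem _ _ hu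

theorem span_range_bound {ι : Type*} [Fintype ι] (v : ι → B) (V : Submodule K B)
    (h : V ≤ Submodule.span K (Set.range v)) :
    FiniteDimensional K V ∧ Module.finrank K V ≤ Fintype.card ι := by
  have : FiniteDimensional K (Submodule.span K (Set.range v)) :=
    FiniteDimensional.span_of_finite K (Set.finite_range v)
  exact ⟨Submodule.finiteDimensional_of_le h,
    (Submodule.finrank_mono h).trans (finrank_range_le_card v)⟩

theorem nSpan_bound (x y : B) (d n : ℕ) (V : Submodule K B) (h : V ≤ nSpan K x y d n) :
    FiniteDimensional K V ∧ Module.finrank K V ≤ d * (n + 1) := by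
  have := span_range_bound (fun q : Fin d × Fin (n + 1) => x ^ q.2.1 * y ^ q.1.1) V
    (h.trans (Submodule.span_mono (by
      rintro _ ⟨i, j, h1, h2, rfl⟩
      exact ⟨(⟨j, h2⟩, ⟨i, by omega⟩), rfl⟩)))
  simpa using this

theorem nSpan3_bound (x y z : B) (d e n : ℕ) (V : Submodule K B) (h : V ≤ nSpan3 K x y z d e n) :
    FiniteDimensional K V ∧ Module.finrank K V ≤ d * e * (n + 1) := by
  have := span_range_bound
    (fun q : (Fin d × Fin e) × Fin (n + 1) => x ^ q.2.1 * y ^ q.1.1.1 * z ^ q.1.2.1) V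
    (h.trans (Submodule.span_mono (by
      rintro _ ⟨i, j, k, h1, h2, h3, rfl⟩
      exact ⟨((⟨j, h2⟩, ⟨k, h3⟩), ⟨i, by omega⟩), rfl⟩)))
  simpa using this
end conc

section conc2
variable {K B : Type*} [Field K] [CommRing B] [Algebra K B]

theorem fin2_prod (v : Fin 2 → B) (m : Fin 2 →₀ ℕ) :
    (m.prod fun i k => v i ^ k) = v 0 ^ m 0 * v 1 ^ m 1 := by
  rw [Finsupp.prod_fintype _ _ (by simp), Fin.prod_univ_two]

theorem fin2_aeval (a b : B) (f : MvPolynomial (Fin 2) K) :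
    MvPolynomial.aeval ![a, b] f = ∑ m ∈ f.support, f.coeff m • (a ^ m 0 * b ^ m 1) := by
  rw [MvPolynomial.aeval_def, MvPolynomial.eval₂_eq]
  refine Finset.sum_congr rfl fun m _ => ?_
  rw [← Algebra.smul_def]
  congr 1
  exact fin2_prod ![a, b] m

theorem fin2_top {R : Type*} [CommRing R] {f : MvPolynomial (Fin 2) R} {d : ℕ}
    (hd : f.totalDegree ≤ d) {m : Fin 2 →₀ ℕ} (hm : f.coeff m ≠ 0)
    (hne : m ≠ Finsupp.single 1 d) : m 0 + m 1 ≤ d ∧ m 1 < d := by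
  have h1 := (fin2_degree_le hm).trans hd
  refine ⟨h1, ?_⟩
  by_contra h2
  apply hne
  have h3 : m 1 = d := by omega
  have h4 : m 0 = 0 := by omega
  rw [fin2_finsupp_eq m, h3, h4]; simp

theorem mem_of_rel {N : Submodule K B} {u r : B} {c : K} (hc : c ≠ 0) (hr : r ∈ N)
    (h : c • u + r = 0) : u ∈ N := by
  have h1 : c • u ∈ N := by
    rw [eq_neg_of_add_eq_zero_left h]; exact N.neg_mem hr
  exact (N.smul_mem_iff hc).1 h1

theorem rel_y (f : MvPolynomial (Fin 2) K) (d : ℕ) (hd : f.totalDegree ≤ d)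
    (hc : f.coeff (Finsupp.single 1 d) ≠ 0) (x y : B) (h : MvPolynomial.aeval ![x, y] f = 0) :
    y ^ d ∈ nSpan K x y d d := by
  classical
  rw [fin2_aeval, ← Finset.add_sum_erase _ _ (MvPolynomial.mem_support_iff.2 hc)] at h
  have e1 : (x ^ (Finsupp.single (1 : Fin 2) d) 0 * y ^ (Finsupp.single (1 : Fin 2) d) 1) = y ^ d := by
    simp
  rw [e1] at h
  refine mem_of_rel hc (Submodule.sum_mem _ fun m hm => Submodule.smul_mem _ _ ?_) h
  rw [Finset.mem_erase, MvPolynomial.mem_support_iff] at hm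
  obtain ⟨h1, h2⟩ := fin2_top hd hm.2 hm.1
  exact Submodule.subset_span ⟨m 0, m 1, h1, h2, rfl⟩

/-- The divided difference of `f` in the second variable. -/
noncomputable def gVal (f : MvPolynomial (Fin 2) K) (x y z : B) : B :=
  ∑ m ∈ f.support, f.coeff m • (x ^ m 0 * ∑ a ∈ Finset.range (m 1), y ^ a * z ^ (m 1 - 1 - a))

theorem gVal_mul (f : MvPolynomial (Fin 2) K) (x y z : B) :
    gVal f x y z * (y - z) =
      MvPolynomial.aeval ![x, y] f - MvPolynomial.aeval ![x, z] f := by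
  rw [fin2_aeval, fin2_aeval, gVal, Finset.sum_mul, ← Finset.sum_sub_distrib]
  refine Finset.sum_congr rfl fun m _ => ?_
  rw [smul_mul_assoc, mul_assoc, (Commute.all y z).geom_sum₂_mul, mul_sub, smul_sub]

theorem gVal_map {R : Type*} [CommRing R] [Algebra K R] (φ : B →ₐ[K] R)
    (f : MvPolynomial (Fin 2) K) (x y z : B) : φ (gVal f x y z) = gVal f (φ x) (φ y) (φ z) := by
  simp [gVal, map_sum]

theorem rel_z (f : MvPolynomial (Fin 2) K) (e : ℕ) (hd : f.totalDegree ≤ e + 1)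
    (hc : f.coeff (Finsupp.single 1 (e + 1)) ≠ 0) (x y z : B) (h : gVal f x y z = 0) :
    z ^ e ∈ nSpan3 K x y z (e + 1) e e := by
  classical
  rw [gVal, ← Finset.add_sum_erase _ _ (MvPolynomial.mem_support_iff.2 hc)] at h
  have e1 : (x ^ (Finsupp.single (1 : Fin 2) (e + 1)) 0 *
      ∑ a ∈ Finset.range (Finsupp.single (1 : Fin 2) (e + 1) 1),
        y ^ a * z ^ (Finsupp.single (1 : Fin 2) (e + 1) 1 - 1 - a)) =
      z ^ e + ∑ a ∈ Finset.range e, y ^ (a + 1) * z ^ (e - (a + 1)) := by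
    simp [Finset.sum_range_succ']
    ring
  rw [e1, smul_add, add_assoc] at h
  refine mem_of_rel hc (add_mem ?_ ?_) h
  · refine Submodule.smul_mem _ _ (Submodule.sum_mem _ fun a ha => ?_)
    rw [Finset.mem_range] at ha
    exact Submodule.subset_span ⟨0, a + 1, e - (a + 1), by omega, by omega, by omega, by simp⟩
  refine Submodule.sum_mem _ fun m hm => Submodule.smul_mem _ _ ?_
  rw [Finset.mul_sum]
  refine Submodule.sum_mem _ fun a ha => ?_
  rw [Finset.mem_range] at ha
  rw [Finset.mem_erase, MvPolynomial.mem_support_iff] at hm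
  obtain ⟨h1, h2⟩ := fin2_top hd hm.2 hm.1
  exact Submodule.subset_span ⟨m 0, a, m 1 - 1 - a, by omega, by omega, by omega, by ring⟩

theorem exists_second (K : Type) [Field K] (f : MvPolynomial (Fin 2) K) :
    ∃ (R : Type) (_ : CommRing R) (_ : Algebra K R) (x y z : R),
      MvPolynomial.aeval ![x, y] f = 0 ∧ gVal f x y z = 0 ∧
      ∀ a b c : K, MvPolynomial.aeval ![a, b] f = 0 → gVal f a b c = 0 →
        ∃ ψ : R →ₐ[K] K, ψ x = a ∧ ψ y = b ∧ ψ z = c := by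
  let P := MvPolynomial (Fin 3) K
  let X : Fin 3 → P := MvPolynomial.X
  let I : Ideal P := Ideal.span {MvPolynomial.aeval ![X 0, X 1] f, gVal f (X 0) (X 1) (X 2)}
  let mk : P →ₐ[K] P ⧸ I := Ideal.Quotient.mkₐ K I
  have hcomp : ∀ {S T : Type} [CommRing S] [Algebra K S] [CommRing T] [Algebra K T]
      (φ : S →ₐ[K] T) (a b : S),
      φ (MvPolynomial.aeval ![a, b] f) = MvPolynomial.aeval ![φ a, φ b] f := by
    intro S T _ _ _ _ φ a b
    simp [fin2_aeval, map_sum]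
  refine ⟨P ⧸ I, inferInstance, inferInstance, mk (X 0), mk (X 1), mk (X 2), ?_, ?_, ?_⟩
  · rw [← hcomp mk]
    exact Ideal.Quotient.eq_zero_iff_mem.2 (Ideal.subset_span (by simp))
  · rw [← gVal_map mk]
    exact Ideal.Quotient.eq_zero_iff_mem.2 (Ideal.subset_span (by simp))
  · intro a b c h1 h2
    let ev : P →ₐ[K] K := MvPolynomial.aeval ![a, b, c]
    have e0 : ev (X 0) = a := MvPolynomial.aeval_X _ _
    have e1 : ev (X 1) = b := MvPolynomial.aeval_X _ _
    have e2 : ev (X 2) = c := MvPolynomial.aeval_X _ _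
    have hI : ∀ r, r ∈ I → ev r = 0 := by
      have : I ≤ RingHom.ker ev := by
        refine Ideal.span_le.2 ?_
        rintro r (rfl | hr)
        · change ev _ = 0
          rw [hcomp ev, e0, e1, h1]
        · rw [Set.mem_singleton_iff] at hr
          subst hr
          change ev _ = 0
          rw [gVal_map ev, e0, e1, e2, h2]
      exact fun r hr => this hr
    refine ⟨Ideal.Quotient.liftₐ I ev hI, ?_, ?_, ?_⟩
    · exact e0
    · exact e1
    · exact e2

theorem degreeOf_le_of_mul {f q : MvPolynomial (Fin 2) K} (i : Fin 2) (h : f * q ≠ 0) :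
    f.degreeOf i ≤ (f * q).degreeOf i := by
  have h1 : f ≠ 0 := left_ne_zero_of_mul h
  have h2 : q ≠ 0 := right_ne_zero_of_mul h
  rw [MvPolynomial.degreeOf_mul_eq h1 h2]; omega

theorem curve_li (f : MvPolynomial (Fin 2) K) (e : ℕ)
    (hc : f.coeff (Finsupp.single 1 (e + 1)) ≠ 0) (x y : B)
    (hker : ∀ P : MvPolynomial (Fin 2) K, MvPolynomial.aeval ![x, y] P = 0 ↔ f ∣ P) :
    LinearIndependent K (fun q : ℕ × Fin (e + 1) => x ^ q.1 * y ^ q.2.1) := by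
  let w : ℕ × Fin (e + 1) → MvPolynomial (Fin 2) K := fun q =>
    MvPolynomial.monomial (Finsupp.single 0 q.1 + Finsupp.single 1 q.2.1) 1
  have hw : LinearIndependent K w := by
    have := (MvPolynomial.basisMonomials (Fin 2) K).linearIndependent
    have h2 := this.comp (fun q : ℕ × Fin (e + 1) =>
      (Finsupp.single 0 q.1 + Finsupp.single 1 q.2.1 : Fin 2 →₀ ℕ)) (by
        rintro ⟨i, j⟩ ⟨i', j'⟩ h
        have h0 := DFunLike.congr_fun h 0
        have h1 := DFunLike.congr_fun h 1
        simp at h0 h1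
        exact Prod.ext h0 (Fin.ext h1))
    have e1 : w = (MvPolynomial.basisMonomials (Fin 2) K) ∘ (fun q : ℕ × Fin (e + 1) =>
      (Finsupp.single 0 q.1 + Finsupp.single 1 q.2.1 : Fin 2 →₀ ℕ)) := by
      funext q
      simp [w]
    rw [e1]
    exact h2
  have hdeg : ∀ P ∈ Submodule.span K (Set.range w), P.degreeOf 1 ≤ e := by
    intro P hP
    induction hP using Submodule.span_induction with
    | mem s hs =>
      obtain ⟨q, rfl⟩ := hs
      simp only [w]
      rw [MvPolynomial.degreeOf_monomial_eq _ _ one_ne_zero]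
      simp
      omega
    | zero => simp
    | add u v _ _ hu hv => exact (MvPolynomial.degreeOf_add_le _ _ _).trans (max_le hu hv)
    | smul c u _ hu =>
      rw [MvPolynomial.smul_eq_C_mul]
      exact (MvPolynomial.degreeOf_C_mul_le _ _ _).trans hu
  have := hw.map (f := (MvPolynomial.aeval (R := K) ![x, y]).toLinearMap) ?_
  · have e1 : (fun q : ℕ × Fin (e + 1) => x ^ q.1 * y ^ q.2.1) =
        (MvPolynomial.aeval (R := K) ![x, y]).toLinearMap ∘ w := by
      funext q
      simp only [w, Function.comp_apply, AlgHom.toLinearMap_apply, MvPolynomial.aeval_monomial,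
        fin2_prod]
      simp
    rw [e1]
    exact this
  · rw [Submodule.disjoint_def]
    intro P hP hP0
    rw [LinearMap.mem_ker] at hP0
    obtain ⟨q, rfl⟩ := (hker P).1 hP0
    by_contra hne
    have h1 := degreeOf_le_of_mul 1 hne
    have h2 : e + 1 ≤ f.degreeOf 1 := by
      have := MvPolynomial.monomial_le_degreeOf 1 (MvPolynomial.mem_support_iff.2 hc)
      simpa using this
    have := hdeg _ hP
    omega
end conc2

section conc3

theorem exists_curve (K : Type) [Field K] (f : MvPolynomial (Fin 2) K) (hf : Irreducible f) :
    ∃ (B : Type) (_ : CommRing B) (_ : IsDomain B) (_ : Algebra K B) (x y : B),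
      Function.Surjective (MvPolynomial.aeval (R := K) ![x, y]) ∧
      ∀ P : MvPolynomial (Fin 2) K, MvPolynomial.aeval ![x, y] P = 0 ↔ f ∣ P := by
  let I : Ideal (MvPolynomial (Fin 2) K) := Ideal.span {f}
  let mk : MvPolynomial (Fin 2) K →ₐ[K] MvPolynomial (Fin 2) K ⧸ I := Ideal.Quotient.mkₐ K I
  have hI : I.IsPrime := (Ideal.span_singleton_prime hf.ne_zero).2 hf.prime
  have e1 : MvPolynomial.aeval (R := K) ![mk (MvPolynomial.X 0), mk (MvPolynomial.X 1)] = mk := by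
    ext i
    fin_cases i <;> simp
  refine ⟨MvPolynomial (Fin 2) K ⧸ I, inferInstance, Ideal.Quotient.isDomain I, inferInstance,
    mk (MvPolynomial.X 0), mk (MvPolynomial.X 1), ?_, ?_⟩
  · rw [e1]; exact Ideal.Quotient.mkₐ_surjective K I
  · intro P
    rw [e1]
    exact Ideal.Quotient.eq_zero_iff_mem.trans Ideal.mem_span_singleton

variable {K B : Type*} [Field K] [CommRing B] [Algebra K B]

theorem curve_filt (f : MvPolynomial (Fin 2) K) (e : ℕ) (hd : f.totalDegree ≤ e + 1)
    (hc : f.coeff (Finsupp.single 1 (e + 1)) ≠ 0) (x y : B)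
    (hsurj : Function.Surjective (MvPolynomial.aeval (R := K) ![x, y]))
    (hker : ∀ P : MvPolynomial (Fin 2) K, MvPolynomial.aeval ![x, y] P = 0 ↔ f ∣ P) :
    CurveFilt (Submodule.span K {1, x, y}) (e + 1) := by
  have hy := rel_y f (e + 1) hd hc x y ((hker f).2 dvd_rfl)
  have hb := fun n => nSpan_bound x y (e + 1) n _ (nSpan_filt (K := K) x y (e + 1) (by omega) hy n)
  have h1 : (1 : B) ∈ Submodule.span K {1, x, y} := Submodule.subset_span (by simp)
  have hx : x ∈ Submodule.span K {1, x, y} := Submodule.subset_span (by simp)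
  have hy : y ∈ Submodule.span K {1, x, y} := Submodule.subset_span (by simp)
  refine ⟨h1, fun n => (hb n).1, ?_, fun n => (hb n).2, ?_⟩
  · intro b
    obtain ⟨P, rfl⟩ := hsurj b
    refine ⟨P.totalDegree, aeval_mem_filt _ h1 ?_ P _ le_rfl⟩
    intro i
    fin_cases i
    · exact hx
    · exact hy
  · intro n
    have li := (curve_li f e hc x y hker).comp
      (fun q : Fin (n + 1) × Fin (e + 1) => ((q.1 : ℕ), q.2)) (by
        rintro ⟨i, j⟩ ⟨i', j'⟩ h
        simp only [Prod.mk.injEq] at h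
        exact Prod.ext (Fin.ext h.1) h.2)
    have h2 := finrank_span_eq_card li
    have := (hb (n + (e + 1))).1
    have h3 := Submodule.finrank_mono
      (s := Submodule.span K (Set.range ((fun q : ℕ × Fin (e + 1) => x ^ q.1 * y ^ q.2.1) ∘
        (fun q : Fin (n + 1) × Fin (e + 1) => ((q.1 : ℕ), q.2)))))
      (t := (Submodule.span K {1, x, y}) ^ (n + (e + 1))) (Submodule.span_le.2 (by
        rintro _ ⟨q, rfl⟩
        refine pow_mono_of_one h1 (m := q.1.1 + q.2.1) (by omega) ?_
        rw [pow_add]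
        exact Submodule.mul_mem_mul (Submodule.pow_mem_pow _ hx _) (Submodule.pow_mem_pow _ hy _)))
    rw [h2] at h3
    simpa [mul_comm] using h3

theorem pderiv_totalDegree {R : Type*} [CommRing R] (f : MvPolynomial (Fin 2) R) (e : ℕ)
    (hd : f.totalDegree ≤ e + 1) (i : Fin 2) : (MvPolynomial.pderiv i f).totalDegree ≤ e := by
  refine Finset.sup_le ?_
  intro m hm
  rw [MvPolynomial.mem_support_iff, MvPolynomial.coeff_pderiv] at hm
  have := (fin2_degree_le (left_ne_zero_of_mul hm)).trans hd
  rw [Finsupp.sum_fintype _ _ (by simp), Fin.sum_univ_two]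
  fin_cases i <;> simp at this <;> omega

theorem exists_deriv (f : MvPolynomial (Fin 2) K) (e : ℕ) (hd : f.totalDegree ≤ e + 1) (x y : B)
    (hsurj : Function.Surjective (MvPolynomial.aeval (R := K) ![x, y]))
    (hker : ∀ P : MvPolynomial (Fin 2) K, MvPolynomial.aeval ![x, y] P = 0 ↔ f ∣ P) :
    ∃ D : Derivation K B B, D x = MvPolynomial.aeval ![x, y] (MvPolynomial.pderiv 1 f) ∧
      ∀ b ∈ Submodule.span K {1, x, y}, D b ∈ (Submodule.span K {1, x, y}) ^ (e + 1) := by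
  let P := MvPolynomial (Fin 2) K
  let D0 : Derivation K P P := (MvPolynomial.pderiv 1 f) • MvPolynomial.pderiv 0 -
    (MvPolynomial.pderiv 0 f) • MvPolynomial.pderiv 1
  have hD0 : ∀ q, D0 q = MvPolynomial.pderiv 1 f * MvPolynomial.pderiv 0 q -
      MvPolynomial.pderiv 0 f * MvPolynomial.pderiv 1 q := fun q => rfl
  have hf0 : MvPolynomial.aeval (R := K) ![x, y] f = 0 := (hker f).2 dvd_rfl
  let D : Derivation K B B := Derivation.liftOfSurjective hsurj (d := D0) (by
    intro q hq
    obtain ⟨r, rfl⟩ := (hker q).1 hq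
    rw [D0.leibniz, hD0 f]
    simp only [smul_eq_mul, map_add, map_mul, map_sub, hf0]
    ring)
  have hD : ∀ q, D (MvPolynomial.aeval ![x, y] q) = MvPolynomial.aeval ![x, y] (D0 q) :=
    fun q => Derivation.liftOfSurjective_apply hsurj _ q
  have hx : D x = MvPolynomial.aeval ![x, y] (MvPolynomial.pderiv 1 f) := by
    have := hD (MvPolynomial.X 0)
    rw [hD0] at this
    simpa [MvPolynomial.pderiv_X] using this
  have hy : D y = - MvPolynomial.aeval ![x, y] (MvPolynomial.pderiv 0 f) := by
    have := hD (MvPolynomial.X 1)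
    rw [hD0] at this
    simpa [MvPolynomial.pderiv_X] using this
  have hm : ∀ i, MvPolynomial.aeval ![x, y] (MvPolynomial.pderiv i f) ∈
      (Submodule.span K {1, x, y}) ^ (e + 1) := by
    intro i
    refine aeval_mem_filt _ (Submodule.subset_span (by simp)) ?_ _ _
      ((pderiv_totalDegree f e hd i).trans (by omega))
    intro i
    fin_cases i
    · exact Submodule.subset_span (by simp)
    · exact Submodule.subset_span (by simp)
  refine ⟨D, hx, ?_⟩
  intro b hb
  induction hb using Submodule.span_induction with
  | mem s hs =>
    rcases hs with rfl | rfl | hs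
    · simp
    · rw [hx]; exact hm 1
    · rw [Set.mem_singleton_iff] at hs
      rw [hs, hy]; exact neg_mem (hm 0)
  | zero => simp
  | add u w _ _ hu hw => rw [map_add]; exact add_mem hu hw
  | smul c u _ hu => rw [D.map_smul]; exact Submodule.smul_mem _ _ hu

/-- Homomorphisms out of the coordinate ring. -/
theorem exists_lift {S : Type*} [CommRing S] [Algebra K S] (f : MvPolynomial (Fin 2) K) (x y : B)
    (hsurj : Function.Surjective (MvPolynomial.aeval (R := K) ![x, y]))
    (hker : ∀ P : MvPolynomial (Fin 2) K, MvPolynomial.aeval ![x, y] P = 0 ↔ f ∣ P)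
    (a b : S) (hab : MvPolynomial.aeval ![a, b] f = 0) :
    ∃ φ : B →ₐ[K] S, φ x = a ∧ φ y = b ∧ ∀ P : MvPolynomial (Fin 2) K,
      φ (MvPolynomial.aeval ![x, y] P) = MvPolynomial.aeval ![a, b] P := by
  have h : ∀ P : MvPolynomial (Fin 2) K,
      AlgHom.liftOfSurjective (MvPolynomial.aeval (R := K) ![x, y]) hsurj
      (MvPolynomial.aeval (R := K) ![a, b]) (by
        intro q hq
        obtain ⟨r, rfl⟩ := (hker q).1 hq
        simp [hab]) (MvPolynomial.aeval ![x, y] P) = MvPolynomial.aeval ![a, b] P := by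
    intro P
    rw [AlgHom.liftOfSurjective_apply]
  refine ⟨_, ?_, ?_, h⟩
  · simpa using h (MvPolynomial.X 0)
  · simpa using h (MvPolynomial.X 1)

theorem algHom_ext2 {S : Type*} [CommRing S] [Algebra K S] (x y : B)
    (hsurj : Function.Surjective (MvPolynomial.aeval (R := K) ![x, y])) (φ ψ : B →ₐ[K] S)
    (hx : φ x = ψ x) (hy : φ y = ψ y) : ∀ b, φ b = ψ b := by
  intro b
  obtain ⟨P, rfl⟩ := hsurj b
  simp only [fin2_aeval, map_sum, map_smul, map_mul, map_pow, hx, hy]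
end conc3

section conc4

theorem pderiv_ne_zero_mod {K : Type*} [Field K] (f : MvPolynomial (Fin 2) K) (e : ℕ)
    (hd : f.totalDegree ≤ e + 1)
    (hc : f.coeff (Finsupp.single 1 (e + 1)) ≠ 0) (he : ((e + 1 : ℕ) : K) ≠ 0) :
    ¬ f ∣ MvPolynomial.pderiv 1 f := by
  rintro ⟨q, hq⟩
  have hne : MvPolynomial.pderiv 1 f ≠ 0 := by
    intro h0
    have := congrArg (MvPolynomial.coeff (Finsupp.single 1 e)) h0
    rw [MvPolynomial.coeff_pderiv, ← Finsupp.single_add, MvPolynomial.coeff_zero] at this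
    refine mul_ne_zero hc ?_ this
    simpa using he
  have h1 := pderiv_totalDegree f e hd 1
  have hf : f ≠ 0 := by rintro rfl; simp at hc
  have hq0 : q ≠ 0 := by rintro rfl; exact hne (by rw [hq, mul_zero])
  rw [hq, MvPolynomial.totalDegree_mul_of_isDomain hf hq0] at h1
  have h2 := fin2_degree_le hc
  simp at h2
  omega

theorem bad_bound {K : Type} [Field K] (f : MvPolynomial (Fin 2) K) (hf : Irreducible f) (e : ℕ)
    (hd : f.totalDegree ≤ e + 1) (hc : f.coeff (Finsupp.single 1 (e + 1)) ≠ 0)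
    (he : ((e + 1 : ℕ) : K) ≠ 0) (T : Finset (K × K))
    (hT : ∀ t ∈ T, MvPolynomial.aeval ![t.1, t.2] f = 0 ∧
      MvPolynomial.aeval ![t.1, t.2] (MvPolynomial.pderiv 1 f) = 0) :
    T.card ≤ (e + 1) * (e + 1) + (e + 1) * (e + 1) := by
  obtain ⟨B, _, _, _, x, y, hsurj, hker⟩ := exists_curve K f hf
  have hE := curve_filt f e hd hc x y hsurj hker
  obtain ⟨D, hDx, hD⟩ := exists_deriv f e hd x y hsurj hker
  choose χ hχx hχy hχ using fun t : T => exists_lift f x y hsurj hker t.1.1 t.1.2 (hT t.1 t.2).1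
  have := zero_bound D hE x (D x) (e + 1) 1 ?_ (hD x (Submodule.subset_span (by simp))) χ ?_ ?_ ?_
  · simpa using this
  · rw [hDx, Ne, hker]
    exact pderiv_ne_zero_mod f e hd hc he
  · intro s t h
    refine Subtype.ext (Prod.ext ?_ ?_)
    · rw [← hχx, ← hχx, h]
    · rw [← hχy, ← hχy, h]
  · intro i l hl
    obtain rfl : l = 0 := by omega
    change χ i (D x) = 0
    rw [hDx, hχ]
    exact (hT i.1 i.2).2
  · intro i l hl
    obtain rfl : l = 0 := by omega
    simp

theorem aeval_frob {p : ℕ} [Fact p.Prime] {S : Type*} [CommRing S] [Algebra (ZMod p) S]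
    (f0 : MvPolynomial (Fin 2) (ZMod p)) (a b : S) :
    MvPolynomial.aeval ![a ^ p, b ^ p] f0 = (MvPolynomial.aeval ![a, b] f0) ^ p := by
  rw [← map_pow, ← MvPolynomial.expand_zmod, MvPolynomial.expand, MvPolynomial.bind₁]
  have : (MvPolynomial.aeval ![a ^ p, b ^ p] : MvPolynomial (Fin 2) (ZMod p) →ₐ[ZMod p] S) =
    (MvPolynomial.aeval ![a, b]).comp
      (MvPolynomial.aeval fun i => (MvPolynomial.X i : MvPolynomial (Fin 2) (ZMod p)) ^ p) := by
    ext i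
    fin_cases i <;> simp
  rw [this]; rfl

theorem good_bound {p : ℕ} [Fact p.Prime] {K : Type} [Field K] [IsAlgClosed K] [Algebra (ZMod p) K]
    (f0 : MvPolynomial (Fin 2) (ZMod p)) (f : MvPolynomial (Fin 2) K)
    (hf0 : f = MvPolynomial.map (algebraMap (ZMod p) K) f0)
    (hf : Irreducible f) (e m : ℕ)
    (hd : f.totalDegree ≤ e + 1) (hc : f.coeff (Finsupp.single 1 (e + 1)) ≠ 0) (A0 : ℕ)
    (hA0 : A0 = m * e * (m * e + 2 * (e + 1) + (e + 1) * m * (e + 1)))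
    (hp : (e + 1) * (e + 1) * (A0 + (e + 1) + (e + 1)) < p) (hp2 : (e + 1) * m ≤ p)
    (T : Finset (K × K))
    (hT : ∀ t ∈ T, MvPolynomial.aeval ![t.1, t.2] f = 0 ∧ t.1 ^ p = t.1 ∧ t.2 ^ p ≠ t.2 ∧
      MvPolynomial.aeval ![t.1, t.2] (MvPolynomial.pderiv 1 f) ≠ 0) :
    T.card * ((e + 1) * m) ≤
      (e + 1) * (A0 + (e + 1) + p * (m * e + (e + 1))) + (e + 1) * (e + 1) := by
  have hpp : p.Prime := Fact.out
  have hcharK : CharP K p := charP_of_injective_algebraMap (algebraMap (ZMod p) K).injective p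
  obtain ⟨B, _, _, _, x, y, hsurj, hker⟩ := exists_curve K f hf
  have hE := curve_filt f e hd hc x y hsurj hker
  obtain ⟨D, hDx, hD⟩ := exists_deriv f e hd x y hsurj hker
  obtain ⟨R, _, _, x', y', z', hxy', hg', hψ⟩ := exists_second K f
  have hxz' : MvPolynomial.aeval ![x', z'] f = 0 := by
    have := gVal_mul f x' y' z'
    rw [hg', hxy', zero_mul, zero_sub] at this
    exact neg_eq_zero.1 this.symm
  have hyd := rel_y f (e + 1) hd hc x' y' hxy'
  have hze := rel_z f e hd hc x' y' z' hg'
  have hb3 := fun n => nSpan3_bound x' y' z' (e + 1) e n _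
    (nSpan3_filt (K := K) x' y' z' (e + 1) e (by omega) hyd hze n)
  have hf_frob : ∀ {S : Type} [CommRing S] [Algebra K S] (a b : S),
      MvPolynomial.aeval ![a, b] f = 0 → MvPolynomial.aeval ![a ^ p, b ^ p] f = 0 := by
    intro S _ _ a b hab
    let _ : Algebra (ZMod p) S := ((algebraMap K S).comp (algebraMap (ZMod p) K)).toAlgebra
    have : IsScalarTower (ZMod p) K S := IsScalarTower.of_algebraMap_eq fun _ => rfl
    have hp0 : p ≠ 0 := hpp.ne_zero
    rw [hf0, MvPolynomial.aeval_map_algebraMap] at hab ⊢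
    rw [aeval_frob, hab, zero_pow hp0]
  obtain ⟨frob, hfx, hfy, -⟩ := exists_lift f x y hsurj hker (x ^ p) (y ^ p)
    (hf_frob x y ((hker f).2 dvd_rfl))
  obtain ⟨i1, h1x, h1y, -⟩ := exists_lift f x y hsurj hker x' y' hxy'
  obtain ⟨i2, h2x, h2z, -⟩ := exists_lift f x y hsurj hker x' z' hxz'
  have hBchar : (p : B) = 0 := by
    rw [← map_natCast (algebraMap K B) p, CharP.cast_eq_zero, map_zero]
  have hspan : ∀ {S : Type} [CommRing S] [Algebra K S] (φ : B →ₐ[K] S) (N : Submodule K S),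
      1 ∈ N → φ x ∈ N → φ y ∈ N → ∀ b ∈ Submodule.span K {1, x, y}, φ b ∈ N := by
    intro S _ _ φ N k1 k2 k3 b hb
    have : Submodule.span K {1, x, y} ≤ N.comap φ.toLinearMap := by
      refine Submodule.span_le.2 ?_
      rintro s (rfl | rfl | hs)
      · change φ 1 ∈ N
        rwa [map_one]
      · exact k2
      · rw [Set.mem_singleton_iff] at hs
        rw [hs]; exact k3
    exact this hb
  choose χ hχx hχy hχ using fun t : T => exists_lift f x y hsurj hker t.1.1 t.1.2 (hT t.1 t.2).1
  have := points_bound D (E' := Submodule.span K {1, x', y', z'}) hE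
    (have : Algebra.FiniteType K B := Algebra.FiniteType.of_surjective _ hsurj
     fun u v => tensor_noZeroDivisors u v) x
    (Submodule.subset_span (by simp)) ?_ hD (Submodule.subset_span (by simp))
    (fun n => (hb3 n).1) (fun n => (hb3 n).2) i1 i2 ?_ ?_ A0 hA0 hp frob hfx ?_ ?_ χ ?_ ?_ ?_
  · simpa using this
  · have li := (curve_li f e hc x y hker).comp (fun n : ℕ => (n, (0 : Fin (e + 1)))) (by
      intro i j h
      simpa using h)
    have e1 : (fun n : ℕ => x ^ n) = (fun q : ℕ × Fin (e + 1) => x ^ q.1 * y ^ q.2.1) ∘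
        (fun n : ℕ => (n, (0 : Fin (e + 1)))) := by
      funext n; simp
    rw [e1]; exact li
  · refine hspan i1 _ ?_ ?_ ?_
    · exact Submodule.subset_span (by simp)
    · rw [h1x]; exact Submodule.subset_span (by simp)
    · rw [h1y]; exact Submodule.subset_span (by simp)
  · refine hspan i2 _ ?_ ?_ ?_
    · exact Submodule.subset_span (by simp)
    · rw [h2x]; exact Submodule.subset_span (by simp)
    · rw [h2z]; exact Submodule.subset_span (by simp)
  · refine hspan frob _ ?_ ?_ ?_
    · exact pow_mono_of_one hE.one (Nat.zero_le p) (by rw [pow_zero]; exact Submodule.one_le.1 le_rfl)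
    · rw [hfx]; exact Submodule.pow_mem_pow _ (Submodule.subset_span (by simp)) _
    · rw [hfy]; exact Submodule.pow_mem_pow _ (Submodule.subset_span (by simp)) _
  · intro b
    obtain ⟨P, rfl⟩ := hsurj b
    simp only [fin2_aeval, map_sum, map_smul, map_mul, map_pow, hfx, hfy, D.leibniz]
    simp [hBchar]
  · intro s t h
    refine Subtype.ext (Prod.ext ?_ ?_)
    · rw [← hχx, ← hχx, h]
    · rw [← hχy, ← hχy, h]
  · intro t
    obtain ⟨k1, k2, k3, k4⟩ := hT t.1 t.2
    have k5 : gVal f t.1.1 t.1.2 (t.1.2 ^ p) = 0 := by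
      have h6 := gVal_mul f t.1.1 t.1.2 (t.1.2 ^ p)
      have h7 := hf_frob t.1.1 t.1.2 k1
      rw [k2] at h7
      rw [h7, k1, sub_zero] at h6
      rcases mul_eq_zero.1 h6 with h | h
      · exact h
      · exact absurd (sub_eq_zero.1 h).symm k3
    obtain ⟨ψ, e1, e2, e3⟩ := hψ t.1.1 t.1.2 (t.1.2 ^ p) k1 k5
    refine ⟨ψ, algHom_ext2 x y hsurj (ψ.comp i1) (χ t) ?_ ?_,
      algHom_ext2 x y hsurj (ψ.comp i2) ((χ t).comp frob) ?_ ?_⟩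
    · simp [h1x, e1, hχx]
    · simp [h1y, e2, hχy]
    · simp [h2x, e1, hχx, hfx, k2]
    · simp [h2z, e3, hχy, hfy]
  · intro t l hl
    refine mul_ne_zero ?_ (pow_ne_zero _ ?_)
    · rw [Ne, CharP.cast_eq_zero_iff K p, hpp.dvd_factorial]
      omega
    · rw [hDx, hχ]
      exact (hT t.1 t.2).2.2.2
end conc4

section conc5
open Polynomial in
theorem fiber_count {K : Type*} [Field K] [IsAlgClosed K] (f : MvPolynomial (Fin 2) K) (d : ℕ)
    (hd : f.totalDegree ≤ d) (hc : f.coeff (Finsupp.single 1 d) ≠ 0) (a : K) :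
    ∃ Z : Finset K, (∀ b, b ∈ Z ↔ MvPolynomial.aeval ![a, b] f = 0) ∧
      ((∀ b ∈ Z, MvPolynomial.aeval ![a, b] (MvPolynomial.pderiv 1 f) ≠ 0) → Z.card = d) := by
  classical
  let q : K[X] := MvPolynomial.aeval ![C a, X] f
  have hev : ∀ (P : MvPolynomial (Fin 2) K) (b : K),
      (MvPolynomial.aeval ![C a, X] P : K[X]).eval b = MvPolynomial.aeval ![a, b] P := by
    intro P b
    rw [fin2_aeval, fin2_aeval, eval_finsetSum]
    simp
  have hder' : ∀ P : MvPolynomial (Fin 2) K, derivative (MvPolynomial.aeval ![C a, X] P : K[X]) =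
      MvPolynomial.aeval ![C a, X] (MvPolynomial.pderiv 1 P) := by
    intro P
    induction P using MvPolynomial.induction_on with
    | C c => simp [Polynomial.algebraMap_eq]
    | add u v hu hv => simp only [map_add, hu, hv]
    | mul_X u i hu =>
      rw [map_mul, derivative_mul, hu, MvPolynomial.pderiv_mul, map_add, map_mul, map_mul]
      fin_cases i <;> simp [MvPolynomial.pderiv_X]
  have hder : derivative q = MvPolynomial.aeval ![C a, X] (MvPolynomial.pderiv 1 f) := hder' f
  have hcoef : q.coeff d = f.coeff (Finsupp.single 1 d) := by
    simp only [q]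
    rw [fin2_aeval, finsetSum_coeff,
      ← Finset.add_sum_erase _ _ (MvPolynomial.mem_support_iff.2 hc)]
    rw [Finset.sum_eq_zero]
    · simp
    · intro m hm
      rw [Finset.mem_erase, MvPolynomial.mem_support_iff] at hm
      obtain ⟨h1, h2⟩ := fin2_top hd hm.2 hm.1
      rw [← C_pow, coeff_smul, coeff_C_mul_X_pow, if_neg (by omega), smul_zero]
  have hdeg : q.natDegree = d := by
    refine natDegree_eq_of_le_of_coeff_ne_zero ?_ ?_
    · simp only [q]
      rw [fin2_aeval]
      refine natDegree_sum_le_of_forall_le _ _ fun m hm => ?_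
      refine (natDegree_smul_le _ _).trans ?_
      rw [← C_pow]
      refine (natDegree_C_mul_X_pow_le _ _).trans ?_
      have := (fin2_degree_le (MvPolynomial.mem_support_iff.1 hm)).trans hd
      omega
    · rw [hcoef]; exact hc
  have hq : q ≠ 0 := by
    intro h
    rw [h, coeff_zero] at hcoef
    exact hc hcoef.symm
  refine ⟨q.roots.toFinset, fun b => ?_, fun h => ?_⟩
  · rw [Multiset.mem_toFinset, mem_roots hq, IsRoot, hev]
  · have hn : q.roots.Nodup := by
      rw [Multiset.nodup_iff_count_le_one]
      intro b
      rw [count_roots]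
      by_contra h1
      rw [not_le, one_lt_rootMultiplicity_iff_isRoot hq] at h1
      refine h b (Multiset.mem_toFinset.2 ((mem_roots hq).2 h1.1)) ?_
      rw [← hev, ← hder]; exact h1.2
    rw [Multiset.toFinset_card_of_nodup hn, ← hdeg]
    exact (IsAlgClosed.splits q).natDegree_eq_card_roots.symm

theorem many_points (e : ℕ) : ∃ p0 : ℕ, ∀ (p : ℕ) [Fact p.Prime], p0 < p →
    ∀ f0 : MvPolynomial (Fin 2) (ZMod p),
      Irreducible (MvPolynomial.map (algebraMap (ZMod p) (AlgebraicClosure (ZMod p))) f0) →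
      f0.totalDegree ≤ e + 1 → f0.coeff (Finsupp.single 1 (e + 1)) ≠ 0 →
      ∀ T : Finset (ZMod p × ZMod p),
        (∀ t : ZMod p × ZMod p, MvPolynomial.aeval ![t.1, t.2] f0 = 0 → t ∈ T) →
        2 * (e + 1) < T.card := by
  classical
  let d := e + 1
  let m := 2 * d
  let A0 := m * e * (m * e + 2 * (e + 1) + (e + 1) * m * (e + 1))
  refine ⟨d * d * (A0 + d + d) + d * m + (4 * d * d + A0 + 2 * d + 4 * d ^ 3 + 4 * d ^ 4), ?_⟩
  intro p _ hp f0 hirr hdeg hcoef T hT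
  have hpp : p.Prime := Fact.out
  let K := AlgebraicClosure (ZMod p)
  let f : MvPolynomial (Fin 2) K := MvPolynomial.map (algebraMap (ZMod p) K) f0
  have hd : f.totalDegree ≤ d := (fin2_totalDegree_map_le _ _).trans hdeg
  have hc : f.coeff (Finsupp.single 1 d) ≠ 0 := by
    simp only [f, MvPolynomial.coeff_map]
    rwa [Ne, map_eq_zero]
  have hcharK : CharP K p := charP_of_injective_algebraMap (algebraMap (ZMod p) K).injective p
  have hd1 : 1 ≤ d := by simp [d]
  have hdp : d < p := by
    have : d ≤ 2 * d := by omega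
    omega
  have hdK : ((e + 1 : ℕ) : K) ≠ 0 := by
    rw [Ne, CharP.cast_eq_zero_iff K p]
    exact Nat.not_dvd_of_pos_of_lt (by omega) hdp
  choose Z hZ hZc using fiber_count f d hd hc
  let ι : ZMod p → K := algebraMap (ZMod p) K
  have hι : Function.Injective ι := (algebraMap (ZMod p) K).injective
  have hfrob : ∀ a : ZMod p, ι a ^ p = ι a := by
    intro a
    simp only [ι]
    rw [← map_pow, ZMod.pow_card]
  have hfix : ∀ b : K, b ^ p = b → ∃ a, ι a = b := by
    intro b hb
    have h1 := (Subfield.mem_bot_iff_pow_eq_self K p).2 hb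
    exact (bot_le : (⊥ : Subfield K) ≤ (algebraMap (ZMod p) K).fieldRange) h1
  let U : Finset (K × K) := (Finset.univ : Finset (ZMod p)).biUnion fun a =>
    (Z (ι a)).image fun b => (ι a, b)
  have hU : ∀ u, u ∈ U ↔ (∃ a, ι a = u.1) ∧ MvPolynomial.aeval ![u.1, u.2] f = 0 := by
    rintro ⟨u, v⟩
    simp only [U, Finset.mem_biUnion, Finset.mem_univ, true_and, Finset.mem_image, hZ, Prod.mk.injEq]
    constructor
    · rintro ⟨a, b, hb, rfl, rfl⟩
      exact ⟨⟨a, rfl⟩, hb⟩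
    · rintro ⟨⟨a, rfl⟩, h⟩
      exact ⟨a, v, h, rfl, rfl⟩
  have hUcard : U.card = ∑ a : ZMod p, (Z (ι a)).card := by
    rw [Finset.card_biUnion]
    · refine Finset.sum_congr rfl fun a _ => Finset.card_image_of_injective _ ?_
      intro b b' h
      exact (Prod.mk.inj h).2
    · intro a _ a' _ hne
      rw [Function.onFun, Finset.disjoint_left]
      intro u hu hu'
      rw [Finset.mem_image] at hu hu'
      obtain ⟨b, _, rfl⟩ := hu
      obtain ⟨b', _, h⟩ := hu'
      exact hne (hι (Prod.mk.inj h).1.symm)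
  let fy := MvPolynomial.pderiv 1 f
  let U3 := U.filter fun u => MvPolynomial.aeval ![u.1, u.2] fy = 0
  let U2 := U.filter fun u => u.2 ^ p ≠ u.2 ∧ MvPolynomial.aeval ![u.1, u.2] fy ≠ 0
  let U1 := U.filter fun u => u.2 ^ p = u.2
  have h3 : U3.card ≤ d * d + d * d := by
    refine bad_bound f hirr e hd hc hdK U3 ?_
    intro u hu
    rw [Finset.mem_filter, hU] at hu
    exact ⟨hu.1.2, hu.2⟩
  have h2 := good_bound f0 f rfl hirr e m hd hc A0 rfl (by simp only [d] at hp ⊢; omega)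
    (by simp only [d] at hp ⊢; omega) U2 (by
      intro u hu
      rw [Finset.mem_filter, hU] at hu
      obtain ⟨⟨⟨a, ha⟩, h1⟩, h2, h3⟩ := hu
      exact ⟨h1, by rw [← ha, hfrob], h2, h3⟩)
  have h1 : U1.card ≤ T.card := by
    refine (Finset.card_le_card (t := T.image fun t => (ι t.1, ι t.2)) ?_).trans
      Finset.card_image_le
    rintro ⟨u, v⟩ hu
    rw [Finset.mem_filter, hU] at hu
    obtain ⟨⟨⟨a, ha⟩, h1⟩, h2⟩ := hu
    obtain ⟨b, hb⟩ := hfix v h2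
    simp only at ha h1
    rw [Finset.mem_image]
    refine ⟨(a, b), hT _ ?_, by simp [ha, hb]⟩
    rw [← ha, ← hb] at h1
    simp only [f] at h1
    rw [MvPolynomial.aeval_map_algebraMap] at h1
    apply hι
    rw [fin2_aeval] at h1 ⊢
    simp only [ι, map_zero]
    rw [← h1]
    simp [ι, map_sum, Algebra.smul_def]
  have hsum : d * p ≤ U.card + d * U3.card := by
    have hbad : ∀ a : ZMod p, d ≤ (Z (ι a)).card +
        d * (U3.filter fun u => u.1 = ι a).card := by
      intro a
      by_cases h : ∀ b ∈ Z (ι a), MvPolynomial.aeval ![ι a, b] fy ≠ 0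
      · rw [hZc _ h]; omega
      · push Not at h
        obtain ⟨b, hb, hb0⟩ := h
        have : 0 < (U3.filter fun u => u.1 = ι a).card := by
          rw [Finset.card_pos]
          refine ⟨(ι a, b), ?_⟩
          rw [Finset.mem_filter, Finset.mem_filter, hU]
          exact ⟨⟨⟨⟨a, rfl⟩, (hZ _ _).1 hb⟩, hb0⟩, rfl⟩
        nlinarith
    have h4 := Finset.sum_le_sum fun a (_ : a ∈ (Finset.univ : Finset (ZMod p))) => hbad a
    rw [Finset.sum_const, Finset.card_univ, ZMod.card, smul_eq_mul, mul_comm,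
      Finset.sum_add_distrib, ← hUcard, ← Finset.mul_sum] at h4
    refine h4.trans (Nat.add_le_add_left (Nat.mul_le_mul_left _ ?_) _)
    rw [← Finset.card_biUnion]
    · refine Finset.card_le_card ?_
      intro u hu
      rw [Finset.mem_biUnion] at hu
      obtain ⟨a, _, hu⟩ := hu
      exact (Finset.mem_filter.1 hu).1
    · intro a _ a' _ hne
      rw [Function.onFun, Finset.disjoint_left]
      intro u hu hu'
      exact hne (hι ((Finset.mem_filter.1 hu).2.symm.trans (Finset.mem_filter.1 hu').2))
  have hUle : U.card ≤ U1.card + U2.card + U3.card := by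
    refine (Finset.card_le_card (t := U1 ∪ U2 ∪ U3) ?_).trans
      ((Finset.card_union_le _ _).trans (Nat.add_le_add_right (Finset.card_union_le _ _) _))
    intro u hu
    simp only [U1, U2, U3, Finset.mem_union, Finset.mem_filter]
    tauto
  by_contra hcon
  rw [not_lt] at hcon
  have k1 : U2.card * m ≤ A0 + d + p * (m * e + d) + d := by
    have : d * (U2.card * m) ≤ d * (A0 + d + p * (m * e + d) + d) := by
      calc d * (U2.card * m) = U2.card * (d * m) := by ring
        _ ≤ _ := h2
        _ = _ := by simp only [d]; ring
    exact Nat.le_of_mul_le_mul_left this hd1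
  have k2 : d * p ≤ 2 * d + U2.card + (d * d + d * d) + d * (d * d + d * d) := by
    have := Nat.mul_le_mul_left d h3
    simp only [d] at *
    omega
  have k3 : m * (d * p) ≤ m * (2 * d + (d * d + d * d) + d * (d * d + d * d)) +
      (A0 + d + p * (m * e + d) + d) := by
    calc m * (d * p) ≤ m * (2 * d + U2.card + (d * d + d * d) + d * (d * d + d * d)) :=
          Nat.mul_le_mul_left _ k2
      _ = m * (2 * d + (d * d + d * d) + d * (d * d + d * d)) + U2.card * m := by ring
      _ ≤ _ := Nat.add_le_add_left k1 _
  have k4 : m * (d * p) = p * (m * e + d) + d * p := by simp only [m, d]; ring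
  have k5 : d * p ≤ m * (2 * d + (d * d + d * d) + d * (d * d + d * d)) + A0 + d + d := by omega
  have k6 : m * (2 * d + (d * d + d * d) + d * (d * d + d * d)) + A0 + d + d =
    4 * d * d + A0 + 2 * d + 4 * d ^ 3 + 4 * d ^ 4 := by simp only [m]; ring
  have k7 : p ≤ d * p := Nat.le_mul_of_pos_left _ hd1
  omega
end conc5

section final
open Polynomial

theorem fin2_aeval' {R B : Type*} [CommRing R] [CommRing B] [Algebra R B] (a b : B)
    (f : MvPolynomial (Fin 2) R) :
    MvPolynomial.aeval ![a, b] f = ∑ m ∈ f.support, f.coeff m • (a ^ m 0 * b ^ m 1) := by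
  rw [MvPolynomial.aeval_def, MvPolynomial.eval₂_eq]
  refine Finset.sum_congr rfl fun m _ => ?_
  rw [← Algebra.smul_def]
  congr 1
  rw [Finset.prod_subset (Finset.subset_univ _), Fin.prod_univ_two]
  · rfl
  · intro i _ hi
    rw [Finsupp.notMem_support_iff.1 hi, pow_zero]

theorem coeff_zero_Y {R : Type*} [CommRing R] (g : MvPolynomial (Fin 2) R) (d : ℕ) :
    (MvPolynomial.aeval ![0, X] g : R[X]).coeff d = g.coeff (Finsupp.single 1 d) := by
  classical
  rw [fin2_aeval', finsetSum_coeff]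
  rw [Finset.sum_eq_single (Finsupp.single 1 d)]
  · simp
  · intro m hm hne
    rw [coeff_smul]
    by_cases h0 : m 0 = 0
    · have h1 : m 1 ≠ d := by
        intro h1
        apply hne
        rw [fin2_finsupp_eq m, h0, h1]; simp
      rw [h0, pow_zero, one_mul, coeff_X_pow, if_neg (Ne.symm h1), smul_zero]
    · rw [zero_pow h0, zero_mul, coeff_zero, smul_zero]
  · intro h
    rw [MvPolynomial.notMem_support_iff.1 h, zero_smul, coeff_zero]

theorem exists_shift (f : MvPolynomial (Fin 2) ℤ) (hf : f ≠ 0) :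
    ∃ t : ℤ, (MvPolynomial.aeval ![MvPolynomial.X 0 + MvPolynomial.C t * MvPolynomial.X 1,
      MvPolynomial.X 1] f : MvPolynomial (Fin 2) ℤ).coeff (Finsupp.single 1 f.totalDegree) ≠ 0 := by
  classical
  let d := f.totalDegree
  let Q : ℤ[X] := ∑ m ∈ f.support.filter (fun m => m 0 + m 1 = d), C (f.coeff m) * X ^ m 0
  have hQ : Q ≠ 0 := by
    obtain ⟨m, hm, hmd⟩ := Finset.exists_mem_eq_sup f.support
      (MvPolynomial.support_nonempty.2 hf) (fun s => s.sum fun _ e => e)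
    have hmd' : m 0 + m 1 = d := by
      rw [Finsupp.sum_fintype _ _ (by simp), Fin.sum_univ_two] at hmd
      exact hmd.symm
    intro h0
    have := congrArg (fun q : ℤ[X] => q.coeff (m 0)) h0
    simp only [Q, finsetSum_coeff, coeff_zero, coeff_C_mul_X_pow] at this
    rw [Finset.sum_eq_single m] at this
    · rw [if_pos rfl] at this
      exact MvPolynomial.mem_support_iff.1 hm this
    · intro m' hm' hne
      rw [if_neg]
      intro h
      apply hne
      rw [fin2_finsupp_eq m, fin2_finsupp_eq m']
      have := (Finset.mem_filter.1 hm').2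
      rw [h, show m' 1 = m 1 by omega]
    · intro h
      exact absurd (Finset.mem_filter.2 ⟨hm, hmd'⟩) h
  obtain ⟨t, ht⟩ : ∃ t, Q.eval t ≠ 0 := by
    by_contra hcon
    push Not at hcon
    exact hQ (Polynomial.funext fun t => by rw [hcon t, eval_zero])
  refine ⟨t, ?_⟩
  rw [← coeff_zero_Y]
  have e1 : (MvPolynomial.aeval ![(0 : ℤ[X]), X] (MvPolynomial.aeval
      ![MvPolynomial.X 0 + MvPolynomial.C t * MvPolynomial.X 1,
      MvPolynomial.X 1] f : MvPolynomial (Fin 2) ℤ) : ℤ[X]) =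
      MvPolynomial.aeval ![C t * X, X] f := by
    rw [fin2_aeval' _ _ f, fin2_aeval' _ _ f, map_sum]
    refine Finset.sum_congr rfl fun m _ => ?_
    rw [map_smul]
    simp
  rw [e1, fin2_aeval', finsetSum_coeff]
  convert ht using 1
  simp only [Q]
  rw [eval_finsetSum, Finset.sum_filter]
  refine Finset.sum_congr rfl fun m _ => ?_
  rw [mul_pow, mul_assoc, ← pow_add, ← C_pow, coeff_smul, coeff_C_mul_X_pow]
  by_cases h : m 0 + m 1 = d
  · rw [if_pos h, if_pos h.symm]; simp
  · rw [if_neg h, if_neg (Ne.symm h)]; simp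

theorem shift_totalDegree {R : Type*} [CommRing R] (f : MvPolynomial (Fin 2) R) (t : R) :
    (MvPolynomial.aeval ![MvPolynomial.X 0 + MvPolynomial.C t * MvPolynomial.X 1,
      MvPolynomial.X 1] f : MvPolynomial (Fin 2) R).totalDegree ≤ f.totalDegree := by
  rcases subsingleton_or_nontrivial R with h | h
  · rw [Subsingleton.elim (MvPolynomial.aeval _ f) f]
  rw [fin2_aeval']
  refine MvPolynomial.totalDegree_finsetSum_le fun m hm => ?_
  refine (MvPolynomial.totalDegree_smul_le _ _).trans ?_
  refine (MvPolynomial.totalDegree_mul _ _).trans ?_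
  refine le_trans ?_ (fin2_degree_le (MvPolynomial.mem_support_iff.1 hm))
  refine Nat.add_le_add ((MvPolynomial.totalDegree_pow _ _).trans ?_)
    ((MvPolynomial.totalDegree_pow _ _).trans ?_)
  · refine (Nat.mul_le_mul_left _ ?_).trans (mul_one _).le
    refine (MvPolynomial.totalDegree_add _ _).trans (max_le ?_ ?_)
    · rw [MvPolynomial.totalDegree_X]
    · refine (MvPolynomial.totalDegree_mul _ _).trans ?_
      simp
  · rw [MvPolynomial.totalDegree_X, mul_one]

theorem shift_irreducible (f : MvPolynomial (Fin 2) ℤ) (t : ℤ)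
    (hirr : Irreducible (MvPolynomial.map (Int.castRingHom ℂ) f)) :
    Irreducible (MvPolynomial.map (Int.castRingHom ℂ)
      (MvPolynomial.aeval ![MvPolynomial.X 0 + MvPolynomial.C t * MvPolynomial.X 1,
      MvPolynomial.X 1] f : MvPolynomial (Fin 2) ℤ)) := by
  let s : ℂ → MvPolynomial (Fin 2) ℂ →ₐ[ℂ] MvPolynomial (Fin 2) ℂ := fun c =>
    MvPolynomial.aeval ![MvPolynomial.X 0 + MvPolynomial.C c * MvPolynomial.X 1, MvPolynomial.X 1]
  have s0 : ∀ c, s c (MvPolynomial.X 0) = MvPolynomial.X 0 + MvPolynomial.C c * MvPolynomial.X 1 :=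
    fun c => MvPolynomial.aeval_X _ _
  have s1 : ∀ c, s c (MvPolynomial.X 1) = MvPolynomial.X 1 :=
    fun c => MvPolynomial.aeval_X _ _
  have sC : ∀ c c', s c (MvPolynomial.C c') = MvPolynomial.C c' := fun c c' => by
    simp [s, MvPolynomial.algebraMap_eq]
  have hs : ∀ c c', c + c' = 0 → (s c).comp (s c') = AlgHom.id ℂ _ := by
    intro c c' h
    apply MvPolynomial.algHom_ext
    intro i
    fin_cases i
    · change s c (s c' (MvPolynomial.X 0)) = MvPolynomial.X 0
      rw [s0, map_add, map_mul, s0, s1, sC, add_assoc, ← add_mul, ← MvPolynomial.C_add, h]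
      simp
    · change s c (s c' (MvPolynomial.X 1)) = MvPolynomial.X 1
      rw [s1, s1]
  let σ : MvPolynomial (Fin 2) ℂ ≃ₐ[ℂ] MvPolynomial (Fin 2) ℂ :=
    AlgEquiv.ofAlgHom (s t) (s (-t)) (hs _ _ (by ring)) (hs _ _ (by ring))
  have e1 : ∀ q : MvPolynomial (Fin 2) ℤ, MvPolynomial.map (Int.castRingHom ℂ)
      (MvPolynomial.aeval ![MvPolynomial.X 0 + MvPolynomial.C t * MvPolynomial.X 1,
      MvPolynomial.X 1] q : MvPolynomial (Fin 2) ℤ) =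
      s t (MvPolynomial.map (Int.castRingHom ℂ) q) := by
    intro q
    induction q using MvPolynomial.induction_on with
    | C c => simp [s]
    | add u v hu hv => simp only [map_add, hu, hv]
    | mul_X u i hu =>
      simp only [map_mul, hu, MvPolynomial.map_X, MvPolynomial.aeval_X]
      congr 1
      fin_cases i
      · change MvPolynomial.map _ (MvPolynomial.X 0 + MvPolynomial.C t * MvPolynomial.X 1) =
          s t (MvPolynomial.X 0)
        rw [s0]
        simp
      · change MvPolynomial.map _ (MvPolynomial.X 1) = s t (MvPolynomial.X 1)
        rw [s1]
        simp
  rw [e1]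
  exact (MulEquiv.irreducible_iff σ.toMulEquiv).2 hirr

theorem axis_count {k : Type*} [Field k] (g : MvPolynomial (Fin 2) k) (u v : k[X])
    (hu : u.natDegree ≤ 1) (hv : v.natDegree ≤ 1) (hu0 : u.eval 0 = 0) (hv0 : v.eval 0 = 0)
    (h0 : MvPolynomial.aeval ![(0 : k), 0] g ≠ 0) (S : Finset k)
    (hS : ∀ s ∈ S, MvPolynomial.aeval ![u.eval s, v.eval s] g = 0) : S.card ≤ g.totalDegree := by
  classical
  let q : k[X] := MvPolynomial.aeval ![u, v] g
  have hev : ∀ s, q.eval s = MvPolynomial.aeval ![u.eval s, v.eval s] g := by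
    intro s
    simp only [q]
    rw [fin2_aeval', fin2_aeval', eval_finsetSum]
    simp
  have hq : q ≠ 0 := by
    intro h
    have := hev 0
    rw [h, hu0, hv0, eval_zero] at this
    exact h0 this.symm
  have hdeg : q.natDegree ≤ g.totalDegree := by
    simp only [q]
    rw [fin2_aeval']
    refine natDegree_sum_le_of_forall_le _ _ fun m hm => ?_
    refine (natDegree_smul_le _ _).trans (natDegree_mul_le.trans ?_)
    refine le_trans ?_ (fin2_degree_le (MvPolynomial.mem_support_iff.1 hm))
    refine Nat.add_le_add (natDegree_pow_le.trans ?_) (natDegree_pow_le.trans ?_)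
    · exact (Nat.mul_le_mul_left _ hu).trans (mul_one _).le
    · exact (Nat.mul_le_mul_left _ hv).trans (mul_one _).le
  refine le_trans ?_ hdeg
  refine Polynomial.card_le_degree_of_subset_roots ?_
  intro s hs
  rw [mem_roots hq, IsRoot, hev]
  exact hS s hs
end final


theorem stmt2 (F f : MvPolynomial (Fin 2) ℤ)
    (hF0 : MvPolynomial.eval (fun _ => (0 : ℤ)) F ≠ 0)
    (hdvd : f ∣ F)
    (hirr : Irreducible (MvPolynomial.map (Int.castRingHom ℂ) f)) :
    {p : ℕ | p.Prime ∧ ¬ ∃ x y : ZMod p, x ≠ 0 ∧ y ≠ 0 ∧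
      MvPolynomial.aeval ![x, y] F = 0}.Finite := by
  classical
  have hf : f ≠ 0 := by
    rintro rfl
    exact hirr.ne_zero (map_zero _)
  have hf0 : MvPolynomial.aeval ![(0 : ℤ), 0] f ≠ 0 := by
    intro h
    apply hF0
    obtain ⟨g, rfl⟩ := hdvd
    have e1 : (fun _ => (0 : ℤ)) = ![(0 : ℤ), 0] := by
      funext i; fin_cases i <;> rfl
    rw [e1, ← MvPolynomial.coe_aeval_eq_eval]
    change MvPolynomial.aeval ![(0 : ℤ), 0] (f * g) = 0
    rw [map_mul, h, zero_mul]
  have hdpos : f.totalDegree ≠ 0 := by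
    intro h
    refine hirr.not_isUnit (fin2_unit_of_totalDegree _ hirr.ne_zero ?_)
    have := fin2_totalDegree_map_le (Int.castRingHom ℂ) f
    omega
  obtain ⟨e, he⟩ := Nat.exists_eq_succ_of_ne_zero hdpos
  rw [Nat.succ_eq_add_one] at he
  obtain ⟨τ, hτ⟩ := exists_shift f hf
  rw [he] at hτ
  have hdeg := shift_totalDegree f τ
  have hirr1 := shift_irreducible f τ hirr
  obtain ⟨f1, hf1⟩ : ∃ f1 : MvPolynomial (Fin 2) ℤ, f1 = MvPolynomial.aeval
    ![MvPolynomial.X 0 + MvPolynomial.C τ * MvPolynomial.X 1, MvPolynomial.X 1] f := ⟨_, rfl⟩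
  rw [← hf1] at hτ hdeg hirr1
  rw [he] at hdeg
  obtain ⟨N, hN0, hN⟩ := irreducible_mod f1 (e + 1) hdeg hτ hirr1
  obtain ⟨p0, hp0⟩ := many_points e
  let M : ℤ := N * f1.coeff (Finsupp.single 1 (e + 1)) * MvPolynomial.aeval ![(0 : ℤ), 0] f
  have hM : M ≠ 0 := mul_ne_zero (mul_ne_zero hN0 hτ) hf0
  refine (Set.finite_Iic (max p0 M.natAbs)).subset ?_
  rintro p ⟨hp, hno⟩
  by_contra hbig
  rw [Set.mem_Iic, not_le, max_lt_iff] at hbig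
  obtain ⟨hb1, hb2⟩ := hbig
  have : Fact p.Prime := ⟨hp⟩
  have hMp : (M : ZMod p) ≠ 0 := by
    rw [Ne, ZMod.intCast_zmod_eq_zero_iff_dvd]
    intro h
    have := Nat.le_of_dvd (Int.natAbs_pos.2 hM) (Int.natCast_dvd.1 h)
    omega
  simp only [M, Int.cast_mul] at hMp
  have hNp : (N : ZMod p) ≠ 0 := left_ne_zero_of_mul (left_ne_zero_of_mul hMp)
  have hcp : ((f1.coeff (Finsupp.single 1 (e + 1)) : ℤ) : ZMod p) ≠ 0 :=
    right_ne_zero_of_mul (left_ne_zero_of_mul hMp)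
  have hfp : ((MvPolynomial.aeval ![(0 : ℤ), 0] f : ℤ) : ZMod p) ≠ 0 := right_ne_zero_of_mul hMp
  let fp : MvPolynomial (Fin 2) (ZMod p) := MvPolynomial.map (Int.castRingHom (ZMod p)) f
  let f0 : MvPolynomial (Fin 2) (ZMod p) := MvPolynomial.map (Int.castRingHom (ZMod p)) f1
  have hfpev : ∀ (g : MvPolynomial (Fin 2) ℤ) (x y : ZMod p),
      MvPolynomial.aeval ![x, y] (MvPolynomial.map (Int.castRingHom (ZMod p)) g) =
        MvPolynomial.aeval ![x, y] g := by
    intro g x y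
    exact MvPolynomial.aeval_map_algebraMap (ZMod p) ![x, y] g
  have hf1ev : ∀ x y : ZMod p,
      MvPolynomial.aeval ![x, y] f1 = MvPolynomial.aeval ![x + τ * y, y] f := by
    intro x y
    rw [hf1, fin2_aeval' _ _ f, fin2_aeval' _ _ f, map_sum]
    refine Finset.sum_congr rfl fun m _ => ?_
    rw [map_smul]
    simp
  have hfp0 : MvPolynomial.aeval ![(0 : ZMod p), 0] fp ≠ 0 := by
    rw [hfpev]
    convert hfp using 1
    rw [fin2_aeval', fin2_aeval']
    simp
  have hirrp : Irreducible
      (MvPolynomial.map (algebraMap (ZMod p) (AlgebraicClosure (ZMod p))) f0) := by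
    simp only [f0]
    rw [MvPolynomial.map_map]
    rw [RingHom.ext_int ((algebraMap (ZMod p) (AlgebraicClosure (ZMod p))).comp
      (Int.castRingHom (ZMod p))) (Int.castRingHom _)]
    apply hN
    rw [← map_intCast (algebraMap (ZMod p) (AlgebraicClosure (ZMod p))), Ne, map_eq_zero]
    exact hNp
  let T : Finset (ZMod p × ZMod p) :=
    Finset.univ.filter fun t => MvPolynomial.aeval ![t.1 + τ * t.2, t.2] f = 0
  have hT := hp0 p hb1 f0 hirrp ((fin2_totalDegree_map_le _ _).trans hdeg)
    (by simpa [f0, MvPolynomial.coeff_map] using hcp) T (by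
      intro t ht
      rw [hfpev, hf1ev] at ht
      exact Finset.mem_filter.2 ⟨Finset.mem_univ _, ht⟩)
  have hfpd : fp.totalDegree ≤ e + 1 := (fin2_totalDegree_map_le _ _).trans he.le
  let T1 := T.filter fun t : ZMod p × ZMod p => t.1 + (τ : ZMod p) * t.2 = 0
  let T2 := T.filter fun t => t.2 = 0
  have h1 : T1.card ≤ e + 1 := by
    have := axis_count fp 0 Polynomial.X (by simp) (by simp) (by simp) (by simp) hfp0
      (T1.image Prod.snd) (by
        intro s hs
        obtain ⟨t, ht, rfl⟩ := Finset.mem_image.1 hs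
        obtain ⟨ht1, ht2⟩ := Finset.mem_filter.1 ht
        have := (Finset.mem_filter.1 ht1).2
        rw [ht2] at this
        rw [hfpev]
        simpa using this)
    rw [Finset.card_image_of_injOn] at this
    · exact this.trans hfpd
    · rintro ⟨a, b⟩ hs ⟨a', b'⟩ ht h
      have k1 := (Finset.mem_filter.1 hs).2
      have k2 := (Finset.mem_filter.1 ht).2
      simp only at h k1 k2
      subst h
      rw [add_right_cancel (k1.trans k2.symm)]
  have h2 : T2.card ≤ e + 1 := by
    have := axis_count fp Polynomial.X 0 (by simp) (by simp) (by simp) (by simp) hfp0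
      (T2.image Prod.fst) (by
        intro s hs
        obtain ⟨t, ht, rfl⟩ := Finset.mem_image.1 hs
        obtain ⟨ht1, ht2⟩ := Finset.mem_filter.1 ht
        have := (Finset.mem_filter.1 ht1).2
        rw [ht2] at this
        rw [hfpev]
        simpa using this)
    rw [Finset.card_image_of_injOn] at this
    · exact this.trans hfpd
    · rintro ⟨a, b⟩ hs ⟨a', b'⟩ ht h
      have k1 := (Finset.mem_filter.1 hs).2
      have k2 := (Finset.mem_filter.1 ht).2
      simp only at h k1 k2
      rw [h, k1, k2]
  have h3 : T.card ≤ T1.card + T2.card := by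
    refine (Finset.card_le_card (t := T1 ∪ T2) ?_).trans (Finset.card_union_le _ _)
    intro t ht
    rw [Finset.mem_union]
    by_contra hcon
    rw [not_or] at hcon
    obtain ⟨g, rfl⟩ := hdvd
    refine hno ⟨t.1 + τ * t.2, t.2, fun h => hcon.1 (Finset.mem_filter.2 ⟨ht, h⟩), fun h => hcon.2 (Finset.mem_filter.2 ⟨ht, h⟩), ?_⟩
    rw [map_mul, (Finset.mem_filter.1 ht).2, zero_mul]
  omega
end

section
/- Let n >= 3 be an integer. Then the polynomial 1 + (x^2 + x^4 + ... + x^{2n}) y^2 + x^{2n+2} y^4, which equals P_w(x^2,y^2) for the word w = X A X^n A X, is irreducible in C[x,y]. -/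
open MvPolynomial

namespace Stmt6Aux

open Polynomial

local notation "𝕏" => (Polynomial.X : Polynomial ℂ)

lemma C_two : Polynomial.C (2 : ℂ) = 2 := rfl

lemma C_three : Polynomial.C (3 : ℂ) = 3 := rfl

/-- The geometric sum, cleared of its denominator. -/
lemma geom_T (m : ℕ) :
    (∑ k ∈ Finset.range (m + 1), 𝕏 ^ (2 * k)) * (𝕏 ^ 2 - 1)
      = 𝕏 ^ 2 * (𝕏 ^ m) ^ 2 - 1 := by
  have h := geom_sum_mul (𝕏 ^ 2) (m + 1)
  simp only [← pow_mul] at h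
  rw [h]; ring

lemma coeff_zero_T (m : ℕ) :
    (∑ k ∈ Finset.range (m + 1), 𝕏 ^ (2 * k)).eval 0 = 1 := by
  rw [Finset.sum_range_succ']
  simp [Polynomial.eval_finsetSum]

lemma X_mul_deriv (m : ℕ) :
    𝕏 * derivative (𝕏 ^ m) = (m : ℂ[X]) * 𝕏 ^ m := by
  rcases m with _ | m
  · simp
  · rw [derivative_X_pow]; simp; ring

lemma isCoprime_X_pow {g : ℂ[X]} (h : g.eval 0 ≠ 0) (m : ℕ) :
    IsCoprime g (𝕏 ^ m) := by
  apply IsCoprime.pow_right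
  apply IsCoprime.symm
  rw [Polynomial.prime_X.irreducible.coprime_iff_not_dvd, Polynomial.X_dvd_iff,
    Polynomial.coeff_zero_eq_eval_zero]
  exact h

lemma dvd_quartic (m : ℕ) (e : ℂ) (he : e ^ 2 = 1) (g : ℂ[X]) (h0 : g.eval 0 ≠ 0)
    (hg : (∑ k ∈ Finset.range (m + 1), 𝕏 ^ (2 * k))
      + 2 * Polynomial.C e * 𝕏 ^ m = g ^ 2) :
    g ∣ ((m : ℂ[X]) * ((m : ℂ[X]) + 2)) * 𝕏 ^ 4
      - ((m : ℂ[X]) * ((m : ℂ[X]) + 2) + 3) * 𝕏 ^ 2 + (m : ℂ[X]) * ((m : ℂ[X]) + 2) := by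
  have hT := geom_T m
  set E : ℂ[X] := Polynomial.C e with hE
  have hE2 : E ^ 2 = 1 := by rw [hE, ← Polynomial.C_pow, he, Polynomial.C_1]
  set t : ℂ[X] := 𝕏 ^ m with ht
  have hD : 𝕏 * derivative t = (m : ℂ[X]) * t := X_mul_deriv m
  have hP : (𝕏 ^ 2 - 1) * g ^ 2 =
      𝕏 ^ 2 * t ^ 2 - 1 + 2 * E * (𝕏 ^ 2 - 1) * t := by
    rw [← hg, ← hT]; ring
  have hder := congrArg (fun p => 𝕏 * derivative p) hP
  have hEd : derivative E = 0 := by simp [hE]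
  simp only [derivative_mul, derivative_add, derivative_sub, derivative_pow, derivative_X,
    derivative_one, hEd, derivative_ofNat] at hder
  have hdvd : g ∣ t * ((2 * (m : ℂ[X]) + 2) * 𝕏 ^ 2 * t
      + 2 * E * (((m : ℂ[X]) + 2) * 𝕏 ^ 2 - (m : ℂ[X]))) := by
    refine ⟨𝕏 * (2 * 𝕏 * g + (𝕏 ^ 2 - 1) * 2 * derivative g), ?_⟩
    simp only [Nat.cast_ofNat, C_two, show 2 - 1 = 1 from rfl, pow_one] at hder
    linear_combination (-1) * hder - (2 * 𝕏 ^ 2 * t + 2 * E * (𝕏 ^ 2 - 1)) * hD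
  have hR := (isCoprime_X_pow h0 m).dvd_of_dvd_mul_left hdvd
  obtain ⟨r, hr⟩ := hR
  have h4 : g ∣ 4 * (((m : ℂ[X]) * ((m : ℂ[X]) + 2)) * 𝕏 ^ 4
      - ((m : ℂ[X]) * ((m : ℂ[X]) + 2) + 3) * 𝕏 ^ 2 + (m : ℂ[X]) * ((m : ℂ[X]) + 2)) := by
    set k : ℂ[X] := ((m : ℂ[X]) + 2) * 𝕏 ^ 2 - (m : ℂ[X]) with hk
    set W : ℂ[X] := (2 * (m : ℂ[X]) + 2) * 𝕏 ^ 2 * t with hW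
    refine ⟨r * (W - 2 * E * k + 4 * E * ((m : ℂ[X]) + 1) * (𝕏 ^ 2 - 1))
      - 4 * ((m : ℂ[X]) + 1) ^ 2 * 𝕏 ^ 2 * (𝕏 ^ 2 - 1) * g, ?_⟩
    have e1 : g * (r * (W - 2 * E * k + 4 * E * ((m : ℂ[X]) + 1) * (𝕏 ^ 2 - 1))
      - 4 * ((m : ℂ[X]) + 1) ^ 2 * 𝕏 ^ 2 * (𝕏 ^ 2 - 1) * g)
      = (W + 2 * E * k) * (W - 2 * E * k + 4 * E * ((m : ℂ[X]) + 1) * (𝕏 ^ 2 - 1))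
       - 4 * ((m : ℂ[X]) + 1) ^ 2 * 𝕏 ^ 2 * ((𝕏 ^ 2 - 1) * g ^ 2) := by
      rw [hr]; ring
    rw [e1, hP, hW, hk]
    linear_combination (4 * (((m : ℂ[X]) + 2) * 𝕏 ^ 2 - (m : ℂ[X])) ^ 2
      - 8 * ((m : ℂ[X]) + 1) * (𝕏 ^ 2 - 1) * (((m : ℂ[X]) + 2) * 𝕏 ^ 2 - (m : ℂ[X]))) * hE2
  have hu : IsUnit (4 : ℂ[X]) := by
    have : (4 : ℂ[X]) = Polynomial.C 4 := rfl
    rw [this, Polynomial.isUnit_C]; norm_num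
  exact (hu.dvd_mul_left).1 h4

lemma not_sq (m : ℕ) (hm : 2 ≤ m) (e : ℂ) (he : e ^ 2 = 1) (g : ℂ[X])
    (hg : (∑ k ∈ Finset.range (m + 1), 𝕏 ^ (2 * k))
      + 2 * Polynomial.C e * 𝕏 ^ m = g ^ 2) : False := by
  have h0 : g.eval 0 ≠ 0 := by
    intro h
    have := congrArg (Polynomial.eval 0) hg
    rw [Polynomial.eval_add, coeff_zero_T] at this
    simp [h, show m ≠ 0 by omega] at this
  have hd := dvd_quartic m e he g h0 hg
  have hdeg4 : g.natDegree ≤ 4 := by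
    have hne : ((m : ℂ[X]) * ((m : ℂ[X]) + 2)) * 𝕏 ^ 4
      - ((m : ℂ[X]) * ((m : ℂ[X]) + 2) + 3) * 𝕏 ^ 2 + (m : ℂ[X]) * ((m : ℂ[X]) + 2) ≠ 0 := by
      intro h
      have := congrArg (Polynomial.eval 0) h
      simp at this
      rcases this with h | h
      · omega
      · norm_cast at h
    refine (Polynomial.natDegree_le_of_dvd hd hne).trans ?_
    have e1 : (m : ℂ[X]) * ((m : ℂ[X]) + 2) = Polynomial.C ((m : ℂ) * (m + 2)) := by simp [C_two]
    have e2 : (m : ℂ[X]) * ((m : ℂ[X]) + 2) + 3 = Polynomial.C ((m : ℂ) * (m + 2) + 3) := by simp [C_two, C_three]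
    rw [e2, e1]
    compute_degree
  have hdegm : g.natDegree = m := by
    have h1 : (g ^ 2).natDegree = 2 * m := by
      rw [← hg]
      apply Polynomial.natDegree_eq_of_le_of_coeff_ne_zero
      · refine Polynomial.natDegree_add_le_of_degree_le ?_ ?_
        · refine Polynomial.natDegree_sum_le_of_forall_le _ _ ?_
          intro i hi
          rw [Polynomial.natDegree_X_pow]
          have := Finset.mem_range.1 hi
          omega
        · have : (2 : ℂ[X]) * Polynomial.C e = Polynomial.C (2 * e) := by simp [C_two]
          rw [this]
          refine (Polynomial.natDegree_C_mul_X_pow_le _ _).trans (by omega)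
      · have : (2 : ℂ[X]) * Polynomial.C e = Polynomial.C (2 * e) := by simp [C_two]
        rw [this, Polynomial.coeff_add, Polynomial.coeff_C_mul_X_pow, Polynomial.finsetSum_coeff,
          Finset.sum_eq_single m]
        · rw [Polynomial.coeff_X_pow, if_pos rfl, if_neg (by omega)]; simp
        · intro b _ hb
          rw [Polynomial.coeff_X_pow, if_neg (by omega)]
        · simp
    rw [Polynomial.natDegree_pow] at h1
    omega
  have hc : ∀ i, ((∑ k ∈ Finset.range (m + 1), 𝕏 ^ (2 * k))
      + Polynomial.C (2 * e) * 𝕏 ^ m).coeff i = (g * g).coeff i := by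
    intro i
    rw [← pow_two, ← hg, Polynomial.C_mul, C_two]
  have hz : ∀ i, m < i → g.coeff i = 0 := fun i hi =>
    Polynomial.coeff_eq_zero_of_natDegree_lt (by omega)
  have c0 := hc 0
  have c1 := hc 1
  have c2 := hc 2
  have c3 := hc 3
  have c4 := hc 4
  have c6 := hc 6
  have c8 := hc 8
  have hm4 : m ≤ 4 := by omega
  have z3 := hz 3
  have z4 := hz 4
  have z5 := hz 5
  have z6 := hz 6
  have z7 := hz 7
  have z8 := hz 8
  clear hd hdegm hdeg4 hg hc hz h0
  simp only [Polynomial.coeff_mul, Finset.Nat.antidiagonal_succ, Finset.sum_cons, Finset.sum_map,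
    Finset.Nat.antidiagonal_zero, Finset.map_singleton, Finset.sum_singleton, Finset.map_cons,
    Polynomial.coeff_add, Polynomial.coeff_C_mul, Polynomial.finsetSum_coeff,
    Polynomial.coeff_X_pow] at c0 c1 c2 c3 c4 c6 c8
  generalize g.coeff = a at *
  obtain rfl | rfl | rfl : m = 2 ∨ m = 3 ∨ m = 4 := by omega
  all_goals
    simp only [Finset.sum_range_succ, Finset.sum_range_zero] at c0 c1 c2 c3 c4 c6 c8
    norm_num at c0 c1 c2 c3 c4 c6 c8 z3 z4 z5 z6 z7 z8
  all_goals
    have h0 : a 0 ≠ 0 := by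
      intro h
      simp [h] at c0
    have h1 : a 1 = 0 := by
      have : a 0 * a 1 = 0 := by linear_combination (-1 / 2) * c1
      exact (mul_eq_zero.1 this).resolve_left h0
  · rw [z3, z4] at c4
    rw [h1] at c2
    have : e = -1 / 4 := by
      linear_combination (1 / 4) * (1 + 2 * e + 2 * a 0 * a 2) * c2 - he - a 0 * a 0 * c4 - c0
    rw [this] at he
    norm_num at he
  · rw [h1] at c2 c4
    rw [z4] at c4
    have : (4 : ℂ) = 1 := by
      linear_combination 4 * c0 + 4 * a 0 * a 0 * c4 - (1 + 2 * a 0 * a 2) * c2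
    norm_num at this
  · rw [h1] at c2 c3 c4 c6
    rw [z5, z6] at c6
    rw [z5, z6, z7, z8] at c8
    have h3 : a 3 = 0 := by
      have : a 0 * a 3 = 0 := by linear_combination (-1 / 2) * c3
      exact (mul_eq_zero.1 this).resolve_left h0
    rw [h3] at c4 c6
    have h2 : a 2 = a 0 / 2 := by
      linear_combination a 2 * c0 - (1 / 2) * a 0 * c2
    have h4 : a 4 = a 0 := by
      rw [h2] at c6
      linear_combination a 4 * c0 - a 0 * c6
    rw [h2, h4] at c4
    have : e = 5 / 8 := by linear_combination (1 / 2) * c4 - (9 / 8) * c0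
    rw [this] at he
    norm_num at he

/-- A reducible biquadratic. -/
lemma biquad (a b : ℂ[X]) (ha : a ≠ 0)
    (h1 : ∀ r, b ^ 2 - 4 * a ^ 2 ≠ r ^ 2) (h2 : ∀ r, b - 2 * a ≠ r ^ 2)
    (h3 : ∀ r, b + 2 * a ≠ r ^ 2) :
    Irreducible ((1 : ℂ[X][X]) + Polynomial.C b * Polynomial.X ^ 2
      + Polynomial.C (a ^ 2) * Polynomial.X ^ 4) := by
  set F : ℂ[X][X] := (1 : ℂ[X][X]) + Polynomial.C b * Polynomial.X ^ 2
      + Polynomial.C (a ^ 2) * Polynomial.X ^ 4 with hF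
  have hFdeg : F.natDegree = 4 := by
    apply Polynomial.natDegree_eq_of_le_of_coeff_ne_zero
    · rw [hF]; compute_degree
    · simp [hF, Polynomial.coeff_one, Polynomial.coeff_X_pow, ha, -map_pow]
  have hF0 : F ≠ 0 := by
    intro h; rw [h] at hFdeg; simp at hFdeg
  have hi : ∀ r : ℂ[X], (Polynomial.C Complex.I * r) ^ 2 = - r ^ 2 := by
    intro r; rw [mul_pow, ← Polynomial.C_pow, Complex.I_sq]; simp
  have key : ∀ p q : ℂ[X][X], F = p * q → p.natDegree ≤ q.natDegree → IsUnit p ∨ IsUnit q := by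
    intro p q hpq hle
    have hp0 : p ≠ 0 := by rintro rfl; simp at hpq; exact hF0 hpq
    have hq0 : q ≠ 0 := by rintro rfl; simp at hpq; exact hF0 hpq
    have hdeg : p.natDegree + q.natDegree = 4 := by
      rw [← Polynomial.natDegree_mul hp0 hq0, ← hpq, hFdeg]
    have hc : ∀ i, F.coeff i = (p * q).coeff i := by intro i; rw [hpq]
    have c0 := hc 0
    have c1 := hc 1
    have c2 := hc 2
    have c3 := hc 3
    have c4 := hc 4
    have hzp : ∀ i, p.natDegree < i → p.coeff i = 0 := fun i hi =>
      Polynomial.coeff_eq_zero_of_natDegree_lt hi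
    have hzq : ∀ i, q.natDegree < i → q.coeff i = 0 := fun i hi =>
      Polynomial.coeff_eq_zero_of_natDegree_lt hi
    simp [hF, Polynomial.coeff_mul, Finset.Nat.antidiagonal_succ, Polynomial.coeff_one,
      Polynomial.coeff_X_pow, -map_pow] at c0 c1 c2 c3 c4
    have hpd : p.natDegree = 0 ∨ (p.natDegree = 1 ∧ q.natDegree = 3) ∨
      (p.natDegree = 2 ∧ q.natDegree = 2) := by omega
    rcases hpd with hd | ⟨hd1, hd3⟩ | ⟨hd1, hd3⟩
    · left
      rw [Polynomial.eq_C_of_natDegree_eq_zero hd, Polynomial.isUnit_C]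
      exact IsUnit.of_mul_eq_one _ c0.symm
    · exfalso
      have y2 := hzp 2 (by omega)
      have y3 := hzp 3 (by omega)
      have y4 := hzp 4 (by omega)
      have z4 := hzq 4 (by omega)
      simp only [y2, y3, y4, z4] at c0 c1 c2 c3 c4
      generalize p.coeff 0 = p0 at *
      generalize p.coeff 1 = p1 at *
      generalize q.coeff 0 = q0 at *
      generalize q.coeff 1 = q1 at *
      generalize q.coeff 2 = q2 at *
      generalize q.coeff 3 = q3 at *
      have e1 : p0 * q1 = - (p1 * q0) := by linear_combination -c1
      have e2 : b = p0 * q2 - (p1 * q0) ^ 2 := by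
        linear_combination c2 + p1 * q1 * c0 + p1 * q0 * e1
      have e3 : p0 * q3 = - (p1 * q0) * (p0 * q2) := by
        linear_combination -c3 - p1 * q2 * c0
      have e4 : a ^ 2 = - (p1 * q0) ^ 2 * (p0 * q2) := by
        linear_combination c4 + p1 * q3 * c0 + p1 * q0 * e3
      apply h1 (p0 * q2 + (p1 * q0) ^ 2)
      rw [e4, e2]; ring
    · exfalso
      have y3 := hzp 3 (by omega)
      have y4 := hzp 4 (by omega)
      have z3 := hzq 3 (by omega)
      have z4 := hzq 4 (by omega)
      simp only [z3, y3, y4, z4] at c0 c1 c2 c3 c4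
      generalize p.coeff 0 = p0 at *
      generalize p.coeff 1 = p1 at *
      generalize p.coeff 2 = p2 at *
      generalize q.coeff 0 = q0 at *
      generalize q.coeff 1 = q1 at *
      generalize q.coeff 2 = q2 at *
      have e1 : p0 * q1 = - (p1 * q0) := by linear_combination -c1
      have e2 : b = p0 * q2 + p2 * q0 - (p1 * q0) ^ 2 := by
        linear_combination c2 + p1 * q1 * c0 + p1 * q0 * e1
      have e3 : (p1 * q0) * (p0 * q2 - p2 * q0) = 0 := by
        linear_combination -c3 - (p1 * q2 + p2 * q1) * c0 - p2 * q0 * e1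
      have e4 : a ^ 2 = (p2 * q0) * (p0 * q2) := by
        linear_combination c4 + p2 * q2 * c0
      rcases mul_eq_zero.1 e3 with h | h
      · apply h1 (p0 * q2 - p2 * q0)
        rw [e4, e2, h]; ring
      · have heq : p0 * q2 = p2 * q0 := sub_eq_zero.1 h
        rw [heq, ← pow_two] at e4
        rcases sq_eq_sq_iff_eq_or_eq_neg.1 e4 with hsgn | hsgn
        · apply h2 (Polynomial.C Complex.I * (p1 * q0))
          rw [hi, e2, heq, hsgn]; ring
        · apply h3 (Polynomial.C Complex.I * (p1 * q0))
          rw [hi, e2, heq, hsgn]; ring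
  refine ⟨?_, ?_⟩
  · intro h
    rw [Polynomial.natDegree_eq_zero_of_isUnit h] at hFdeg
    omega
  · intro p q hpq
    rcases le_total p.natDegree q.natDegree with h | h
    · exact key p q hpq h
    · exact (key q p (by rw [hpq, mul_comm]) h).symm

/-- Removing a factor `X ^ 2` from a square. -/
lemma sq_of_X_sq_mul {f r : ℂ[X]} (h : 𝕏 ^ 2 * f = r ^ 2) : ∃ s, f = s ^ 2 := by
  have hd : 𝕏 ∣ r := by
    apply Polynomial.prime_X.dvd_of_dvd_pow (n := 2)
    exact ⟨𝕏 * f, by rw [← h]; ring⟩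
  obtain ⟨s, rfl⟩ := hd
  refine ⟨s, ?_⟩
  have hx : (𝕏 ^ 2) ≠ 0 := pow_ne_zero _ Polynomial.X_ne_zero
  apply mul_left_cancel₀ hx
  rw [h]; ring

lemma main (m : ℕ) (hm : 2 ≤ m) :
    Irreducible ((1 : ℂ[X][X])
      + Polynomial.C (𝕏 ^ 2 * ∑ k ∈ Finset.range (m + 1), 𝕏 ^ (2 * k)) * Polynomial.X ^ 2
      + Polynomial.C ((𝕏 ^ (m + 2)) ^ 2) * Polynomial.X ^ 4) := by
  have hT0 := coeff_zero_T m
  have hns := not_sq m hm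
  set T : ℂ[X] := ∑ k ∈ Finset.range (m + 1), 𝕏 ^ (2 * k) with hT
  have hp : ∀ s, T + 2 * 𝕏 ^ m ≠ s ^ 2 := fun s hs =>
    hns 1 (by norm_num) s (by rw [← hs]; simp)
  have hn : ∀ s, T - 2 * 𝕏 ^ m ≠ s ^ 2 := fun s hs =>
    hns (-1) (by norm_num) s (by rw [← hs]; simp; ring)
  apply biquad
  · exact pow_ne_zero _ Polynomial.X_ne_zero
  · intro r hr
    have e1 : 𝕏 ^ 2 * (𝕏 ^ 2 * ((T - 2 * 𝕏 ^ m) * (T + 2 * 𝕏 ^ m))) = r ^ 2 := by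
      rw [← hr]; ring
    obtain ⟨s, hs⟩ := sq_of_X_sq_mul e1
    obtain ⟨w, hw⟩ := sq_of_X_sq_mul hs
    have hcop : IsCoprime (T - 2 * 𝕏 ^ m) (T + 2 * 𝕏 ^ m) := by
      have h1 : IsCoprime (T - 2 * 𝕏 ^ m) (𝕏 ^ m) := by
        apply isCoprime_X_pow
        rw [Polynomial.eval_sub, hT0]
        simp [show m ≠ 0 by omega]
      have hu : IsUnit (Polynomial.C (4 : ℂ)) := by
        rw [Polynomial.isUnit_C]; norm_num
      have h2 : IsCoprime (T - 2 * 𝕏 ^ m) (Polynomial.C 4 * 𝕏 ^ m) :=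
        (isCoprime_mul_unit_left_right hu _ _).2 h1
      have h3 := h2.add_mul_left_right 1
      have h4 : Polynomial.C 4 * 𝕏 ^ m + (T - 2 * 𝕏 ^ m) * 1 = T + 2 * 𝕏 ^ m := by
        rw [show Polynomial.C (4 : ℂ) = 4 from rfl]; ring
      rwa [h4] at h3
    obtain ⟨d, u, hd⟩ := exists_associated_pow_of_mul_eq_pow' hcop hw
    obtain ⟨c, hc, hcu⟩ := Polynomial.isUnit_iff.1 u.isUnit
    obtain ⟨z, hz⟩ := IsAlgClosed.exists_pow_nat_eq c (n := 2) (by norm_num)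
    apply hn (d * Polynomial.C z)
    rw [← hd, ← hcu, ← hz, mul_pow, Polynomial.C_pow]
  · intro r hr
    obtain ⟨s, hs⟩ := sq_of_X_sq_mul (f := T - 2 * 𝕏 ^ m) (r := r) (by rw [← hr]; ring)
    exact hn s hs
  · intro r hr
    obtain ⟨s, hs⟩ := sq_of_X_sq_mul (f := T + 2 * 𝕏 ^ m) (r := r) (by rw [← hr]; ring)
    exact hp s hs

end Stmt6Aux

theorem stmt6 (n : ℕ) (hn : 3 ≤ n) :
    Irreducible
      ((1 : MvPolynomial (Fin 2) ℂ) +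
        (∑ k ∈ Finset.range n, (X 0 : MvPolynomial (Fin 2) ℂ) ^ (2 * (k + 1))) * X 1 ^ 2 +
        X 0 ^ (2 * n + 2) * X 1 ^ 4) := by
  obtain ⟨m, rfl⟩ : ∃ m, n = m + 1 := ⟨n - 1, by omega⟩
  have h := Stmt6Aux.main m (by omega)
  have heq := (MulEquiv.irreducible_iff
    (Polynomial.Bivariate.equivMvPolynomial ℂ).toMulEquiv).2 h
  have key : (Polynomial.Bivariate.equivMvPolynomial ℂ).toMulEquiv
      (1 + Polynomial.C (Polynomial.X ^ 2 * ∑ k ∈ Finset.range (m + 1), Polynomial.X ^ (2 * k))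
        * Polynomial.X ^ 2
      + Polynomial.C ((Polynomial.X ^ (m + 2)) ^ 2) * Polynomial.X ^ 4)
      = (1 : MvPolynomial (Fin 2) ℂ) +
        (∑ k ∈ Finset.range (m + 1), (X 0 : MvPolynomial (Fin 2) ℂ) ^ (2 * (k + 1))) * X 1 ^ 2 +
        X 0 ^ (2 * (m + 1) + 2) * X 1 ^ 4 := by
    change (Polynomial.Bivariate.equivMvPolynomial ℂ) _ = _
    simp only [map_add, map_mul, map_pow, map_sum, map_one,
      Polynomial.Bivariate.equivMvPolynomial_C_X, Polynomial.Bivariate.equivMvPolynomial_X]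
    have e1 : (X 0 : MvPolynomial (Fin 2) ℂ) ^ 2 * ∑ k ∈ Finset.range (m + 1), X 0 ^ (2 * k)
        = ∑ k ∈ Finset.range (m + 1), X 0 ^ (2 * (k + 1)) := by
      rw [Finset.mul_sum]
      refine Finset.sum_congr rfl fun k _ => ?_
      ring
    rw [e1]
    ring
  rw [key] at heq
  exact heq
end

section
/- For distinct positive integers m and n, the word X^m A X^n is not universal: there exist a uniquely divisible group G and elements a, b in G such that the equation x^m * a * x^n = b has no solution x in G. -/
namespace Stmt7

/-- The character `(p, q) ↦ 2 ^ p * (- exp L) ^ q`. -/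
noncomputable def phi (L : ℝ) (p q : ℚ) : ℂ :=
  Complex.exp ((p : ℂ) * (Real.log 2 : ℝ) + (q : ℂ) * ((L : ℂ) + Real.pi * Complex.I))

theorem phi_add (L : ℝ) (p q p' q' : ℚ) :
    phi L (p + p') (q + q') = phi L p q * phi L p' q' := by
  unfold phi
  rw [← Complex.exp_add]
  congr 1
  push_cast
  ring

theorem phi_zero (L : ℝ) : phi L 0 0 = 1 := by simp [phi]

theorem phi_pow (L : ℝ) (p q : ℚ) (k : ℕ) : phi L (k * p) (k * q) = phi L p q ^ k := by
  unfold phi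
  rw [← Complex.exp_nat_mul]
  congr 1
  push_cast
  ring

/-- The group `ℂ ⋊ ℚ²`, with action through `phi L`. -/
@[ext] structure Aff (L : ℝ) where
  u : ℂ
  p : ℚ
  q : ℚ

variable {L : ℝ}

noncomputable instance : Mul (Aff L) := ⟨fun x y => ⟨x.u + phi L x.p x.q * y.u, x.p + y.p, x.q + y.q⟩⟩
noncomputable instance : One (Aff L) := ⟨⟨0, 0, 0⟩⟩
noncomputable instance : Inv (Aff L) := ⟨fun x => ⟨-(phi L (-x.p) (-x.q) * x.u), -x.p, -x.q⟩⟩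

@[simp] theorem mul_u (x y : Aff L) : (x * y).u = x.u + phi L x.p x.q * y.u := rfl
@[simp] theorem mul_p (x y : Aff L) : (x * y).p = x.p + y.p := rfl
@[simp] theorem mul_q (x y : Aff L) : (x * y).q = x.q + y.q := rfl
@[simp] theorem one_u : (1 : Aff L).u = 0 := rfl
@[simp] theorem one_p : (1 : Aff L).p = 0 := rfl
@[simp] theorem one_q : (1 : Aff L).q = 0 := rfl
@[simp] theorem inv_u (x : Aff L) : (x⁻¹).u = -(phi L (-x.p) (-x.q) * x.u) := rfl
@[simp] theorem inv_p (x : Aff L) : (x⁻¹).p = -x.p := rfl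
@[simp] theorem inv_q (x : Aff L) : (x⁻¹).q = -x.q := rfl

noncomputable instance : Group (Aff L) :=
  Group.ofLeftAxioms
    (by intro x y z; ext <;> simp [phi_add] <;> ring)
    (by intro x; ext <;> simp [phi_zero])
    (by intro x; ext <;> simp)

theorem pow_p (x : Aff L) (k : ℕ) : (x ^ k).p = k * x.p := by
  induction k with
  | zero => simp
  | succ k ih => rw [pow_succ, mul_p, ih]; push_cast; ring

theorem pow_q (x : Aff L) (k : ℕ) : (x ^ k).q = k * x.q := by
  induction k with
  | zero => simp
  | succ k ih => rw [pow_succ, mul_q, ih]; push_cast; ring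

theorem pow_u (x : Aff L) (k : ℕ) :
    (x ^ k).u = (∑ i ∈ Finset.range k, phi L x.p x.q ^ i) * x.u := by
  induction k with
  | zero => simp
  | succ k ih =>
    rw [pow_succ, mul_u, ih, pow_p, pow_q, phi_pow, Finset.sum_range_succ]; ring

theorem sum_ne (H : ∀ p q, phi L p q = 1 → p = 0 ∧ q = 0) (p q : ℚ) (k : ℕ) (hk : 0 < k) :
    (∑ i ∈ Finset.range k, phi L p q ^ i) ≠ 0 := by
  intro h
  have h1 := geom_sum_mul (phi L p q) k
  rw [h, zero_mul, ← phi_pow] at h1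
  obtain ⟨hp, hq⟩ := H _ _ (sub_eq_zero.mp h1.symm)
  have hk' : (k : ℚ) ≠ 0 := by positivity
  have hp' : p = 0 := by simpa [hk.ne'] using hp
  have hq' : q = 0 := by simpa [hk.ne'] using hq
  subst hp' hq'
  simp [phi_zero, hk.ne'] at h

theorem ud (H : ∀ p q, phi L p q = 1 → p = 0 ∧ q = 0) : UniquelyDivisible (Aff L) := by
  intro b k hk
  have hk' : (k : ℚ) ≠ 0 := by positivity
  have hs := sum_ne H (b.p / k) (b.q / k) k hk
  refine ⟨⟨b.u / (∑ i ∈ Finset.range k, phi L (b.p / k) (b.q / k) ^ i), b.p / k, b.q / k⟩, ?_, ?_⟩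
  · ext
    · rw [pow_u]; field_simp
    · rw [pow_p]; field_simp
    · rw [pow_q]; field_simp
  · rintro y rfl
    have e1 : (y ^ k).p / k = y.p := by rw [pow_p]; field_simp
    have e2 : (y ^ k).q / k = y.q := by rw [pow_q]; field_simp
    simp only [e1, e2] at hs ⊢
    ext
    · simp only [pow_u]; field_simp
    · rfl
    · rfl

theorem indep (R : ℚ) (hR : 0 < R) (hR1 : R ≠ 1) (hv : padicValRat 2 R = 0) (p q : ℚ)
    (h : phi (Real.log R) p q = 1) : p = 0 ∧ q = 0 := by
  have h1 : (p : ℝ) * Real.log 2 + q * Real.log R = 0 := by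
    have := congrArg norm h
    rw [phi, Complex.norm_exp, norm_one, Real.exp_eq_one_iff] at this
    rw [← this]
    simp only [Complex.add_re, Complex.mul_re, Complex.ofReal_re, Complex.ofReal_im,
      Complex.ratCast_re, Complex.ratCast_im, Complex.I_re, Complex.I_im, Complex.add_im]
    ring
  have hR' : (0 : ℝ) < R := by exact_mod_cast hR
  set P : ℤ := p.num * q.den with hP
  set Q : ℤ := q.num * p.den with hQ
  have hPe : (P : ℝ) = p * (p.den * q.den) := by
    have : (P : ℚ) = p * (p.den * q.den) := by
      rw [hP]; push_cast; rw [← Rat.mul_den_eq_num p]; ring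
    exact_mod_cast this
  have hQe : (Q : ℝ) = q * (p.den * q.den) := by
    have : (Q : ℚ) = q * (p.den * q.den) := by
      rw [hQ]; push_cast; rw [← Rat.mul_den_eq_num q]; ring
    exact_mod_cast this
  have h2 : (P : ℝ) * Real.log 2 + Q * Real.log R = 0 := by
    rw [hPe, hQe]; linear_combination ((p.den : ℝ) * q.den) * h1
  have h3 : (2 : ℝ) ^ P * (R : ℝ) ^ Q = 1 := by
    apply Real.eq_one_of_pos_of_log_eq_zero (by positivity)
    rw [Real.log_mul (by positivity) (by positivity), Real.log_zpow, Real.log_zpow, h2]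
  have h4 : (2 : ℚ) ^ P * R ^ Q = 1 := by
    have : (((2 : ℚ) ^ P * R ^ Q : ℚ) : ℝ) = ((1 : ℚ) : ℝ) := by push_cast; exact h3
    exact Rat.cast_injective this
  have h5 : P = 0 := by
    have : Fact (Nat.Prime 2) := ⟨Nat.prime_two⟩
    have := congrArg (padicValRat 2) h4
    rw [padicValRat.mul (by positivity) (by positivity), padicValRat.zpow, padicValRat.zpow, hv] at this
    have h22 : padicValRat 2 (2 : ℚ) = 1 := by
      simpa using padicValRat.self (p := 2) (by norm_num)
    simpa [h22] using this
  have h6 : Q = 0 := by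
    rw [h5, zpow_zero, one_mul] at h4
    by_contra hQ0
    exact hQ0 ((zpow_eq_one_iff_right₀ hR.le hR1).mp h4)
  refine ⟨?_, ?_⟩
  · simpa [hP] using h5
  · simpa [hQ] using h6

theorem val (n : ℕ) (hn : 0 < n) : padicValRat 2 ((2 : ℚ) ^ n - 1) = 0 := by
  have : ((2 : ℚ) ^ n - 1) = ((2 ^ n - 1 : ℕ) : ℚ) := by
    push_cast [Nat.one_le_two_pow]; rfl
  rw [this, padicValRat.of_nat]
  norm_cast
  apply padicValNat.eq_zero_of_not_dvd
  have h1 : 2 ∣ 2 ^ n := dvd_pow_self 2 hn.ne'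
  have h2 : 1 ≤ 2 ^ n := Nat.one_le_two_pow
  omega

end Stmt7

open Stmt7

/-- For distinct positive integers `m ≠ n`, the word `Xᵐ A Xⁿ` is not universal:
there are a uniquely divisible group `G` and `a b : G` such that `xᵐ a xⁿ = b`
has no solution `x : G`. -/
theorem stmt7 (m n : ℕ) (hm : 0 < m) (hn : 0 < n) (hmn : m ≠ n) :
    ∃ (G : Type) (_ : Group G), UniquelyDivisible G ∧
      ∃ a b : G, ¬ ∃ x : G, x ^ m * a * x ^ n = b := by
  have hm1 : (0 : ℚ) < 2 ^ m - 1 := sub_pos.mpr (one_lt_pow₀ (by norm_num) hm.ne')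
  have hn1 : (0 : ℚ) < 2 ^ n - 1 := sub_pos.mpr (one_lt_pow₀ (by norm_num) hn.ne')
  set R : ℚ := (2 ^ m - 1) / (2 ^ n - 1) with hRdef
  have hR : 0 < R := div_pos hm1 hn1
  have hR1 : R ≠ 1 := by
    intro h
    rw [hRdef, div_eq_one_iff_eq hn1.ne', sub_left_inj] at h
    exact hmn (pow_right_injective₀ (by norm_num) (by norm_num) h)
  have hv : padicValRat 2 R = 0 := by
    have : Fact (Nat.Prime 2) := ⟨Nat.prime_two⟩
    rw [hRdef, padicValRat.div hm1.ne' hn1.ne', val m hm, val n hn, sub_zero]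
  have hR' : (0 : ℝ) < R := by exact_mod_cast hR
  refine ⟨Aff (Real.log R), inferInstance, ud (indep R hR hR1 hv), ⟨0, -m, 1⟩, ⟨1, n, 1⟩, ?_⟩
  rintro ⟨x, hx⟩
  have hmn0 : ((m : ℚ) + n) ≠ 0 := by positivity
  have hp : x.p = 1 := by
    have := congrArg Aff.p hx
    simp only [mul_p, pow_p] at this
    apply mul_left_cancel₀ hmn0
    linear_combination this
  have hq : x.q = 0 := by
    have := congrArg Aff.q hx
    simp only [mul_q, pow_q] at this
    apply mul_left_cancel₀ hmn0
    linear_combination this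
  have hu := congrArg Aff.u hx
  have e1 : phi (Real.log R) 1 0 = 2 := by
    simp only [phi]
    rw [Rat.cast_one, Rat.cast_zero, one_mul, zero_mul, add_zero, ← Complex.ofReal_exp,
      Real.exp_log (by norm_num)]
    norm_num
  have e2 : phi (Real.log R) 0 1 = -(R : ℂ) := by
    simp only [phi]
    rw [Rat.cast_one, Rat.cast_zero, one_mul, zero_mul, zero_add, Complex.exp_add,
      ← Complex.ofReal_exp, Real.exp_log hR', Complex.exp_pi_mul_I]
    push_cast
    ring
  simp only [mul_u, mul_p, mul_q, pow_u, pow_p, pow_q, hp, hq, e1] at hu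
  have g1 := geom_sum_mul (2 : ℂ) m
  have g2 := geom_sum_mul (2 : ℂ) n
  have g3 : (2 : ℂ) - 1 = 1 := by norm_num
  rw [g3, mul_one] at g1 g2
  have e3 : (R : ℂ) * (2 ^ n - 1) = 2 ^ m - 1 := by
    have : R * (2 ^ n - 1) = 2 ^ m - 1 := by rw [hRdef]; field_simp
    exact_mod_cast congrArg (Rat.cast : ℚ → ℂ) this
  have e4 : phi (Real.log R) ((m : ℚ) * 1 + -m) (m * 0 + 1) = -(R : ℂ) := by
    rw [← e2]; congr 1 <;> ring
  rw [g1, g2, e4] at hu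
  apply zero_ne_one (α := ℂ)
  rw [← hu]
  linear_combination x.u * e3
end

section
/- For integers m >= 0 and n >= 1, the word X A^{m+2n} X A^{m+n} X A^m X is not universal: there exist a uniquely divisible group G and elements a, b in G such that the equation x * a^{m+2n} * x * a^{m+n} * x * a^m * x = b has no solution x in G. -/
/-- The character `(p, q) ↦ 2^p (-3/2)^q` (with a chosen branch). -/
noncomputable def spiral (p q : ℚ) : ℂ :=
  Complex.exp ((p : ℂ) * (Real.log 2 : ℂ) + (q : ℂ) * ((Real.log (3 / 2) : ℂ) + Real.pi * Complex.I))

theorem spiral_add (p q p' q' : ℚ) : spiral (p + p') (q + q') = spiral p q * spiral p' q' := by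
  unfold spiral
  rw [← Complex.exp_add]
  congr 1
  push_cast
  ring

theorem spiral_zero : spiral 0 0 = 1 := by simp [spiral]

theorem spiral_norm (p q : ℚ) :
    ‖spiral p q‖ = Real.exp ((p : ℝ) * Real.log 2 + (q : ℝ) * Real.log (3 / 2)) := by
  unfold spiral
  rw [Complex.norm_exp]
  congr 1
  have h : ((p : ℂ) * (Real.log 2 : ℂ) +
      (q : ℂ) * ((Real.log (3 / 2) : ℂ) + Real.pi * Complex.I)) =
      (((p : ℝ) * Real.log 2 + (q : ℝ) * Real.log (3 / 2) : ℝ) : ℂ) +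
        (((q : ℝ) * Real.pi : ℝ) : ℂ) * Complex.I := by
    push_cast
    ring
  rw [h]
  simp only [Complex.add_re, Complex.ofReal_re, Complex.re_ofReal_mul, Complex.I_re, mul_zero,
    add_zero]

theorem log_indep_int (a b : ℤ) (h : (a : ℝ) * Real.log 2 + (b : ℝ) * Real.log 3 = 0) :
    a = 0 ∧ b = 0 := by
  have key : ∀ c d : ℕ, (c : ℝ) * Real.log 2 = (d : ℝ) * Real.log 3 → c = 0 ∧ d = 0 := by
    intro c d hcd
    rw [← Real.log_pow, ← Real.log_pow] at hcd
    have h1 : (2 : ℝ) ^ c = 3 ^ d :=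
      Real.log_injOn_pos (by simp) (by simp) hcd
    have h2 : 2 ^ c = 3 ^ d := by exact_mod_cast h1
    have hc : c = 0 := by
      by_contra hc
      have : 2 ∣ 3 ^ d := h2 ▸ dvd_pow_self 2 hc
      have := Nat.prime_two.dvd_of_dvd_pow this
      omega
    subst hc
    refine ⟨rfl, ?_⟩
    by_contra hd
    have : 1 < 3 ^ d := Nat.one_lt_pow hd (by norm_num)
    simp at h2
    omega
  have l2 : 0 < Real.log 2 := Real.log_pos (by norm_num)
  have l3 : 0 < Real.log 3 := Real.log_pos (by norm_num)
  have key2 : (a.natAbs : ℝ) * Real.log 2 = (b.natAbs : ℝ) * Real.log 3 := by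
    rw [Nat.cast_natAbs, Nat.cast_natAbs, Int.cast_abs, Int.cast_abs]
    have h' : (a : ℝ) * Real.log 2 = -((b : ℝ) * Real.log 3) := by linarith
    have := congrArg abs h'
    rwa [abs_neg, abs_mul, abs_mul, abs_of_pos l2, abs_of_pos l3] at this
  have := key _ _ key2
  omega

theorem log_indep (p q : ℚ) (h : (p : ℝ) * Real.log 2 + (q : ℝ) * Real.log (3 / 2) = 0) :
    p = 0 ∧ q = 0 := by
  rw [Real.log_div (by norm_num) (by norm_num)] at h
  have h2 : ((p - q : ℚ) : ℝ) * Real.log 2 + (q : ℝ) * Real.log 3 = 0 := by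
    push_cast
    linarith
  generalize hr : p - q = r at h2
  have hrd : (r.den : ℝ) ≠ 0 := by exact_mod_cast r.den_nz
  have hqd : (q.den : ℝ) ≠ 0 := by exact_mod_cast q.den_nz
  have h3 : ((r.num * q.den : ℤ) : ℝ) * Real.log 2 + ((q.num * r.den : ℤ) : ℝ) * Real.log 3 = 0 := by
    rw [Rat.cast_def r, Rat.cast_def q] at h2
    field_simp at h2
    push_cast
    linarith
  obtain ⟨h4, h5⟩ := log_indep_int _ _ h3
  have e1 : r = 0 := by
    have := r.den_nz
    have := q.den_nz
    simp_all
  have e2 : q = 0 := by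
    have := r.den_nz
    have := q.den_nz
    simp_all
  subst e2
  constructor
  · linarith
  · rfl

theorem spiral_norm_one (p q : ℚ) (h : ‖spiral p q‖ = 1) : p = 0 ∧ q = 0 := by
  rw [spiral_norm, Real.exp_eq_one_iff] at h
  exact log_indep p q h

theorem geom_spiral_ne_zero (p q : ℚ) (k : ℕ) (hk : 0 < k) :
    ∑ i ∈ Finset.range k, spiral p q ^ i ≠ 0 := by
  intro h
  have h1 : spiral p q ^ k = 1 := by
    have := geom_sum_mul (spiral p q) k
    rw [h, zero_mul] at this
    exact (sub_eq_zero.mp this.symm)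
  have h2 : ‖spiral p q‖ = 1 := Complex.norm_eq_one_of_pow_eq_one h1 hk.ne'
  obtain ⟨rfl, rfl⟩ := spiral_norm_one p q h2
  rw [spiral_zero] at h
  simp at h
  omega

/-- The group `ℚ² ⋉ ℂ`. -/
@[ext]
structure SpiralGroup where
  p : ℚ
  q : ℚ
  u : ℂ

namespace SpiralGroup

noncomputable instance : Mul SpiralGroup :=
  ⟨fun x y => ⟨x.p + y.p, x.q + y.q, x.u + spiral x.p x.q * y.u⟩⟩

instance : One SpiralGroup := ⟨⟨0, 0, 0⟩⟩

noncomputable instance : Inv SpiralGroup :=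
  ⟨fun x => ⟨-x.p, -x.q, -(spiral (-x.p) (-x.q) * x.u)⟩⟩

theorem mul_p (x y : SpiralGroup) : (x * y).p = x.p + y.p := rfl
theorem mul_q (x y : SpiralGroup) : (x * y).q = x.q + y.q := rfl
theorem mul_u (x y : SpiralGroup) : (x * y).u = x.u + spiral x.p x.q * y.u := rfl
theorem one_p : (1 : SpiralGroup).p = 0 := rfl
theorem one_q : (1 : SpiralGroup).q = 0 := rfl
theorem one_u : (1 : SpiralGroup).u = 0 := rfl
theorem inv_p (x : SpiralGroup) : (x⁻¹).p = -x.p := rfl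
theorem inv_q (x : SpiralGroup) : (x⁻¹).q = -x.q := rfl
theorem inv_u (x : SpiralGroup) : (x⁻¹).u = -(spiral (-x.p) (-x.q) * x.u) := rfl

noncomputable instance : Group SpiralGroup :=
  Group.ofLeftAxioms
    (by
      intro x y z
      ext1
      · simp only [mul_p]; ring
      · simp only [mul_q]; ring
      · simp only [mul_u, mul_p, mul_q, spiral_add]; ring)
    (by
      intro x
      ext1
      · simp only [mul_p, one_p]; ring
      · simp only [mul_q, one_q]; ring
      · simp only [mul_u, one_p, one_q, one_u, spiral_zero]; ring)
    (by
      intro x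
      ext1
      · simp only [mul_p, inv_p, one_p]; ring
      · simp only [mul_q, inv_q, one_q]; ring
      · simp only [mul_u, inv_p, inv_q, inv_u, one_u]; ring)

theorem pow_p (x : SpiralGroup) (k : ℕ) : (x ^ k).p = k * x.p := by
  induction k with
  | zero => simp [one_p]
  | succ k ih => rw [pow_succ, mul_p, ih]; push_cast; ring

theorem pow_q (x : SpiralGroup) (k : ℕ) : (x ^ k).q = k * x.q := by
  induction k with
  | zero => simp [one_q]
  | succ k ih => rw [pow_succ, mul_q, ih]; push_cast; ring

theorem pow_u (x : SpiralGroup) (k : ℕ) :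
    (x ^ k).u = (∑ i ∈ Finset.range k, spiral x.p x.q ^ i) * x.u := by
  induction k with
  | zero => simp [one_u]
  | succ k ih => rw [pow_succ', mul_u, ih, Finset.sum_range_succ', ← mul_assoc, Finset.mul_sum]
                 simp only [pow_succ']; ring

theorem uniquelyDivisible : UniquelyDivisible SpiralGroup := by
  intro b k hk
  have hk' : (k : ℚ) ≠ 0 := by exact_mod_cast hk.ne'
  have hg := geom_spiral_ne_zero (b.p / k) (b.q / k) k hk
  refine ⟨⟨b.p / k, b.q / k, b.u / ∑ i ∈ Finset.range k, spiral (b.p / k) (b.q / k) ^ i⟩, ?_, ?_⟩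
  · ext1
    · rw [pow_p]; field_simp
    · rw [pow_q]; field_simp
    · rw [pow_u]; field_simp
  · intro y hy
    have hp : y.p = b.p / k := by rw [← hy, pow_p]; field_simp
    have hq : y.q = b.q / k := by rw [← hy, pow_q]; field_simp
    have hu : b.u = (∑ i ∈ Finset.range k, spiral (b.p / k) (b.q / k) ^ i) * y.u := by
      rw [← hp, ← hq, ← pow_u, hy]
    ext1
    · exact hp
    · exact hq
    · change y.u = b.u / ∑ i ∈ Finset.range k, spiral (b.p / k) (b.q / k) ^ i
      rw [eq_div_iff hg, hu]; ring

end SpiralGroup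

theorem spiral_s : spiral 1 0 = 2 := by
  simp only [spiral]
  rw [show ((1 : ℚ) : ℂ) * (Real.log 2 : ℂ) +
    ((0 : ℚ) : ℂ) * ((Real.log (3 / 2) : ℂ) + Real.pi * Complex.I) = (Real.log 2 : ℂ) by
      push_cast; ring, ← Complex.ofReal_exp, Real.exp_log (by norm_num)]
  norm_num

theorem spiral_r : spiral 0 1 = -3 / 2 := by
  simp only [spiral]
  rw [show ((0 : ℚ) : ℂ) * (Real.log 2 : ℂ) +
    ((1 : ℚ) : ℂ) * ((Real.log (3 / 2) : ℂ) + Real.pi * Complex.I) =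
      (Real.log (3 / 2) : ℂ) + Real.pi * Complex.I by
      push_cast; ring, Complex.exp_add, Complex.exp_pi_mul_I, ← Complex.ofReal_exp,
      Real.exp_log (by norm_num)]
  push_cast
  ring

/-- For integers `m ≥ 0` and `n ≥ 1`, the word `X A^{m+2n} X A^{m+n} X A^m X`
is not universal: there are a uniquely divisible group `G` and `a b : G` such that
`x a^{m+2n} x a^{m+n} x a^m x = b` has no solution `x : G`. -/
theorem stmt8 (m n : ℕ) (hn : 1 ≤ n) :
    ∃ (G : Type) (_ : Group G), UniquelyDivisible G ∧
      ∃ a b : G, ¬ ∃ x : G,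
        x * a ^ (m + 2 * n) * x * a ^ (m + n) * x * a ^ m * x = b := by
  refine ⟨SpiralGroup, inferInstance, SpiralGroup.uniquelyDivisible,
    ⟨0, 1 / n, 0⟩, ⟨4, -(m + n) / n, 1⟩, ?_⟩
  rintro ⟨x, hx⟩
  have hn' : (n : ℚ) ≠ 0 := by
    have : n ≠ 0 := by omega
    exact_mod_cast this
  have hp := congrArg SpiralGroup.p hx
  have hq := congrArg SpiralGroup.q hx
  have hu := congrArg SpiralGroup.u hx
  simp only [SpiralGroup.mul_p, SpiralGroup.pow_p] at hp
  simp only [SpiralGroup.mul_q, SpiralGroup.pow_q] at hq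
  simp only [SpiralGroup.mul_u, SpiralGroup.mul_p, SpiralGroup.mul_q, SpiralGroup.pow_p,
    SpiralGroup.pow_q, SpiralGroup.pow_u, mul_zero, add_zero] at hu
  have hxp : x.p = 1 := by linarith
  have hxq : x.q = -(m + n) / n := by
    push_cast at hq
    field_simp at hq ⊢
    linarith
  rw [hxp, hxq] at hu
  have h1 : spiral (1 : ℚ) (-(m + n) / n + ((m + 2 * n : ℕ) : ℚ) * (1 / n)) = 2 * (-3 / 2) := by
    rw [← spiral_r, ← spiral_s, ← spiral_add]
    congr 1
    · norm_num
    · push_cast; field_simp; ring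
  have h2 : spiral (1 + 1 : ℚ) (-(m + n) / n + ((m + 2 * n : ℕ) : ℚ) * (1 / n) + -(m + n) / n
      + ((m + n : ℕ) : ℚ) * (1 / n)) = 2 * 2 * (-3 / 2) := by
    rw [← spiral_r, ← spiral_s, ← spiral_add, ← spiral_add]
    congr 1 <;> (push_cast; field_simp; ring)
  have h3 : spiral (1 + 1 + 1 : ℚ) (-(m + n) / n + ((m + 2 * n : ℕ) : ℚ) * (1 / n) + -(m + n) / n
      + ((m + n : ℕ) : ℚ) * (1 / n) + -(m + n) / n + (m : ℚ) * (1 / n)) = 2 * 2 * 2 := by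
    rw [← spiral_s, ← spiral_add, ← spiral_add]
    congr 1 <;> (push_cast; field_simp; ring)
  rw [h1, h2, h3] at hu
  have : (0 : ℂ) = 1 := by
    rw [← hu]
    ring
  exact zero_ne_one this
end

section
/- For every integer n >= 3, the word X A X^n A X is not universal: there exist a uniquely divisible group G and elements a, b in G such that the equation x * a * x^n * a * x = b has no solution x in G. -/
/-- The semidirect product `ℂ ⋊ ℚ`, with `t : ℚ` acting on `ℂ` by `exp (t c)`. -/
@[ext] structure SDG (c : ℂ) where
  t : ℚ
  v : ℂ

namespace SDG
variable {c : ℂ}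

noncomputable instance : Mul (SDG c) := ⟨fun x y => ⟨x.t + y.t, x.v + Complex.exp (x.t * c) * y.v⟩⟩
instance : One (SDG c) := ⟨⟨0, 0⟩⟩
noncomputable instance : Inv (SDG c) := ⟨fun x => ⟨-x.t, -(Complex.exp (-(x.t * c)) * x.v)⟩⟩

theorem mul_t (x y : SDG c) : (x * y).t = x.t + y.t := rfl
theorem mul_v (x y : SDG c) : (x * y).v = x.v + Complex.exp (x.t * c) * y.v := rfl
theorem one_t : (1 : SDG c).t = 0 := rfl
theorem one_v : (1 : SDG c).v = 0 := rfl
theorem inv_t (x : SDG c) : (x⁻¹).t = -x.t := rfl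
theorem inv_v (x : SDG c) : (x⁻¹).v = -(Complex.exp (-(x.t * c)) * x.v) := rfl

noncomputable instance : Group (SDG c) := Group.ofLeftAxioms
  (by
    intro x y z
    ext1
    · simp only [mul_t]; ring
    · simp only [mul_v, mul_t]; push_cast; rw [add_mul, Complex.exp_add]; ring)
  (by
    intro x
    ext1
    · simp [mul_t, one_t]
    · simp [mul_v, one_t, one_v])
  (by
    intro x
    ext1
    · simp [mul_t, one_t, inv_t]
    · simp [mul_v, inv_v, inv_t, one_v])

theorem pow_t (x : SDG c) (m : ℕ) : (x ^ m).t = m * x.t := by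
  induction m with
  | zero => simp [one_t]
  | succ k ih => rw [pow_succ, mul_t, ih]; push_cast; ring

theorem pow_v (x : SDG c) (m : ℕ) :
    (x ^ m).v = (∑ k ∈ Finset.range m, Complex.exp (x.t * c) ^ k) * x.v := by
  induction m with
  | zero => simp [one_v]
  | succ k ih =>
    rw [pow_succ, mul_v, ih, pow_t, Finset.sum_range_succ, add_mul, ← Complex.exp_nat_mul]
    push_cast
    rw [mul_assoc]

theorem geom_ne (hc : c.re ≠ 0) (t : ℚ) (m : ℕ) (hm : 0 < m) :
    (∑ k ∈ Finset.range m, Complex.exp (t * c) ^ k) ≠ 0 := by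
  intro h
  have h1 := geom_sum_mul (Complex.exp (t * c)) m
  rw [h, zero_mul] at h1
  have h2 : Complex.exp (t * c) ^ m = 1 := (sub_eq_zero.mp h1.symm)
  have h3 : ‖Complex.exp (t * c)‖ ^ m = 1 := by rw [← norm_pow, h2, norm_one]
  rw [pow_eq_one_iff_of_nonneg (norm_nonneg _) hm.ne', Complex.norm_exp, Real.exp_eq_one_iff] at h3
  have h4 : ((t : ℂ) * c).re = t * c.re := by
    rw [← Complex.ofReal_ratCast, Complex.re_ofReal_mul]
  rw [h4] at h3
  have ht : t = 0 := by
    rcases mul_eq_zero.mp h3 with h | h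
    · exact_mod_cast h
    · exact absurd h hc
  subst ht
  simp at h
  omega

theorem uniquelyDivisible (hc : c.re ≠ 0) : UniquelyDivisible (SDG c) := by
  intro b m hm
  have hmq : (m : ℚ) ≠ 0 := by exact_mod_cast hm.ne'
  have key := geom_ne hc (b.t / m) m hm
  refine ⟨⟨b.t / m, b.v / ∑ k ∈ Finset.range m, Complex.exp (((b.t / m : ℚ) : ℂ) * c) ^ k⟩, ?_, ?_⟩
  · ext1
    · rw [pow_t]; field_simp
    · rw [pow_v]; exact mul_div_cancel₀ _ key
  · intro y hy
    have h1 : y.t = b.t / m := by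
      rw [← hy, pow_t]; field_simp
    ext1
    · exact h1
    · show y.v = b.v / _
      rw [eq_div_iff key, ← hy, pow_v, hy, h1, mul_comm]

end SDG

theorem exists_c (n : ℕ) (hn : 3 ≤ n) :
    ∃ c : ℂ, c.re ≠ 0 ∧ 1 + n * Complex.exp c + Complex.exp c ^ 2 = 0 := by
  have hn' : (3 : ℝ) ≤ n := by exact_mod_cast hn
  set s := Real.sqrt ((n : ℝ) ^ 2 - 4) with hs
  have hs2 : s ^ 2 = (n : ℝ) ^ 2 - 4 := Real.sq_sqrt (by nlinarith)
  have hs0 : 0 ≤ s := Real.sqrt_nonneg _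
  set u := ((n : ℝ) + s) / 2 with hu
  have hu1 : 1 < u := by rw [hu]; linarith
  have hq : 1 - n * u + u ^ 2 = 0 := by rw [hu]; nlinarith
  have he : Complex.exp ((Real.log u : ℂ) + Real.pi * Complex.I) = -(u : ℂ) := by
    rw [Complex.exp_add, Complex.exp_pi_mul_I, ← Complex.ofReal_exp, Real.exp_log (by linarith)]
    ring
  refine ⟨(Real.log u : ℂ) + Real.pi * Complex.I, ?_, ?_⟩
  · have := Real.log_pos hu1
    simp only [Complex.add_re, Complex.ofReal_re, Complex.re_ofReal_mul, Complex.I_re]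
    linarith
  · rw [he]
    have : ((1 - n * u + u ^ 2 : ℝ) : ℂ) = 0 := by rw [hq]; simp
    push_cast at this
    linear_combination this

/-- For every integer `n ≥ 3`, the word `X A Xⁿ A X` is not universal:
there are a uniquely divisible group `G` and `a b : G` such that
`x a xⁿ a x = b` has no solution `x : G`. -/
theorem stmt9 (n : ℕ) (hn : 3 ≤ n) :
    ∃ (G : Type) (_ : Group G), UniquelyDivisible G ∧
      ∃ a b : G, ¬ ∃ x : G, x * a * x ^ n * a * x = b := by
  obtain ⟨c, hc, hP⟩ := exists_c n hn
  refine ⟨SDG c, inferInstance, SDG.uniquelyDivisible hc, ⟨1, 0⟩, ⟨2, 1⟩, ?_⟩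
  rintro ⟨⟨t, v⟩, hx⟩
  have h1 := congrArg SDG.t hx
  have h2 := congrArg SDG.v hx
  simp only [SDG.mul_t, SDG.pow_t] at h1
  have ht : t = 0 := by
    have h3 : ((n : ℚ) + 2) * t = 0 := by linarith
    have h4 : ((n : ℚ) + 2) ≠ 0 := by positivity
    exact (mul_eq_zero.mp h3).resolve_left h4
  subst ht
  simp only [SDG.mul_v, SDG.mul_t, SDG.pow_t, SDG.pow_v] at h2
  simp [add_mul, Complex.exp_add] at h2
  have : (1 : ℂ) = 0 := by linear_combination v * hP - h2
  exact one_ne_zero this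
end

section
/- For every integer n >= 2, the word X^2 (A X)^n X is not universal: there exist a uniquely divisible group G and elements a, b in G such that the equation x^2 * (a x)^n * x = b has no solution x in G. -/
/-- The semidirect product `ℂ ⋊ ℚ²`, where `(i, j)` acts by `exp (i (ρ + π I) + j log 2)`. -/
@[ext] structure AffG (ρ : ℝ) where
  u : ℂ
  i : ℚ
  j : ℚ

namespace AffG

noncomputable def ph (ρ : ℝ) (i j : ℚ) : ℂ :=
  Complex.exp ((i : ℂ) * ((ρ : ℂ) + Real.pi * Complex.I) + (j : ℂ) * (Real.log 2 : ℝ))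

lemma ph_zero (ρ : ℝ) : ph ρ 0 0 = 1 := by simp [ph]

lemma ph_add (ρ : ℝ) (i j i' j' : ℚ) : ph ρ (i + i') (j + j') = ph ρ i j * ph ρ i' j' := by
  unfold ph
  rw [← Complex.exp_add]
  congr 1
  push_cast
  ring

noncomputable instance (ρ : ℝ) : Mul (AffG ρ) :=
  ⟨fun x y => ⟨x.u + ph ρ x.i x.j * y.u, x.i + y.i, x.j + y.j⟩⟩

noncomputable instance (ρ : ℝ) : Inv (AffG ρ) :=
  ⟨fun x => ⟨-(ph ρ (-x.i) (-x.j) * x.u), -x.i, -x.j⟩⟩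

noncomputable instance (ρ : ℝ) : One (AffG ρ) := ⟨⟨0, 0, 0⟩⟩

noncomputable instance (ρ : ℝ) : Group (AffG ρ) :=
  Group.ofLeftAxioms (G := AffG ρ)
    (by
      intro x y z
      ext
      · change x.u + ph ρ x.i x.j * y.u + ph ρ (x.i + y.i) (x.j + y.j) * z.u
          = x.u + ph ρ x.i x.j * (y.u + ph ρ y.i y.j * z.u)
        rw [ph_add]; ring
      · exact add_assoc _ _ _
      · exact add_assoc _ _ _)
    (by
      intro x
      ext
      · change 0 + ph ρ 0 0 * x.u = x.u
        rw [ph_zero]; ring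
      · exact zero_add _
      · exact zero_add _)
    (by
      intro x
      ext
      · change -(ph ρ (-x.i) (-x.j) * x.u) + ph ρ (-x.i) (-x.j) * x.u = 0
        ring
      · exact neg_add_cancel _
      · exact neg_add_cancel _)

variable {ρ : ℝ}

lemma mul_u (x y : AffG ρ) : (x * y).u = x.u + ph ρ x.i x.j * y.u := rfl
lemma mul_i (x y : AffG ρ) : (x * y).i = x.i + y.i := rfl
lemma mul_j (x y : AffG ρ) : (x * y).j = x.j + y.j := rfl
lemma one_u : (1 : AffG ρ).u = 0 := rfl
lemma one_i : (1 : AffG ρ).i = 0 := rfl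
lemma one_j : (1 : AffG ρ).j = 0 := rfl

lemma pow_i (x : AffG ρ) (m : ℕ) : (x ^ m).i = m * x.i := by
  induction m with
  | zero => simp [one_i]
  | succ k ih => rw [pow_succ, mul_i, ih]; push_cast; ring

lemma pow_j (x : AffG ρ) (m : ℕ) : (x ^ m).j = m * x.j := by
  induction m with
  | zero => simp [one_j]
  | succ k ih => rw [pow_succ, mul_j, ih]; push_cast; ring

lemma pow_u (x : AffG ρ) (m : ℕ) :
    (x ^ m).u = (∑ k ∈ Finset.range m, ph ρ x.i x.j ^ k) * x.u := by
  induction m with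
  | zero => simp [one_u]
  | succ k ih =>
    rw [pow_succ', mul_u, ih, Finset.sum_range_succ', Finset.sum_congr rfl
      (fun j _ => pow_succ' (ph ρ x.i x.j) j), ← Finset.mul_sum]
    ring

lemma ph_pow (i j : ℚ) (m : ℕ) : ph ρ i j ^ m = ph ρ (m * i) (m * j) := by
  induction m with
  | zero => simp [ph_zero]
  | succ k ih => rw [pow_succ, ih, ← ph_add]; push_cast; ring_nf

lemma norm_ph (i j : ℚ) : ‖ph ρ i j‖ = Real.exp (i * ρ + j * Real.log 2) := by
  rw [ph, Complex.norm_exp]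
  congr 1
  have h1 : (i : ℂ) = ((i : ℝ) : ℂ) := by norm_cast
  have h2 : (j : ℂ) = ((j : ℝ) : ℂ) := by norm_cast
  rw [h1, h2]
  simp only [Complex.add_re, Complex.mul_re, Complex.ofReal_re, Complex.ofReal_im, Complex.I_re,
    Complex.I_im, Complex.add_im, Complex.mul_im]
  ring

lemma ud (hρ : ∀ i j : ℚ, (i : ℝ) * ρ + j * Real.log 2 = 0 → i = 0 ∧ j = 0) :
    UniquelyDivisible (AffG ρ) := by
  intro b m hm
  have hm' : (m : ℚ) ≠ 0 := by exact_mod_cast hm.ne'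
  have key : ∀ i j : ℚ, (∑ k ∈ Finset.range m, ph ρ i j ^ k) ≠ 0 := by
    intro i j h0
    have h1 : ph ρ i j ^ m = 1 := by
      have := geom_sum_mul (ph ρ i j) m
      rw [h0, zero_mul] at this
      exact (sub_eq_zero.mp this.symm)
    rw [ph_pow] at h1
    have h2 := congrArg norm h1
    rw [norm_ph, norm_one, Real.exp_eq_one_iff] at h2
    obtain ⟨h3, h4⟩ := hρ _ _ h2
    have h5 : i = 0 := by simpa [hm'] using h3
    have h6 : j = 0 := by simpa [hm'] using h4
    subst h5 h6
    simp [ph_zero] at h0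
    omega
  refine ⟨⟨b.u / (∑ k ∈ Finset.range m, ph ρ (b.i / m) (b.j / m) ^ k), b.i / m, b.j / m⟩, ?_, ?_⟩
  · ext
    · rw [pow_u]
      exact mul_div_cancel₀ _ (key _ _)
    · rw [pow_i]; field_simp
    · rw [pow_j]; field_simp
  · intro y hy
    have hi : y.i = b.i / m := by rw [← hy, pow_i]; field_simp
    have hj : y.j = b.j / m := by rw [← hy, pow_j]; field_simp
    ext
    · change y.u = b.u / (∑ k ∈ Finset.range m, ph ρ (b.i / m) (b.j / m) ^ k)
      rw [eq_div_iff (key _ _), ← hi, ← hj, ← hy, pow_u]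
      ring
    · exact hi
    · exact hj

end AffG

/-- Powers of a quadratic irrational with positive coordinates are irrational. -/
lemma pow_quad_form (a b D t : ℝ) (ht : t ^ 2 = D) (qa qb qD : ℚ) (ha : a = qa) (hb : b = qb)
    (hD : D = qD) (ha0 : 0 < qa) (hb0 : 0 < qb) (hD0 : 0 < qD) (k : ℕ) :
    ∃ x y : ℚ, 0 < x ∧ 0 < y ∧ (a + b * t) ^ (k + 1) = x + y * t := by
  induction k with
  | zero => exact ⟨qa, qb, ha0, hb0, by rw [ha, hb]; ring⟩
  | succ k ih =>
    obtain ⟨x, y, hx, hy, h⟩ := ih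
    refine ⟨x * qa + y * qb * qD, x * qb + y * qa, by positivity, by positivity, ?_⟩
    rw [pow_succ, h]
    push_cast
    rw [← ha, ← hb, ← hD, ← ht]
    ring

lemma exists_root (n : ℕ) (hn : 2 ≤ n) : ∃ r : ℝ, 0 < r ∧
    1 - r * (2 * 2 ^ n - 1) + r ^ 2 * 2 ^ n = 0 ∧ ∀ k : ℕ, ∀ q : ℚ, r ^ (k + 1) ≠ q := by
  obtain ⟨N, hN⟩ : ∃ N : ℕ, N = 2 ^ n := ⟨_, rfl⟩
  have hN4 : 4 ≤ N := by
    rw [hN]; calc 4 = 2 ^ 2 := rfl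
      _ ≤ 2 ^ n := Nat.pow_le_pow_right (by norm_num) hn
  have hNR : (2 : ℝ) ^ n = N := by rw [hN]; push_cast; rfl
  rw [hNR]
  have hNq : (4 : ℚ) ≤ N := by exact_mod_cast hN4
  have hNr : (4 : ℝ) ≤ N := by exact_mod_cast hN4
  obtain ⟨d, hd⟩ : ∃ d : ℕ, d + 3 = (2 * N - 2) ^ 2 := by
    refine ⟨(2 * N - 2) ^ 2 - 3, Nat.sub_add_cancel ?_⟩
    calc 3 ≤ 6 ^ 2 := by norm_num
      _ ≤ (2 * N - 2) ^ 2 := Nat.pow_le_pow_left (by omega) 2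
  obtain ⟨M, hM⟩ : ∃ M : ℕ, M + 2 = 2 * N := ⟨2 * N - 2, by omega⟩
  have hM' : 2 * N - 2 = M := by omega
  rw [hM'] at hd
  have hM6 : 6 ≤ M := by omega
  have hMr : (M : ℝ) = 2 * N - 2 := by
    have : (M : ℝ) + 2 = 2 * N := by exact_mod_cast hM
    linarith
  have hdr : (d : ℝ) = (2 * N - 2) ^ 2 - 3 := by
    have : (d : ℝ) + 3 = M ^ 2 := by exact_mod_cast hd
    rw [← hMr]; linarith
  have hd0 : 0 < d := by nlinarith
  have hirr : Irrational (√(d : ℝ)) := by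
    rw [irrational_sqrt_natCast_iff]
    rintro ⟨e, he⟩
    have h1 : e < M := by nlinarith
    have h2 : e + 1 ≤ M := h1
    nlinarith
  have hsq : (√(d : ℝ)) ^ 2 = d := Real.sq_sqrt (by positivity)
  have hA : (0 : ℚ) < (2 * N - 1) / (2 * N) := by
    apply div_pos <;> linarith
  have hB : (0 : ℚ) < 1 / (2 * N) := by
    apply div_pos <;> linarith
  have hAr : (0 : ℝ) < (2 * N - 1) / (2 * N) := by
    apply div_pos <;> linarith
  refine ⟨(2 * N - 1) / (2 * N) + 1 / (2 * N) * √(d : ℝ), by positivity, ?_, ?_⟩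
  · have hne : (N : ℝ) ≠ 0 := by linarith
    generalize √(d : ℝ) = t at hsq
    rw [hdr] at hsq
    field_simp
    linear_combination hsq
  · intro k q hq
    obtain ⟨x, y, hx, hy, h⟩ := pow_quad_form ((2 * N - 1) / (2 * N)) (1 / (2 * N)) d (√(d : ℝ))
      hsq ((2 * N - 1) / (2 * N)) (1 / (2 * N)) d (by push_cast; rfl) (by push_cast; rfl)
      (by push_cast; rfl) hA hB (by exact_mod_cast hd0) k
    rw [h] at hq
    apply hirr
    refine ⟨(q - x) / y, ?_⟩
    have : (y : ℝ) ≠ 0 := by exact_mod_cast hy.ne'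
    push_cast
    field_simp
    linarith

lemma indep (r : ℝ) (hr : 0 < r) (h : ∀ k : ℕ, ∀ q : ℚ, r ^ (k + 1) ≠ q) (i j : ℚ)
    (hij : (i : ℝ) * Real.log r + j * Real.log 2 = 0) : i = 0 ∧ j = 0 := by
  have hl2 : Real.log 2 ≠ 0 := (Real.log_pos (by norm_num)).ne'
  have main : ∀ (I : ℕ) (J : ℤ), 0 < I → (I : ℝ) * Real.log r + J * Real.log 2 = 0 → False := by
    intro I J hI h0
    obtain ⟨k, rfl⟩ : ∃ k, I = k + 1 := ⟨I - 1, by omega⟩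
    apply h k ((2 : ℚ) ^ (-J))
    apply Real.log_injOn_pos (Set.mem_Ioi.2 (by positivity))
      (Set.mem_Ioi.2 (by push_cast; positivity))
    push_cast
    rw [Real.log_pow, Real.log_zpow]
    push_cast at h0 ⊢
    linarith
  have hi : i = 0 := by
    by_contra hi
    have hid : (i.den : ℝ) ≠ 0 := by exact_mod_cast i.den_nz
    have hjd : (j.den : ℝ) ≠ 0 := by exact_mod_cast j.den_nz
    have h1 : ((i.num * j.den : ℤ) : ℝ) * Real.log r + ((j.num * i.den : ℤ) : ℝ) * Real.log 2
        = 0 := by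
      rw [Rat.cast_def i, Rat.cast_def j] at hij
      field_simp at hij
      push_cast
      linarith
    have hne : (i.num * j.den : ℤ) ≠ 0 :=
      mul_ne_zero (Rat.num_ne_zero.2 hi) (by exact_mod_cast j.den_nz)
    generalize (i.num * j.den : ℤ) = I at h1 hne
    generalize (j.num * i.den : ℤ) = J at h1
    rcases lt_or_gt_of_ne hne with hI | hI
    · obtain ⟨I', hI'⟩ := Int.eq_ofNat_of_zero_le (show 0 ≤ -I by omega)
      refine main I' (-J) (by omega) ?_
      have : (I' : ℝ) = -(I : ℝ) := by exact_mod_cast hI'.symm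
      rw [this]; push_cast; linarith
    · obtain ⟨I', hI'⟩ := Int.eq_ofNat_of_zero_le hI.le
      refine main I' J (by omega) ?_
      have : (I' : ℝ) = (I : ℝ) := by exact_mod_cast hI'.symm
      rw [this]; linarith
  subst hi
  refine ⟨rfl, ?_⟩
  simpa [hl2] using hij

/-- For every integer `n ≥ 2`, the word `X² (A X)ⁿ X` is not universal:
there are a uniquely divisible group `G` and `a b : G` such that
`x² (a x)ⁿ x = b` has no solution `x : G`. -/
theorem stmt10 (n : ℕ) (hn : 2 ≤ n) :
    ∃ (G : Type) (_ : Group G), UniquelyDivisible G ∧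
      ∃ a b : G, ¬ ∃ x : G, x ^ 2 * (a * x) ^ n * x = b := by
  obtain ⟨r, hr, hroot, hpow⟩ := exists_root n hn
  refine ⟨AffG (Real.log r), inferInstance, AffG.ud (indep r hr hpow), ⟨0, -1, 1⟩, ⟨1, 3, n⟩, ?_⟩
  rintro ⟨x, hx⟩
  have hi := congrArg AffG.i hx
  have hj := congrArg AffG.j hx
  have hu := congrArg AffG.u hx
  simp only [AffG.mul_i, AffG.pow_i, AffG.mul_j, AffG.pow_j] at hi hj
  have hn3 : (n : ℚ) + 3 ≠ 0 := by positivity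
  have xi : x.i = 1 := by
    apply mul_left_cancel₀ hn3
    push_cast at hi
    linarith
  have xj : x.j = 0 := by
    apply mul_left_cancel₀ hn3
    push_cast at hj
    linarith
  have p1 : AffG.ph (Real.log r) 1 0 = -r := by
    simp [AffG.ph, Complex.exp_add, ← Complex.ofReal_exp, Real.exp_log hr]
  have p2 : AffG.ph (Real.log r) 0 1 = 2 := by
    simp only [AffG.ph, Rat.cast_zero, Rat.cast_one, zero_mul, zero_add, one_mul]
    rw [← Complex.ofReal_exp, Real.exp_log (by norm_num)]
    norm_num
  have p3 : AffG.ph (Real.log r) (-1) 1 * (-r) = 2 := by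
    rw [← p1, ← AffG.ph_add, ← p2]; norm_num
  have p4 : AffG.ph (Real.log r) 2 0 = (-r : ℂ) ^ 2 := by
    rw [← p1, AffG.ph_pow]; norm_num
  have p5 : AffG.ph (Real.log r) (2 + n * 0) (0 + n * 1) = (-r : ℂ) ^ 2 * 2 ^ n := by
    rw [AffG.ph_add, p4, ← p2, AffG.ph_pow]
  simp only [AffG.mul_u, AffG.pow_u, AffG.mul_i, AffG.pow_i, AffG.mul_j, AffG.pow_j, xi, xj] at hu
  norm_num at p5 hu
  rw [p1, p2, p4, p5] at hu
  have hg : (∑ k ∈ Finset.range n, (2 : ℂ) ^ k) = 2 ^ n - 1 := by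
    have := geom_sum_mul (2 : ℂ) n
    rw [← this]; ring
  rw [hg] at hu
  have hrootC : (1 : ℂ) - r * (2 * 2 ^ n - 1) + r ^ 2 * 2 ^ n = 0 := by exact_mod_cast hroot
  simp [Finset.sum_range_succ] at hu
  have : (1 : ℂ) = 0 := by
    linear_combination (-1 : ℂ) * hu + x.u * hrootC - r * (2 ^ n - 1) * x.u * p3
  exact one_ne_zero this
end
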